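/- Under Assumption (A) with a > 5 and Assumption (B) with p > 2, if Σ > 0 then for ℙ-a.e. ω and all t ∈ ℝ, lim_{n→∞} κ_ω{ n^{−1/2} S̄_n^ω f ≤ t Σ } = Φ(t), where Φ(t) = (2π)^{−1/2} ∫_{−∞}^t e^{−x²/2} dx. -/

import Mathlib

open MeasureTheory ProbabilityTheory Filter
open scoped ENNReal NNReal

noncomputable section

variable {𝒴 : Type*} [MeasurableSpace 𝒴]

/-- The left shift on the two-sided sequence space `𝒴^ℤ`. -/
def shift (ω : ℤ → 𝒴) : ℤ → 𝒴 := fun i => ω (i + 1)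

/-- The inverse of the left shift. -/
def shiftInv (ω : ℤ → 𝒴) : ℤ → 𝒴 := fun i => ω (i - 1)

/-- The σ-algebra `ℱ_S` generated by the coordinates `ω_i`, `i ∈ S`. -/
def cylSigma (𝒴 : Type*) [MeasurableSpace 𝒴] (S : Set ℤ) : MeasurableSpace (ℤ → 𝒴) :=
  ⨆ i ∈ S, MeasurableSpace.comap (fun ω => ω i) inferInstance

/-- The α-mixing coefficients of the stationary sequence of coordinates under `Pr`. -/
def alphaMix (Pr : Measure (ℤ → 𝒴)) (n : ℕ) : ℝ :=
  sSup {c | ∃ (k : ℤ) (A B : Set (ℤ → 𝒴)),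
    MeasurableSet[cylSigma 𝒴 (Set.Iic k)] A ∧
    MeasurableSet[cylSigma 𝒴 (Set.Ici (k + n))] B ∧
    c = |(Pr (A ∩ B)).toReal - (Pr A).toReal * (Pr B).toReal|}

/-- The `ψ_U`-mixing coefficients of the stationary sequence of coordinates under `Pr`. -/
def psiUMix (Pr : Measure (ℤ → 𝒴)) (n : ℕ) : ℝ≥0∞ :=
  sSup {c | ∃ (k : ℤ) (A B : Set (ℤ → 𝒴)),
    MeasurableSet[cylSigma 𝒴 (Set.Iic k)] A ∧
    MeasurableSet[cylSigma 𝒴 (Set.Ici (k + n))] B ∧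
    Pr A ≠ 0 ∧ Pr B ≠ 0 ∧ c = Pr (A ∩ B) / (Pr A * Pr B) - 1}

/-- Strong mixing of the map `θ` with respect to `Pr`. -/
def StrongMixing {Ω : Type*} [MeasurableSpace Ω] (Pr : Measure Ω) (θ : Ω → Ω) : Prop :=
  ∀ A B : Set Ω, MeasurableSet A → MeasurableSet B →
    Tendsto (fun n => Pr (A ∩ θ^[n] ⁻¹' B)) atTop (nhds (Pr A * Pr B))

/-- The `n`-step transition kernels `P_{ω,n} = P_ω ∘ P_{θω} ∘ ⋯ ∘ P_{θ^{n−1}ω}` of a Markov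
chain in the random environment `ω`. -/
noncomputable def envKernel {Ω 𝒳 : Type*} [MeasurableSpace Ω] [MeasurableSpace 𝒳]
    (θ : Ω → Ω) (P : Ω → Kernel 𝒳 𝒳) : ℕ → Ω → Kernel 𝒳 𝒳
  | 0, _ => Kernel.id
  | n + 1, ω => (envKernel θ P n (θ ω)) ∘ₖ (P ω)

/-- The σ-algebra on path space generated by the coordinates up to time `k`. -/
def pathSigma (𝒳 : Type*) [MeasurableSpace 𝒳] (k : ℕ) : MeasurableSpace (ℕ → 𝒳) :=
  ⨆ i ∈ Set.Iic k, MeasurableSpace.comap (fun y => y i) inferInstance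

/-- The partial sums `S_n^ω f = Σ_{j<n} f_{θ^j ω}(X_{ω,j})` along a path of the chain. -/
def pathSum {𝒴 𝒳 : Type*} (f : (ℤ → 𝒴) → 𝒳 → ℝ) (ω : ℤ → 𝒴) (n : ℕ) (y : ℕ → 𝒳) : ℝ :=
  ∑ j ∈ Finset.range n, f (shift^[j] ω) (y j)

/-- The standard normal distribution function `Φ`. -/
def stdNormalCDF (t : ℝ) : ℝ := (gaussianReal 0 1 (Set.Iic t)).toReal

/-!
The proof is Gordin's martingale approximation with a corrector of finite horizon. Put
`g_n(ω, x) = ∑_{k<n} (P_{ω,k} f_{θ^k ω})(x)`. Since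
`g_{n-j}(θ^j ω, ·) = f_{θ^j ω} + P_{θ^j ω} g_{n-j-1}(θ^{j+1} ω, ·)`, the sum `S_n^ω f` is *exactly*
`g_n(ω, X_0)` plus a sum of martingale differences, and only the first term has to be negligible.
The Doeblin minorization makes the kernels contract by a fixed factor at each visit of the orbit to
`A_{δ,M}`, and by Birkhoff's theorem these visits have positive frequency; hence, for almost every
`ω`, the oscillation of `g_n(ω, ·)` stays bounded as `n → ∞` as soon as `F` is integrable.

The martingale differences are not bounded uniformly in the environment. They are therefore
restricted to the times `j < (1 - ε) n` at which `θ^{j+1} ω` lies in a set where they are bounded by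
a constant. There the contraction decorrelates the conditional variances, and an induction on the
number of terms shows that the characteristic function is asymptotically Gaussian. The discarded
terms are small in `L²` because the asymptotic variance `Σ²` is the integral of a variance density
`v`, the variance of the martingale difference of the chain started in the remote past: truncation
and Birkhoff's theorem give `∫ v ≤ Σ²`, so `v` is integrable, while recurrence gives `∫ v ≥ Σ²`, so
truncations of `v` carry almost all of the variance. Lévy's continuity theorem finishes the proof.
-/

open scoped Topology

section PointwiseErgodicTheorem

variable {Ω : Type*} {T : Ω → Ω} {g : Ω → ℝ}

/-- The running maximum `max_{0 ≤ k ≤ n} S_k g` of the Birkhoff sums, in the recursive form on which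
the maximal inequality rests. -/
def birkhoffMax (T : Ω → Ω) (g : Ω → ℝ) : ℕ → Ω → ℝ
  | 0, _ => 0
  | n + 1, ω => max 0 (g ω + birkhoffMax T g n (T ω))

lemma birkhoffMax_nonneg (T : Ω → Ω) (g : Ω → ℝ) (n : ℕ) (ω : Ω) : 0 ≤ birkhoffMax T g n ω := by
  cases n <;> simp [birkhoffMax]

lemma birkhoffSum_le_birkhoffMax (T : Ω → Ω) (g : Ω → ℝ) (n : ℕ) (ω : Ω) :
    birkhoffSum T g n ω ≤ birkhoffMax T g n ω := by
  induction n generalizing ω with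
  | zero => simp [birkhoffMax]
  | succ n ih =>
    rw [birkhoffSum_succ']
    exact le_max_of_le_right (add_le_add_right (ih (T ω)) _)

lemma monotone_birkhoffMax (T : Ω → Ω) (g : Ω → ℝ) (ω : Ω) :
    Monotone fun n => birkhoffMax T g n ω := by
  refine monotone_nat_of_le_succ fun n => ?_
  induction n generalizing ω with
  | zero => exact le_max_left _ _
  | succ n ih => exact max_le_max le_rfl (add_le_add_right (ih (T ω)) _)

lemma max_neg_birkhoffMax (T : Ω → Ω) (g : Ω → ℝ) (n : ℕ) (ω : Ω) :
    max (-birkhoffMax T g n (T ω)) (g ω)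
      = birkhoffMax T g (n + 1) ω - birkhoffMax T g n (T ω) := by
  rw [birkhoffMax, ← max_sub_sub_right]
  simp

lemma bddAbove_birkhoffMax_apply_iff (ω : Ω) :
    BddAbove (Set.range fun n => birkhoffMax T g n (T ω)) ↔
      BddAbove (Set.range fun n => birkhoffMax T g n ω) := by
  simp only [bddAbove_def, Set.forall_mem_range]
  constructor
  · rintro ⟨C, hC⟩
    refine ⟨max 0 (g ω + C), fun n => ?_⟩
    cases n with
    | zero => exact le_max_left _ _
    | succ n => exact max_le_max le_rfl (add_le_add_right (hC n) _)
  · rintro ⟨C, hC⟩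
    refine ⟨C - g ω, fun n => ?_⟩
    have : g ω + birkhoffMax T g n (T ω) ≤ C := (le_max_right _ _).trans (hC (n + 1))
    linarith

variable [MeasurableSpace Ω] {μ : Measure Ω}

lemma integrable_birkhoffMax (hT : MeasurePreserving T μ μ) (hg : Integrable g μ) (n : ℕ) :
    Integrable (birkhoffMax T g n) μ := by
  induction n with
  | zero => exact integrable_zero _ _ _
  | succ n ih => exact (integrable_zero _ _ _).sup (hg.add (hT.integrable_comp_of_integrable ih))

lemma nullMeasurableSet_bddAbove_birkhoffMax (hT : MeasurePreserving T μ μ)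
    (hg : Integrable g μ) :
    NullMeasurableSet {ω | BddAbove (Set.range fun n => birkhoffMax T g n ω)} μ := by
  have hset : {ω | BddAbove (Set.range fun n => birkhoffMax T g n ω)}
      = ⋃ C : ℕ, ⋂ n, {ω | birkhoffMax T g n ω ≤ C} := by
    ext ω
    simp only [bddAbove_def, Set.forall_mem_range, Set.mem_ofPred_eq, Set.mem_iUnion,
      Set.mem_iInter]
    exact ⟨fun ⟨C, hC⟩ => (exists_nat_ge C).imp fun K hK n => (hC n).trans hK,
      fun ⟨C, hC⟩ => ⟨C, hC⟩⟩
  rw [hset]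
  exact .iUnion fun C => .iInter fun n =>
    nullMeasurableSet_le (integrable_birkhoffMax hT hg n).aemeasurable aemeasurable_const

lemma integral_max_neg_birkhoffMax_nonneg (hT : MeasurePreserving T μ μ) (hg : Integrable g μ)
    (n : ℕ) : 0 ≤ ∫ ω, max (-birkhoffMax T g n (T ω)) (g ω) ∂μ := by
  have hint := integrable_birkhoffMax hT hg
  have hcomp : ∫ ω, birkhoffMax T g n (T ω) ∂μ = ∫ ω, birkhoffMax T g n ω ∂μ := by
    rw [← integral_map hT.aemeasurable (by simpa only [hT.map_eq] using (hint n).1), hT.map_eq]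
  simp_rw [max_neg_birkhoffMax]
  rw [integral_sub (hint _) (g := fun ω => birkhoffMax T g n (T ω))
    (hT.integrable_comp_of_integrable (hint n)), hcomp, sub_nonneg]
  exact integral_mono (hint n) (hint (n + 1)) fun ω => monotone_birkhoffMax T g ω n.le_succ

lemma tendsto_integral_max_neg_birkhoffMax (hT : MeasurePreserving T μ μ) (hg : Integrable g μ)
    (hunbdd : ∀ᵐ ω ∂μ, ¬ BddAbove (Set.range fun n => birkhoffMax T g n (T ω))) :
    Tendsto (fun n => ∫ ω, max (-birkhoffMax T g n (T ω)) (g ω) ∂μ) atTop (𝓝 (∫ ω, g ω ∂μ)) := by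
  refine tendsto_integral_of_dominated_convergence (fun ω => |g ω|) (fun n => ?_) hg.abs
    (fun n => .of_forall fun ω => ?_) ?_
  · exact ((hT.integrable_comp_of_integrable (integrable_birkhoffMax hT hg n)).neg.sup hg).1
  · have hpos := birkhoffMax_nonneg T g n (T ω)
    exact abs_le.2 ⟨(neg_abs_le _).trans (le_max_right _ _),
      max_le ((neg_nonpos.2 hpos).trans (abs_nonneg _)) (le_abs_self _)⟩
  · filter_upwards [hunbdd] with ω hω
    obtain ⟨n₀, hn₀⟩ : ∃ n₀, -g ω < birkhoffMax T g n₀ (T ω) := by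
      simpa using not_bddAbove_iff.1 hω (-g ω)
    refine tendsto_const_nhds.congr' ?_
    filter_upwards [eventually_ge_atTop n₀] with n hn
    have := monotone_birkhoffMax T g (T ω) hn
    rw [max_eq_right]
    linarith

lemma ae_bddAbove_birkhoffMax_of_integral_neg (hT : Ergodic T μ) (hg : Integrable g μ)
    (hneg : ∫ ω, g ω ∂μ < 0) :
    ∀ᵐ ω ∂μ, BddAbove (Set.range fun n => birkhoffMax T g n ω) := by
  have hmp := hT.toMeasurePreserving
  have hinv : T ⁻¹' {ω | BddAbove (Set.range fun n => birkhoffMax T g n ω)}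
      = {ω | BddAbove (Set.range fun n => birkhoffMax T g n ω)} :=
    Set.ext bddAbove_birkhoffMax_apply_iff
  rcases hT.quasiErgodic.ae_empty_or_univ₀ (nullMeasurableSet_bddAbove_birkhoffMax hmp hg)
    (.of_eq hinv) with hempty | huniv
  · have hunbdd : ∀ᵐ ω ∂μ, ¬ BddAbove (Set.range fun n => birkhoffMax T g n (T ω)) := by
      filter_upwards [measure_eq_zero_iff_ae_notMem.1 (ae_eq_empty.1 hempty)] with ω hω
      rwa [bddAbove_birkhoffMax_apply_iff]
    exact absurd (ge_of_tendsto' (tendsto_integral_max_neg_birkhoffMax hmp hg hunbdd)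
      (integral_max_neg_birkhoffMax_nonneg hmp hg)) (not_le.2 hneg)
  · exact eventuallyEq_univ.1 huniv

variable [IsProbabilityMeasure μ]

lemma ae_eventually_birkhoffSum_div_le (hT : Ergodic T μ) (hg : Integrable g μ) :
    ∀ᵐ ω ∂μ, ∀ ε : ℝ, 0 < ε → ∀ᶠ n : ℕ in atTop, birkhoffSum T g n ω / n ≤ ∫ ω, g ω ∂μ + ε := by
  have hbdd (k : ℕ) : ∀ᵐ ω ∂μ, BddAbove (Set.range fun n =>
      birkhoffMax T (fun ω => g ω - (∫ ω, g ω ∂μ + 1 / (k + 1 : ℝ))) n ω) := by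
    refine ae_bddAbove_birkhoffMax_of_integral_neg hT (hg.sub (integrable_const _)) ?_
    rw [integral_sub hg (integrable_const _), integral_const, probReal_univ, one_smul,
      sub_add_cancel_left, neg_lt_zero]
    positivity
  filter_upwards [ae_all_iff.2 hbdd] with ω hω ε hε
  obtain ⟨k, hk⟩ := exists_nat_one_div_lt (half_pos hε)
  obtain ⟨C, hC⟩ := hω k
  have hsum (n : ℕ) : birkhoffSum T g n ω - n * (∫ ω, g ω ∂μ + 1 / (k + 1 : ℝ)) ≤ C := by
    have hle := (birkhoffSum_le_birkhoffMax T _ n ω).trans (hC ⟨n, rfl⟩)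
    simpa only [birkhoffSum, Finset.sum_sub_distrib, Finset.sum_const, Finset.card_range,
      nsmul_eq_mul] using hle
  filter_upwards [(tendsto_const_div_atTop_nhds_zero_nat C).eventually (gt_mem_nhds (half_pos hε)),
    eventually_gt_atTop 0] with n hCn hn
  have hn' : (0 : ℝ) < n := Nat.cast_pos.2 hn
  rw [div_lt_iff₀ hn'] at hCn
  rw [div_le_iff₀ hn']
  nlinarith [hsum n]

theorem ae_tendsto_birkhoffSum_div (hT : Ergodic T μ) (hg : Integrable g μ) :
    ∀ᵐ ω ∂μ, Tendsto (fun n : ℕ => birkhoffSum T g n ω / n) atTop (𝓝 (∫ ω, g ω ∂μ)) := by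
  filter_upwards [ae_eventually_birkhoffSum_div_le hT hg,
    ae_eventually_birkhoffSum_div_le hT hg.neg] with ω hupper hlower
  refine Metric.tendsto_nhds.2 fun ε hε => ?_
  filter_upwards [hupper (ε / 2) (half_pos hε), hlower (ε / 2) (half_pos hε)] with n hn hn'
  have hneg : birkhoffSum T (-g) n ω = -birkhoffSum T g n ω := by simp [birkhoffSum]
  rw [hneg, neg_div] at hn'
  simp only [Pi.neg_apply, integral_neg] at hn'
  rw [Real.dist_eq, abs_lt]
  constructor <;> linarith

end PointwiseErgodicTheorem

lemma StrongMixing.ergodic {Ω : Type*} [MeasurableSpace Ω] {μ : Measure Ω} [IsProbabilityMeasure μ]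
    {θ : Ω → Ω} (hmix : StrongMixing μ θ) (hθ : MeasurePreserving θ μ μ) : Ergodic θ μ := by
  refine ⟨hθ, ⟨fun s hs hinv => ?_⟩⟩
  have hinter (n : ℕ) : s ∩ θ^[n] ⁻¹' s = s := by
    rw [Set.preimage_iterate_eq, Function.IsFixedPt.iterate hinv n, Set.inter_self]
  have hidem : μ s = μ s * μ s :=
    tendsto_nhds_unique tendsto_const_nhds (by simpa only [hinter] using hmix s s hs hs)
  rw [eventuallyConst_set']
  rcases eq_or_ne (μ s) 0 with h0 | h0
  · exact .inl (ae_eq_empty.2 h0)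
  · have h1 : μ s = 1 := ((ENNReal.mul_right_inj h0 (measure_ne_top _ _)).1
      ((mul_one _).trans hidem)).symm
    exact .inr (ae_eq_univ.2 ((prob_compl_eq_zero_iff hs).2 h1))

section BoundedMeasurable

variable {α β 𝕜 : Type*} [MeasurableSpace α] [MeasurableSpace β] [RCLike 𝕜]

/-- A bounded measurable function: the class of test functions integrated against the transition
kernels and the path laws below. The bound holds everywhere, not only almost everywhere. -/
structure BddMeasurable (φ : α → 𝕜) : Prop where
  measurable : Measurable φ
  exists_bound : ∃ C, ∀ x, ‖φ x‖ ≤ C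

lemma abs_integral_le_of_ae_abs_le {ν : Measure α} [IsProbabilityMeasure ν] {h : α → ℝ} {B : ℝ}
    (hB : ∀ᵐ x ∂ν, |h x| ≤ B) : |∫ z, h z ∂ν| ≤ B := by
  simpa using norm_integral_le_of_norm_le_const (μ := ν) (f := h) hB

lemma abs_integral_le_of_abs_le {ν : Measure α} [IsProbabilityMeasure ν] {h : α → ℝ} {B : ℝ}
    (hB : ∀ x, |h x| ≤ B) : |∫ z, h z ∂ν| ≤ B :=
  abs_integral_le_of_ae_abs_le (.of_forall hB)

namespace BddMeasurable

variable {φ ψ : α → 𝕜}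

lemma integrable (hφ : BddMeasurable φ) {μ : Measure α} [IsFiniteMeasure μ] : Integrable φ μ :=
  hφ.exists_bound.elim fun C hC => .of_bound hφ.measurable.aestronglyMeasurable C (.of_forall hC)

lemma comp (hφ : BddMeasurable φ) {g : β → α} (hg : Measurable g) :
    BddMeasurable fun x => φ (g x) :=
  ⟨hφ.measurable.comp hg, hφ.exists_bound.imp fun _ hC _ => hC _⟩

lemma const (c : 𝕜) : BddMeasurable fun _ : α => c := ⟨measurable_const, ‖c‖, fun _ => le_rfl⟩

lemma add (hφ : BddMeasurable φ) (hψ : BddMeasurable ψ) : BddMeasurable fun x => φ x + ψ x := by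
  obtain ⟨⟨C, hC⟩, D, hD⟩ := And.intro hφ.exists_bound hψ.exists_bound
  exact ⟨hφ.measurable.add hψ.measurable, C + D, fun x => norm_add_le_of_le (hC x) (hD x)⟩

lemma mul (hφ : BddMeasurable φ) (hψ : BddMeasurable ψ) : BddMeasurable fun x => φ x * ψ x := by
  obtain ⟨⟨C, hC⟩, D, hD⟩ := And.intro hφ.exists_bound hψ.exists_bound
  exact ⟨hφ.measurable.mul hψ.measurable, C * D, fun x => norm_mul_le_of_le (hC x) (hD x)⟩

lemma const_mul (hφ : BddMeasurable φ) (c : 𝕜) : BddMeasurable fun x => c * φ x :=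
  (const c).mul hφ

lemma sub (hφ : BddMeasurable φ) (hψ : BddMeasurable ψ) : BddMeasurable fun x => φ x - ψ x := by
  simpa only [neg_one_mul, ← sub_eq_add_neg] using hφ.add (hψ.const_mul (-1))

lemma sq (hφ : BddMeasurable φ) : BddMeasurable fun x => φ x ^ 2 := by
  simpa only [pow_two] using hφ.mul hφ

lemma sum {ι : Type*} {s : Finset ι} {f : ι → α → 𝕜} (hf : ∀ i ∈ s, BddMeasurable (f i)) :
    BddMeasurable fun x => ∑ i ∈ s, f i x := by
  classical
  induction s using Finset.induction_on with
  | empty => simpa only [Finset.sum_empty] using const 0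
  | insert i s his ih =>
    simp only [Finset.sum_insert his]
    exact (hf i (Finset.mem_insert_self i s)).add
      (ih fun j hj => hf j (Finset.mem_insert_of_mem hj))

lemma ofReal {h : α → ℝ} (hh : BddMeasurable h) : BddMeasurable fun x => (h x : 𝕜) :=
  ⟨RCLike.measurable_ofReal.comp hh.measurable, hh.exists_bound.imp fun _ hC x => by
    rw [RCLike.norm_ofReal]; exact hC x⟩

lemma integral_kernel {H : α → β → ℝ} (hH : BddMeasurable (Function.uncurry H)) (Q : Kernel α β)
    [IsMarkovKernel Q] : BddMeasurable fun x => ∫ z, H x z ∂Q x :=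
  ⟨(hH.measurable.stronglyMeasurable.integral_kernel_prod_right (κ := Q)).measurable,
    hH.exists_bound.imp fun _ hC x => abs_integral_le_of_abs_le fun z => hC (x, z)⟩

end BddMeasurable

end BoundedMeasurable

section MarkovProperty

variable {𝒳 : Type*}

/-- The path stopped at time `k`; the σ-algebra `pathSigma 𝒳 k` is generated by this map. -/
def stopAt (k : ℕ) (y : ℕ → 𝒳) : ℕ → 𝒳 := fun i => y (min i k)

lemma stopAt_apply_of_le {i k : ℕ} (h : i ≤ k) (y : ℕ → 𝒳) : stopAt k y i = y i := by
  rw [stopAt, min_eq_left h]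

lemma comp_stopAt_of_dependsOn {β : Type*} {φ : (ℕ → 𝒳) → β} {k : ℕ}
    (hφ : DependsOn φ (Set.Iic k)) (y : ℕ → 𝒳) : φ (stopAt k y) = φ y :=
  hφ fun _ hi => stopAt_apply_of_le hi y

variable [MeasurableSpace 𝒳]

lemma measurable_stopAt (k : ℕ) : Measurable (stopAt (𝒳 := 𝒳) k) :=
  measurable_pi_lambda _ fun _ => measurable_pi_apply _

lemma pathSigma_le (k : ℕ) : pathSigma 𝒳 k ≤ MeasurableSpace.pi :=
  iSup₂_le fun i _ => (measurable_pi_apply i).comap_le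

lemma measurable_pathSigma_stopAt (k : ℕ) :
    Measurable[pathSigma 𝒳 k] (stopAt (𝒳 := 𝒳) k) :=
  @measurable_pi_lambda _ _ _ (pathSigma 𝒳 k) _ _ fun i =>
    (comap_measurable fun y : ℕ → 𝒳 => y (min i k)).mono
      (le_iSup₂_of_le (min i k) (min_le_right i k) le_rfl) le_rfl

/-- Under the path law `κ`, the conditional distribution of the `(k+1)`-st coordinate given the
coordinates up to time `k` is `Q (y k)`: the Markov property at time `k` with transition `Q`. -/
def HasTransition (κ : Measure (ℕ → 𝒳)) (k : ℕ) (Q : Kernel 𝒳 𝒳) : Prop :=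
  ∀ Γ : Set 𝒳, MeasurableSet Γ →
    κ[(fun y => Γ.indicator (fun _ => (1 : ℝ)) (y (k + 1))) | pathSigma 𝒳 k]
      =ᵐ[κ] fun y => (Q (y k) Γ).toReal

namespace HasTransition

variable {κ : Measure (ℕ → 𝒳)} [IsFiniteMeasure κ] {k : ℕ} {Q : Kernel 𝒳 𝒳} [IsMarkovKernel Q]

lemma measure_stopAt_preimage_inter (h : HasTransition κ k Q) {S : Set (ℕ → 𝒳)} {Γ : Set 𝒳}
    (hS : MeasurableSet S) (hΓ : MeasurableSet Γ) :
    κ (stopAt k ⁻¹' S ∩ {y | y (k + 1) ∈ Γ}) = ∫⁻ y in stopAt k ⁻¹' S, Q (y k) Γ ∂κ := by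
  have hS' : MeasurableSet (stopAt (𝒳 := 𝒳) k ⁻¹' S) := measurable_stopAt k hS
  have hΓ' : MeasurableSet {y : ℕ → 𝒳 | y (k + 1) ∈ Γ} := measurable_pi_apply (k + 1) hΓ
  have hQ : Measurable fun y : ℕ → 𝒳 => Q (y k) Γ :=
    (Q.measurable_coe hΓ).comp (measurable_pi_apply k)
  have hindicator : (fun y : ℕ → 𝒳 => Γ.indicator (fun _ => (1 : ℝ)) (y (k + 1)))
      = {y : ℕ → 𝒳 | y (k + 1) ∈ Γ}.indicator fun _ => 1 := rfl
  have hint : Integrable (fun y : ℕ → 𝒳 => Γ.indicator (fun _ => (1 : ℝ)) (y (k + 1))) κ :=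
    hindicator ▸ (integrable_const _).indicator hΓ'
  have hcond := setIntegral_condExp (pathSigma_le k) hint (measurable_pathSigma_stopAt k hS)
  rw [setIntegral_congr_ae hS' ((h Γ hΓ).mono fun y hy _ => hy),
    integral_toReal hQ.aemeasurable
      (.of_forall fun y => measure_lt_top _ _), hindicator, setIntegral_indicator hΓ',
    setIntegral_const, smul_eq_mul, mul_one] at hcond
  have hfin : ∫⁻ y in stopAt (𝒳 := 𝒳) k ⁻¹' S, Q (y k) Γ ∂κ ≠ ∞ :=
    ((lintegral_mono fun _ => prob_le_one).trans_lt (by simp [measure_lt_top])).ne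
  exact ((ENNReal.toReal_eq_toReal_iff' hfin (measure_ne_top _ _)).1 hcond).symm

lemma map_stopAt_prodMk (h : HasTransition κ k Q) :
    κ.map (fun y => (stopAt k y, y (k + 1)))
      = κ.map (stopAt k) ⊗ₘ Q.comap (fun y : ℕ → 𝒳 => y k) (measurable_pi_apply k) := by
  refine Measure.ext_prod fun {S Γ} hS hΓ => ?_
  rw [Measure.map_apply ((measurable_stopAt k).prodMk (measurable_pi_apply _)) (hS.prod hΓ),
    Measure.compProd_apply_prod hS hΓ,
    setLIntegral_map hS (Kernel.measurable_coe _ hΓ) (measurable_stopAt k)]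
  refine (h.measure_stopAt_preimage_inter hS hΓ).trans (lintegral_congr fun y => ?_)
  rw [Kernel.comap_apply, stopAt_apply_of_le le_rfl]

lemma integral_mul {𝕜 : Type*} [RCLike 𝕜] (h : HasTransition κ k Q)
    {φ : (ℕ → 𝒳) → 𝕜} (hφ : BddMeasurable φ) (hφk : DependsOn φ (Set.Iic k))
    {H : 𝒳 → 𝒳 → 𝕜} (hH : BddMeasurable (Function.uncurry H)) :
    ∫ y, φ y * H (y k) (y (k + 1)) ∂κ = ∫ y, φ y * ∫ z, H (y k) z ∂Q (y k) ∂κ := by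
  let Ψ : (ℕ → 𝒳) × 𝒳 → 𝕜 := fun q => φ q.1 * H (q.1 k) q.2
  have hpair : Measurable fun q : (ℕ → 𝒳) × 𝒳 => (q.1 k, q.2) :=
    ((measurable_pi_apply k).comp measurable_fst).prodMk measurable_snd
  have hΨ : BddMeasurable Ψ := (hφ.comp measurable_fst).mul (hH.comp hpair)
  calc ∫ y, φ y * H (y k) (y (k + 1)) ∂κ
      = ∫ y, Ψ (stopAt k y, y (k + 1)) ∂κ := by
        simp only [Ψ, comp_stopAt_of_dependsOn hφk, stopAt_apply_of_le le_rfl]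
    _ = ∫ q, Ψ q ∂(κ.map fun y => (stopAt k y, y (k + 1))) :=
        (integral_map ((measurable_stopAt k).prodMk (measurable_pi_apply _)).aemeasurable
          hΨ.measurable.aestronglyMeasurable).symm
    _ = ∫ y, ∫ z, Ψ (y, z) ∂Q (y k) ∂(κ.map (stopAt k)) := by
        rw [h.map_stopAt_prodMk, Measure.integral_compProd hΨ.integrable]
        simp only [Kernel.comap_apply]
    _ = ∫ y, φ y * ∫ z, H (y k) z ∂Q (y k) ∂κ := by
        have hΨQ : StronglyMeasurable fun y => ∫ z, Ψ (y, z) ∂Q (y k) :=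
          hΨ.measurable.stronglyMeasurable.integral_kernel_prod_right'
            (κ := Q.comap (fun y : ℕ → 𝒳 => y k) (measurable_pi_apply k))
        rw [integral_map (measurable_stopAt k).aemeasurable hΨQ.aestronglyMeasurable]
        simp only [Ψ, comp_stopAt_of_dependsOn hφk, stopAt_apply_of_le le_rfl, integral_const_mul]

end HasTransition

end MarkovProperty

section Contraction

variable {Ω 𝒳 : Type*} {θ : Ω → Ω} {E : Ω → Set 𝒳} {A : Set Ω} {q : ℝ} {M : ℕ} {ω : Ω}

/-- The oscillation of `h` over `E` is at most `c`. -/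
def OscLE (h : 𝒳 → ℝ) (E : Set 𝒳) (c : ℝ) : Prop := ∀ x ∈ E, ∀ x' ∈ E, |h x - h x'| ≤ c

/-- The number of visits of the orbit of `ω` to `A` during the times `1, …, k`. -/
def visitCount (θ : Ω → Ω) (A : Set Ω) (ω : Ω) (k : ℕ) : ℕ :=
  ∑ i ∈ Finset.range k, A.indicator 1 (θ^[i + 1] ω)

lemma visitCount_add (θ : Ω → Ω) (A : Set Ω) (ω : Ω) (a b : ℕ) :
    visitCount θ A ω (a + b) = visitCount θ A ω a + visitCount θ A (θ^[a] ω) b := by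
  simp only [visitCount, Finset.sum_range_add, ← Function.iterate_add_apply]
  congr! 4
  omega

lemma visitCount_le (θ : Ω → Ω) (A : Set Ω) (ω : Ω) (k : ℕ) : visitCount θ A ω k ≤ k := by
  simpa only [visitCount, Finset.card_range, smul_eq_mul, mul_one] using
    Finset.sum_le_card_nsmul (Finset.range k) (fun i => A.indicator (1 : Ω → ℕ) (θ^[i + 1] ω)) 1
    fun i _ => Set.indicator_apply_le' (fun _ => le_rfl) fun _ => zero_le_one

lemma visitCount_succ_of_notMem {k : ℕ} (h : θ^[k + 1] ω ∉ A) :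
    visitCount θ A ω (k + 1) = visitCount θ A ω k := by
  rw [visitCount, Finset.sum_range_succ, Set.indicator_of_notMem h, add_zero, visitCount]

variable [MeasurableSpace Ω] [MeasurableSpace 𝒳] {P : Ω → Kernel 𝒳 𝒳}

/-- Applied to `h - inf h` and `inf h + c - h`, both nonnegative on `E`, the inequality
`∫ g ∂(δ • m) ≤ ∫ g ∂ν` pins `∫ h ∂ν` to an interval of length `(1 - δ) c`. -/
lemma OscLE.abs_integral_sub_le_of_minorant {E : Set 𝒳} {ν ν' m : Measure 𝒳}
    [IsProbabilityMeasure ν] [IsProbabilityMeasure ν'] [IsProbabilityMeasure m]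
    (hν : ∀ᵐ z ∂ν, z ∈ E) (hν' : ∀ᵐ z ∂ν', z ∈ E) {δ : ℝ} (hδ : 0 ≤ δ)
    (hmν : ENNReal.ofReal δ • m ≤ ν) (hmν' : ENNReal.ofReal δ • m ≤ ν') {h : 𝒳 → ℝ}
    (hh : BddMeasurable h) {c : ℝ} (hc : OscLE h E c) :
    |∫ z, h z ∂ν - ∫ z, h z ∂ν'| ≤ (1 - δ) * c := by
  obtain ⟨x₀, hx₀⟩ := hν.exists
  obtain ⟨B, hB⟩ := hh.exists_bound
  have hbdd : BddBelow (h '' E) := ⟨-B, by rintro _ ⟨x, -, rfl⟩; exact (abs_le.1 (hB x)).1⟩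
  set a := sInf (h '' E)
  have hlow (z : 𝒳) (hz : z ∈ E) : 0 ≤ h z - a :=
    sub_nonneg.2 (csInf_le hbdd (Set.mem_image_of_mem h hz))
  have hupp (z : 𝒳) (hz : z ∈ E) : 0 ≤ a + c - h z := by
    have : h z - c ≤ a := by
      refine le_csInf ⟨h x₀, x₀, hx₀, rfl⟩ ?_
      rintro _ ⟨z', hz', rfl⟩
      linarith [(abs_le.1 (hc z hz z' hz')).2]
    linarith
  have key (μ : Measure 𝒳) [IsProbabilityMeasure μ] (hμ : ∀ᵐ z ∂μ, z ∈ E)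
      (hle : ENNReal.ofReal δ • m ≤ μ) :
      δ * (∫ z, h z ∂m - a) ≤ ∫ z, h z ∂μ - a ∧
      δ * (a + c - ∫ z, h z ∂m) ≤ a + c - ∫ z, h z ∂μ := by
    have hl := integral_mono_measure (f := fun z => h z - a) hle (hμ.mono hlow)
      (hh.integrable.sub (integrable_const _))
    have hu := integral_mono_measure (f := fun z => a + c - h z) hle (hμ.mono hupp)
      ((integrable_const _).sub hh.integrable)
    rw [integral_smul_measure, integral_sub hh.integrable (integrable_const _),
      integral_sub hh.integrable (integrable_const _)] at hl
    rw [integral_smul_measure, integral_sub (integrable_const _) hh.integrable,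
      integral_sub (integrable_const _) hh.integrable] at hu
    simp only [ENNReal.toReal_ofReal hδ, integral_const, probReal_univ, smul_eq_mul,
      one_mul] at hl hu
    exact ⟨hl, hu⟩
  obtain ⟨h₁, h₂⟩ := key ν hν hmν
  obtain ⟨h₃, h₄⟩ := key ν' hν' hmν'
  exact abs_le.2 ⟨by linarith, by linarith⟩

lemma OscLE.abs_integral_sub_le {E : Set 𝒳} {ν ν' : Measure 𝒳}
    [IsProbabilityMeasure ν] [IsProbabilityMeasure ν'] (hν : ∀ᵐ z ∂ν, z ∈ E)
    (hν' : ∀ᵐ z ∂ν', z ∈ E) {h : 𝒳 → ℝ} (hh : BddMeasurable h)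
    {c : ℝ} (hc : OscLE h E c) : |∫ z, h z ∂ν - ∫ z, h z ∂ν'| ≤ c := by
  simpa using OscLE.abs_integral_sub_le_of_minorant (m := ν) hν hν' le_rfl
    (by simp [Measure.zero_le]) (by simp [Measure.zero_le]) hh hc

/-- The environment `ω` is *regular* along its forward orbit: the chain stays in the fibres `E`,
and whenever the orbit visits `A`, the last `M` steps of the chain leading there satisfy Doeblin's
condition with a minorant of mass `1 - q ^ M`. -/
structure RegularEnv (θ : Ω → Ω) (P : Ω → Kernel 𝒳 𝒳) (E : Ω → Set 𝒳) (A : Set Ω) (q : ℝ) (M : ℕ)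
    (ω : Ω) : Prop where
  ae_mem_fibre : ∀ k, ∀ x ∈ E (θ^[k] ω), ∀ᵐ z ∂P (θ^[k] ω) x, z ∈ E (θ^[k + 1] ω)
  exists_minorant : ∀ k, θ^[k + M] ω ∈ A → ∃ m : Measure 𝒳, IsProbabilityMeasure m ∧
    ∀ x ∈ E (θ^[k] ω), ENNReal.ofReal (1 - q ^ M) • m ≤ envKernel θ P M (θ^[k] ω) x

lemma RegularEnv.iterate (h : RegularEnv θ P E A q M ω) (j : ℕ) :
    RegularEnv θ P E A q M (θ^[j] ω) where
  ae_mem_fibre k := by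
    simpa only [← Function.iterate_add_apply, add_right_comm k 1 j] using h.ae_mem_fibre (k + j)
  exists_minorant k := by
    simpa only [← Function.iterate_add_apply, add_right_comm k M j] using h.exists_minorant (k + j)

lemma envKernel_one (θ : Ω → Ω) (P : Ω → Kernel 𝒳 𝒳) (ω : Ω) : envKernel θ P 1 ω = P ω := by
  rw [envKernel, envKernel, Kernel.id_comp]

lemma envKernel_add (θ : Ω → Ω) (P : Ω → Kernel 𝒳 𝒳) (a b : ℕ) (ω : Ω) :
    envKernel θ P (a + b) ω = envKernel θ P b (θ^[a] ω) ∘ₖ envKernel θ P a ω := by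
  induction a generalizing ω with
  | zero => rw [zero_add, envKernel, Kernel.comp_id, Function.iterate_zero_apply]
  | succ a ih =>
    rw [Nat.succ_add]
    simp only [envKernel, Function.iterate_succ_apply]
    rw [ih, Kernel.comp_assoc]

lemma ae_envKernel_mem_fibre (hE : ∀ ω, MeasurableSet (E ω))
    (hω : ∀ k, ∀ x ∈ E (θ^[k] ω), ∀ᵐ z ∂P (θ^[k] ω) x, z ∈ E (θ^[k + 1] ω)) (k : ℕ) {x : 𝒳}
    (hx : x ∈ E ω) :
    ∀ᵐ z ∂envKernel θ P k ω x, z ∈ E (θ^[k] ω) := by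
  induction k generalizing ω x with
  | zero =>
    rw [envKernel, Kernel.id_apply]
    exact (ae_dirac_iff (p := (· ∈ E ω)) (hE ω)).2 hx
  | succ k ih =>
    have hnull : envKernel θ P (k + 1) ω x (E (θ^[k + 1] ω))ᶜ = 0 := by
      rw [envKernel, Kernel.comp_apply' _ _ _ (hE _).compl,
        lintegral_eq_zero_iff (Kernel.measurable_coe _ (hE _).compl)]
      filter_upwards [hω 0 x hx] with z hz
      exact ae_iff.1 (ih (fun j => hω (j + 1)) hz)
    exact ae_iff.2 hnull

variable [∀ ω, IsMarkovKernel (P ω)]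

instance isMarkovKernel_envKernel (n : ℕ) (ω : Ω) : IsMarkovKernel (envKernel θ P n ω) := by
  induction n generalizing ω with
  | zero => rw [envKernel]; infer_instance
  | succ n ih => rw [envKernel]; have := ih (θ ω); infer_instance

lemma BddMeasurable.integral_envKernel {h : 𝒳 → ℝ} (hh : BddMeasurable h) (n : ℕ) (ω : Ω) :
    BddMeasurable fun x => ∫ z, h z ∂envKernel θ P n ω x :=
  (hh.comp measurable_snd : BddMeasurable (Function.uncurry fun _ : 𝒳 => h)).integral_kernel _

lemma integral_envKernel_add (a b : ℕ) (ω : Ω) {h : 𝒳 → ℝ} (hh : BddMeasurable h)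
    (x : 𝒳) :
    ∫ z, h z ∂envKernel θ P (a + b) ω x
      = ∫ w, ∫ z, h z ∂envKernel θ P b (θ^[a] ω) w ∂envKernel θ P a ω x := by
  rw [envKernel_add, Kernel.integral_comp]
  exact hh.integrable

namespace RegularEnv

variable {k : ℕ} {h : 𝒳 → ℝ} {c : ℝ}

lemma oscLE_integral (hE : ∀ ω, MeasurableSet (E ω)) (hω : RegularEnv θ P E A q M ω)
    (hh : BddMeasurable h) (hc : OscLE h (E (θ^[k] ω)) c) :
    OscLE (fun x => ∫ z, h z ∂envKernel θ P k ω x) (E ω) c := fun _ hx _ hx' =>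
  hc.abs_integral_sub_le (ae_envKernel_mem_fibre hE hω.ae_mem_fibre k hx)
    (ae_envKernel_mem_fibre hE hω.ae_mem_fibre k hx') hh

lemma oscLE_integral_of_iterate_mem (hE : ∀ ω, MeasurableSet (E ω))
    (hω : RegularEnv θ P E A q M ω) (hq0 : 0 ≤ q) (hq1 : q ≤ 1) (hA : θ^[M] ω ∈ A)
    (hh : BddMeasurable h) (hc : OscLE h (E (θ^[M] ω)) c) :
    OscLE (fun x => ∫ z, h z ∂envKernel θ P M ω x) (E ω) (q ^ M * c) := by
  intro x hx x' hx'
  obtain ⟨m, _, hm⟩ := hω.exists_minorant 0 (by rwa [zero_add])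
  simpa only [sub_sub_cancel] using hc.abs_integral_sub_le_of_minorant
    (ae_envKernel_mem_fibre hE hω.ae_mem_fibre M hx)
    (ae_envKernel_mem_fibre hE hω.ae_mem_fibre M hx')
    (sub_nonneg.2 (pow_le_one₀ hq0 hq1)) (hm x hx) (hm x' hx') hh

/-- Going back from time `k`, each visit to `A` gains a factor `q ^ M` and uses up at most `M`
visits, whence the rate `q ^ visitCount`; the prefactor absorbs the first `M` steps. -/
theorem oscLE_integral_contraction (hE : ∀ ω, MeasurableSet (E ω))
    (hω : RegularEnv θ P E A q M ω) (hq0 : 0 < q) (hq1 : q ≤ 1) (hM : 0 < M)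
    (hh : BddMeasurable h) (hc0 : 0 ≤ c) (hc : OscLE h (E (θ^[k] ω)) c) :
    OscLE (fun x => ∫ z, h z ∂envKernel θ P k ω x) (E ω)
      ((q ^ M)⁻¹ * q ^ visitCount θ A ω k * c) := by
  induction k using Nat.strong_induction_on generalizing h c with
  | _ k ih =>
  intro x hx x' hx'
  rcases lt_or_ge k M with hkM | hMk
  · refine (hω.oscLE_integral hE hh hc x hx x' hx').trans (le_mul_of_one_le_left hc0 ?_)
    rw [inv_mul_eq_div, one_le_div₀ (pow_pos hq0 M)]
    exact pow_le_pow_of_le_one hq0.le hq1 ((visitCount_le θ A ω k).trans hkM.le)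
  by_cases hkA : θ^[k] ω ∈ A
  · obtain ⟨l, rfl⟩ := Nat.exists_eq_add_of_le' hMk
    rw [add_comm l M, Function.iterate_add_apply] at hkA hc
    have hosc := (hω.iterate l).oscLE_integral_of_iterate_mem hE hq0.le hq1 hkA hh hc
    simp only [integral_envKernel_add l M ω hh]
    refine (ih l (by omega) (hh.integral_envKernel M _) (by positivity) hosc x hx x' hx').trans ?_
    rw [visitCount_add, mul_assoc, mul_assoc, ← mul_assoc _ (q ^ M) c, ← pow_add]
    gcongr (q ^ M)⁻¹ * (?_ * c)
    exact pow_le_pow_of_le_one hq0.le hq1 (by gcongr; exact visitCount_le _ _ _ _)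
  · obtain ⟨l, rfl⟩ := Nat.exists_eq_succ_of_ne_zero (hM.trans_le hMk).ne'
    rw [visitCount_succ_of_notMem hkA]
    simp only [Nat.succ_eq_add_one, integral_envKernel_add l 1 ω hh]
    refine ih l l.lt_succ_self (hh.integral_envKernel 1 _) hc0 ?_ x hx x' hx'
    refine (hω.iterate l).oscLE_integral hE hh ?_
    rwa [← Function.iterate_add_apply, add_comm 1 l]

end RegularEnv

end Contraction

section MartingaleDifferences

variable {𝒳 : Type*} {ξ : ℕ → 𝒳 → 𝒳 → ℝ} {s : Finset ℕ}

/-- The sum over the steps `j ∈ s` of a path `y` of the edge weights `ξ j (y j) (y (j + 1))`. -/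
def stepSum (ξ : ℕ → 𝒳 → 𝒳 → ℝ) (s : Finset ℕ) (y : ℕ → 𝒳) : ℝ :=
  ∑ j ∈ s, ξ j (y j) (y (j + 1))

lemma dependsOn_stepSum {j : ℕ} (hs : ∀ i ∈ s, i < j) :
    DependsOn (stepSum ξ s) (Set.Iic j) := fun y y' h => by
  refine Finset.sum_congr rfl fun i hi => ?_
  rw [h i (hs i hi).le, h (i + 1) (hs i hi)]

lemma stepSum_insert {j : ℕ} (hj : j ∉ s) (y : ℕ → 𝒳) :
    stepSum ξ (insert j s) y = stepSum ξ s y + ξ j (y j) (y (j + 1)) := by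
  rw [stepSum, Finset.sum_insert hj, add_comm, stepSum]

variable [MeasurableSpace 𝒳] {Q : ℕ → Kernel 𝒳 𝒳}

/-- The edge weights `ξ` are bounded martingale differences for the Markov chain with transition
kernels `Q`. -/
structure IsMartDiff (Q : ℕ → Kernel 𝒳 𝒳) (ξ : ℕ → 𝒳 → 𝒳 → ℝ) : Prop where
  bddMeasurable : ∀ j, BddMeasurable (Function.uncurry (ξ j))
  integral_eq_zero : ∀ j x, ∫ z, ξ j x z ∂Q j x = 0

/-- The conditional variance of the martingale difference `ξ j`, given that the chain with
transition kernels `Q` is at `x` at time `j`. -/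
def stepVar (Q : ℕ → Kernel 𝒳 𝒳) (ξ : ℕ → 𝒳 → 𝒳 → ℝ) (j : ℕ) (x : 𝒳) : ℝ :=
  ∫ z, ξ j x z ^ 2 ∂Q j x

lemma stepVar_nonneg (j : ℕ) (x : 𝒳) : 0 ≤ stepVar Q ξ j x :=
  integral_nonneg fun _ => sq_nonneg _

lemma stepVar_le [∀ j, IsMarkovKernel (Q j)] {j : ℕ} {b : ℝ} (hb : ∀ x z, |ξ j x z| ≤ b) (x : 𝒳) :
    stepVar Q ξ j x ≤ b ^ 2 :=
  (le_abs_self _).trans <| abs_integral_le_of_abs_le fun z => by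
    rw [abs_pow]; exact pow_le_pow_left₀ (abs_nonneg _) (hb x z) 2

namespace IsMartDiff

lemma bddMeasurable_step (hξ : IsMartDiff Q ξ) (j : ℕ) :
    BddMeasurable fun y : ℕ → 𝒳 => ξ j (y j) (y (j + 1)) :=
  have hpair : Measurable fun y : ℕ → 𝒳 => (y j, y (j + 1)) :=
    (measurable_pi_apply j).prodMk (measurable_pi_apply (j + 1))
  (hξ.bddMeasurable j).comp hpair

lemma bddMeasurable_stepSum (hξ : IsMartDiff Q ξ) (s : Finset ℕ) : BddMeasurable (stepSum ξ s) :=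
  .sum fun j _ => hξ.bddMeasurable_step j

variable [∀ j, IsMarkovKernel (Q j)]

lemma bddMeasurable_stepVar (hξ : IsMartDiff Q ξ) (j : ℕ) : BddMeasurable (stepVar Q ξ j) :=
  (hξ.bddMeasurable j).sq.integral_kernel (Q j)

variable {κ : Measure (ℕ → 𝒳)} [IsProbabilityMeasure κ] {𝕜 : Type*} [RCLike 𝕜]
  {φ : (ℕ → 𝒳) → 𝕜} {j : ℕ}

lemma integral_mul_step (hξ : IsMartDiff Q ξ) (hκ : HasTransition κ j (Q j))
    (hφ : BddMeasurable φ) (hφj : DependsOn φ (Set.Iic j)) :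
    ∫ y, φ y * (ξ j (y j) (y (j + 1)) : ℝ) ∂κ = 0 := by
  rw [hκ.integral_mul hφ hφj (H := fun x z => (ξ j x z : 𝕜)) (hξ.bddMeasurable j).ofReal]
  simp only [integral_ofReal, hξ.integral_eq_zero, RCLike.ofReal_zero, mul_zero, integral_zero]

lemma integral_stepSum (hξ : IsMartDiff Q ξ) (hκ : ∀ j ∈ s, HasTransition κ j (Q j)) :
    ∫ y, stepSum ξ s y ∂κ = 0 := by
  simp only [stepSum]
  rw [integral_finsetSum _ fun j _ => (hξ.bddMeasurable_step j).integrable]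
  refine Finset.sum_eq_zero fun j hj => ?_
  simpa only [one_mul, RCLike.ofReal_real_eq_id, id] using
    hξ.integral_mul_step (hκ j hj) (.const (1 : ℝ)) ((dependsOn_const _).mono (Set.empty_subset _))

lemma integral_mul_step_sq (hξ : IsMartDiff Q ξ) (hκ : HasTransition κ j (Q j))
    (hφ : BddMeasurable φ) (hφj : DependsOn φ (Set.Iic j)) :
    ∫ y, φ y * (ξ j (y j) (y (j + 1)) ^ 2 : ℝ) ∂κ
      = ∫ y, φ y * (stepVar Q ξ j (y j) : ℝ) ∂κ := by
  rw [hκ.integral_mul hφ hφj (H := fun x z => ((ξ j x z ^ 2 : ℝ) : 𝕜))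
    (hξ.bddMeasurable j).sq.ofReal]
  simp only [integral_ofReal, stepVar]

lemma integral_add_stepSum_sq (hξ : IsMartDiff Q ξ) (hκ : ∀ j ∈ s, HasTransition κ j (Q j))
    {i : ℕ} (hs : ∀ j ∈ s, i ≤ j) {φ : (ℕ → 𝒳) → ℝ} (hφ : BddMeasurable φ)
    (hφi : DependsOn φ (Set.Iic i)) :
    ∫ y, (φ y + stepSum ξ s y) ^ 2 ∂κ
      = ∫ y, φ y ^ 2 ∂κ + ∑ j ∈ s, ∫ y, stepVar Q ξ j (y j) ∂κ := by
  induction s using Finset.induction_on_max with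
  | empty => simp only [stepSum, Finset.sum_empty, add_zero]
  | insert j s hj ih =>
    have hjs : j ∉ s := fun h => (hj j h).false
    rw [Finset.sum_insert hjs, add_left_comm,
      ← ih (fun k hk => hκ k (Finset.mem_insert_of_mem hk))
        fun k hk => hs k (Finset.mem_insert_of_mem hk)]
    have hκj := hκ j (Finset.mem_insert_self j s)
    set ψ : (ℕ → 𝒳) → ℝ := fun y => φ y + stepSum ξ s y
    have hψ : BddMeasurable ψ := hφ.add (hξ.bddMeasurable_stepSum s)
    have hψj : DependsOn ψ (Set.Iic j) := fun y y' h => congrArg₂ (· + ·)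
      (hφi fun k hk => h k (le_trans hk (hs j (Finset.mem_insert_self j s))))
      (dependsOn_stepSum hj h)
    have hcross : ∫ y, ψ y * ξ j (y j) (y (j + 1)) ∂κ = 0 := hξ.integral_mul_step hκj hψ hψj
    have hsq : ∫ y, ξ j (y j) (y (j + 1)) ^ 2 ∂κ = ∫ y, stepVar Q ξ j (y j) ∂κ := by
      simpa only [one_mul, RCLike.ofReal_real_eq_id, id] using
        hξ.integral_mul_step_sq hκj (.const (1 : ℝ)) ((dependsOn_const _).mono (Set.empty_subset _))
    have hexpand (y : ℕ → 𝒳) : (φ y + stepSum ξ (insert j s) y) ^ 2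
        = ψ y ^ 2 + 2 * (ψ y * ξ j (y j) (y (j + 1))) + ξ j (y j) (y (j + 1)) ^ 2 := by
      rw [stepSum_insert hjs]; ring
    have hξj := hξ.bddMeasurable_step j
    simp only [hexpand]
    rw [integral_add (hψ.sq.add ((hψ.mul hξj).const_mul 2)).integrable hξj.sq.integrable,
      integral_add hψ.sq.integrable ((hψ.mul hξj).const_mul 2).integrable, integral_const_mul,
      hcross, hsq, mul_zero, add_zero, add_comm]

end IsMartDiff

end MartingaleDifferences

section CharFunBound

/-- The second-order Taylor expansion of `exp (I x)`, with the deterministic `1 - u / 2` replaced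
by `exp (- u / 2)`. -/
lemma norm_exp_I_mul_sub_le {x u b : ℝ} (hx : |x| ≤ b) (hu0 : 0 ≤ u) (hub : u ≤ b ^ 2)
    (hb : b ≤ 1) :
    ‖Complex.exp (Complex.I * x) - (Complex.exp (-(u / 2) : ℝ) + Complex.I * x
      + ((u - x ^ 2 : ℝ) : ℂ) / 2)‖ ≤ b ^ 3 := by
  have hb0 : 0 ≤ b := (abs_nonneg x).trans hx
  have hxnorm : ‖Complex.I * (x : ℂ)‖ = |x| := by simp
  have hcos := Complex.exp_bound (x := Complex.I * x) (hxnorm.trans_le (hx.trans hb)) (n := 3)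
    (by norm_num)
  have hx3 : ‖Complex.exp (Complex.I * x) - (1 + Complex.I * x - (x : ℂ) ^ 2 / 2)‖ ≤ b ^ 3 / 2 := by
    have h3 : |x| ^ 3 ≤ b ^ 3 := pow_le_pow_left₀ (abs_nonneg x) hx 3
    have hsum : ∑ m ∈ Finset.range 3, (Complex.I * (x : ℂ)) ^ m / (m.factorial : ℂ)
        = 1 + Complex.I * x - (x : ℂ) ^ 2 / 2 := by
      simp only [Finset.sum_range_succ, Finset.sum_range_zero, mul_pow, Complex.I_sq]
      norm_num [Nat.factorial]
      ring
    rw [hsum, hxnorm] at hcos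
    refine hcos.trans ?_
    norm_num [Nat.factorial]
    linarith [pow_nonneg hb0 3]
  have hexp : ‖((Real.exp (-(u / 2)) - 1 - -(u / 2) : ℝ) : ℂ)‖ ≤ b ^ 3 / 2 := by
    have hb2 : b ^ 2 ≤ 1 := pow_le_one₀ hb0 hb
    have hu2 : u ^ 2 ≤ b ^ 3 := calc
      u ^ 2 ≤ (b ^ 2) ^ 2 := pow_le_pow_left₀ hu0 hub 2
      _ = b ^ (2 * 2) := (pow_mul b 2 2).symm
      _ ≤ b ^ 3 := pow_le_pow_of_le_one hb0 hb (by norm_num)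
    rw [Complex.norm_real]
    refine (Real.abs_exp_sub_one_sub_id_le ?_).trans (by nlinarith [pow_nonneg hb0 3])
    rw [abs_neg, abs_of_nonneg (by positivity)]
    linarith
  calc _ = ‖(Complex.exp (Complex.I * x) - (1 + Complex.I * x - (x : ℂ) ^ 2 / 2))
        - ((Real.exp (-(u / 2)) - 1 - -(u / 2) : ℝ) : ℂ)‖ := by congr 1; push_cast; ring
    _ ≤ b ^ 3 / 2 + b ^ 3 / 2 := norm_sub_le_of_le hx3 hexp
    _ = b ^ 3 := add_halves _

lemma integral_abs_le_sqrt_integral_sq {α : Type*} [MeasurableSpace α] {μ : Measure α}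
    [IsProbabilityMeasure μ] {g : α → ℝ} (hg : BddMeasurable g) :
    ∫ y, |g y| ∂μ ≤ √(∫ y, g y ^ 2 ∂μ) := by
  refine Real.le_sqrt_of_sq_le ?_
  simpa only [Function.comp_def, sq_abs] using (even_two.convexOn_pow (𝕜 := ℝ)).map_integral_le
    (continuous_pow 2).continuousOn isClosed_univ (.of_forall fun _ => Set.mem_univ _)
    hg.integrable.abs (by simpa only [Function.comp_def, sq_abs] using hg.sq.integrable)

variable {𝒳 : Type*} {ξ : ℕ → 𝒳 → 𝒳 → ℝ} {s : Finset ℕ} {b : ℝ} {j l : ℕ}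

lemma norm_exp_stepSum_sub_filter_le (p : ℕ → Prop) [DecidablePred p] (y : ℕ → 𝒳) :
    ‖Complex.exp (Complex.I * stepSum ξ s y) - Complex.exp (Complex.I * stepSum ξ (s.filter p) y)‖
      ≤ |stepSum ξ (s.filter (¬ p ·)) y| := by
  have hsplit : stepSum ξ s y = stepSum ξ (s.filter p) y + stepSum ξ (s.filter (¬ p ·)) y := by
    simp only [stepSum, Finset.sum_filter_add_sum_filter_not]
  rw [hsplit, Complex.ofReal_add, mul_add, Complex.exp_add, ← mul_sub_one, norm_mul,
    Complex.norm_exp_I_mul_ofReal, one_mul]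
  exact Real.norm_exp_I_mul_ofReal_sub_one_le

lemma norm_exp_stepSum_insert_sub_le (hs : ∀ k ∈ s, k < j) (hb : ∀ x z, |ξ j x z| ≤ b)
    (hb1 : b ≤ 1) {u : ℝ} (hu0 : 0 ≤ u) (hub : u ≤ b ^ 2) (y : ℕ → 𝒳) :
    ‖Complex.exp (Complex.I * stepSum ξ (insert j s) y)
      - (Complex.exp (-(u / 2) : ℝ) * Complex.exp (Complex.I * stepSum ξ s y)
        + Complex.I * (Complex.exp (Complex.I * stepSum ξ s y) * ξ j (y j) (y (j + 1)))
        + 2⁻¹ * (Complex.exp (Complex.I * stepSum ξ s y)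
          * ((u - ξ j (y j) (y (j + 1)) ^ 2 : ℝ) : ℂ)))‖ ≤ b ^ 3 := by
  set X := ξ j (y j) (y (j + 1))
  have hinsert : Complex.exp (Complex.I * stepSum ξ (insert j s) y)
      = Complex.exp (Complex.I * stepSum ξ s y) * Complex.exp (Complex.I * X) := by
    rw [stepSum_insert fun h => (hs j h).false, Complex.ofReal_add, mul_add, Complex.exp_add]
  calc _ = ‖Complex.exp (Complex.I * stepSum ξ s y) * (Complex.exp (Complex.I * X)
        - (Complex.exp (-(u / 2) : ℝ) + Complex.I * X + ((u - X ^ 2 : ℝ) : ℂ) / 2))‖ := by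
        rw [hinsert]; congr 1; ring
    _ ≤ b ^ 3 := by
      rw [norm_mul, Complex.norm_exp_I_mul_ofReal, one_mul]
      exact norm_exp_I_mul_sub_le (hb _ _) hu0 hub hb1

variable [MeasurableSpace 𝒳]

/-- The function `h` of the path is decorrelated, up to an error `ρ`, from the functions of modulus
at most one of the coordinates up to time `i`. -/
def DecorrelatedFrom (κ : Measure (ℕ → 𝒳)) (i : ℕ) (h : (ℕ → 𝒳) → ℝ) (ρ : ℝ) : Prop :=
  ∀ φ : (ℕ → 𝒳) → ℂ, Measurable φ → (∀ y, ‖φ y‖ ≤ 1) → DependsOn φ (Set.Iic i) →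
    ‖∫ y, φ y * ((∫ y', h y' ∂κ - h y : ℝ) : ℂ) ∂κ‖ ≤ ρ

variable {Q : ℕ → Kernel 𝒳 𝒳} {κ : Measure (ℕ → 𝒳)} [IsProbabilityMeasure κ]

lemma integral_stepVar_le [∀ j, IsMarkovKernel (Q j)] (hb : ∀ x z, |ξ j x z| ≤ b) :
    ∫ y, stepVar Q ξ j (y j) ∂κ ≤ b ^ 2 :=
  (le_abs_self _).trans <| abs_integral_le_of_abs_le fun y =>
    (abs_of_nonneg (stepVar_nonneg j (y j))).trans_le (stepVar_le hb _)

namespace IsMartDiff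

lemma bddMeasurable_exp_stepSum (hξ : IsMartDiff Q ξ) (s : Finset ℕ) :
    BddMeasurable fun y => Complex.exp (Complex.I * stepSum ξ s y) where
  measurable := Complex.measurable_exp.comp
    ((hξ.bddMeasurable_stepSum s).ofReal.measurable.const_mul _)
  exists_bound := ⟨1, fun _ => (Complex.norm_exp_I_mul_ofReal _).le⟩

variable [∀ j, IsMarkovKernel (Q j)]

lemma integral_abs_stepSum_le (hξ : IsMartDiff Q ξ) (hκ : ∀ j ∈ s, HasTransition κ j (Q j))
    (hb : ∀ j ∈ s, ∀ x z, |ξ j x z| ≤ b) : ∫ y, |stepSum ξ s y| ∂κ ≤ √(s.card * b ^ 2) := by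
  refine (integral_abs_le_sqrt_integral_sq (hξ.bddMeasurable_stepSum s)).trans
    (Real.sqrt_le_sqrt ?_)
  have horth := hξ.integral_add_stepSum_sq hκ (fun j _ => j.zero_le) (.const 0)
    ((dependsOn_const (0 : ℝ)).mono (Set.empty_subset _))
  simp only [zero_add, ne_eq, OfNat.ofNat_ne_zero, not_false_eq_true, zero_pow, integral_zero]
    at horth
  rw [horth, ← nsmul_eq_mul]
  exact Finset.sum_le_card_nsmul _ _ _ fun j hj => integral_stepVar_le (hb j hj)

lemma integral_exp_mul_sub_step_sq (hξ : IsMartDiff Q ξ) (hκ : HasTransition κ j (Q j))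
    (hs : ∀ k ∈ s, k < j) (u : ℝ) :
    ∫ y, Complex.exp (Complex.I * stepSum ξ s y)
        * ((u - ξ j (y j) (y (j + 1)) ^ 2 : ℝ) : ℂ) ∂κ
      = ∫ y, Complex.exp (Complex.I * stepSum ξ s y) * ((u - stepVar Q ξ j (y j) : ℝ) : ℂ) ∂κ := by
  set Φ : (ℕ → 𝒳) → ℂ := fun y => Complex.exp (Complex.I * stepSum ξ s y)
  have hΦ : BddMeasurable Φ := hξ.bddMeasurable_exp_stepSum s
  have hΦj : DependsOn Φ (Set.Iic j) := fun y y' h => by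
    simp only [Φ, dependsOn_stepSum hs h]
  have hΦu : BddMeasurable fun y => Φ y * (u : ℂ) := hΦ.mul (.const _)
  have hΦX : BddMeasurable fun y => Φ y * ((ξ j (y j) (y (j + 1)) ^ 2 : ℝ) : ℂ) :=
    hΦ.mul (hξ.bddMeasurable_step j).sq.ofReal
  have hΦσ : BddMeasurable fun y => Φ y * (stepVar Q ξ j (y j) : ℂ) :=
    hΦ.mul ((hξ.bddMeasurable_stepVar j).comp (measurable_pi_apply j)).ofReal
  simp only [Complex.ofReal_sub, mul_sub]
  rw [integral_sub hΦu.integrable hΦX.integrable, integral_sub hΦu.integrable hΦσ.integrable]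
  congr 1
  exact hξ.integral_mul_step_sq hκ hΦ hΦj

lemma norm_integral_exp_insert_sub_le (hξ : IsMartDiff Q ξ) (hκ : HasTransition κ j (Q j))
    (hs : ∀ k ∈ s, k < j) (hb : ∀ x z, |ξ j x z| ≤ b) (hb1 : b ≤ 1) {u : ℝ} (hu0 : 0 ≤ u)
    (hub : u ≤ b ^ 2) :
    ‖∫ y, Complex.exp (Complex.I * stepSum ξ (insert j s) y) ∂κ
      - Complex.exp (-(u / 2) : ℝ) * ∫ y, Complex.exp (Complex.I * stepSum ξ s y) ∂κ‖
      ≤ b ^ 3 + ‖∫ y, Complex.exp (Complex.I * stepSum ξ s y)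
        * ((u - stepVar Q ξ j (y j) : ℝ) : ℂ) ∂κ‖ / 2 := by
  rw [← hξ.integral_exp_mul_sub_step_sq hκ hs]
  set Φ : (ℕ → 𝒳) → ℂ := fun y => Complex.exp (Complex.I * stepSum ξ s y)
  set X : (ℕ → 𝒳) → ℝ := fun y => ξ j (y j) (y (j + 1))
  set e : ℂ := Complex.exp (-(u / 2) : ℝ)
  set Ψ : (ℕ → 𝒳) → ℂ := fun y => Complex.exp (Complex.I * stepSum ξ (insert j s) y)
  have hΦ : BddMeasurable Φ := hξ.bddMeasurable_exp_stepSum s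
  have hΨ : BddMeasurable Ψ := hξ.bddMeasurable_exp_stepSum (insert j s)
  have hX : BddMeasurable X := hξ.bddMeasurable_step j
  have hΦX : ∫ y, Φ y * (X y : ℂ) ∂κ = 0 :=
    hξ.integral_mul_step hκ hΦ fun y y' h => by simp only [Φ, dependsOn_stepSum hs h]
  have hmain : BddMeasurable fun y => Φ y * ((u - X y ^ 2 : ℝ) : ℂ) :=
    hΦ.mul ((BddMeasurable.const u).sub hX.sq).ofReal
  have hlin : BddMeasurable fun y => Φ y * (X y : ℂ) := hΦ.mul hX.ofReal
  have hexpand : ∫ y, (Ψ y - (e * Φ y + Complex.I * (Φ y * X y)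
      + 2⁻¹ * (Φ y * ((u - X y ^ 2 : ℝ) : ℂ)))) ∂κ
      = ∫ y, Ψ y ∂κ - e * ∫ y, Φ y ∂κ - 2⁻¹ * ∫ y, Φ y * ((u - X y ^ 2 : ℝ) : ℂ) ∂κ := by
    rw [integral_sub hΨ.integrable (((hΦ.const_mul _).add (hlin.const_mul _)).add
        (hmain.const_mul _)).integrable,
      integral_add ((hΦ.const_mul _).add (hlin.const_mul _)).integrable
        (hmain.const_mul _).integrable,
      integral_add (hΦ.const_mul _).integrable (hlin.const_mul _).integrable]
    simp only [integral_const_mul, hΦX, mul_zero, add_zero, sub_add_eq_sub_sub]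
  have hbound := norm_integral_le_of_norm_le_const (μ := κ) (.of_forall fun y =>
    norm_exp_stepSum_insert_sub_le hs hb hb1 hu0 hub y)
  rw [hexpand, probReal_univ, mul_one] at hbound
  calc _ ≤ ‖2⁻¹ * ∫ y, Φ y * ((u - X y ^ 2 : ℝ) : ℂ) ∂κ‖ + _ := norm_le_norm_add_norm_sub' _ _
    _ ≤ ‖∫ y, Φ y * ((u - X y ^ 2 : ℝ) : ℂ) ∂κ‖ / 2 + b ^ 3 :=
      add_le_add (by rw [norm_mul, norm_inv, Complex.norm_two, inv_mul_eq_div]) hbound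
    _ = _ := add_comm _ _

/-- The steps of the last `l` times carry an `L²` norm of only `b √l`; discarding them from the
exponent makes the decorrelation estimate applicable. -/
lemma norm_integral_exp_mul_sub_stepVar_le (hξ : IsMartDiff Q ξ)
    (hκ : ∀ k ∈ s, HasTransition κ k (Q k)) (hs : ∀ k ∈ s, k < j)
    (hb : ∀ k ∈ s, ∀ x z, |ξ k x z| ≤ b) (hbj : ∀ x z, |ξ j x z| ≤ b) {ρ : ℝ}
    (hρ : DecorrelatedFrom κ (j - l) (fun y => stepVar Q ξ j (y j)) ρ) :
    ‖∫ y, Complex.exp (Complex.I * stepSum ξ s y)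
        * ((∫ y', stepVar Q ξ j (y' j) ∂κ - stepVar Q ξ j (y j) : ℝ) : ℂ) ∂κ‖
      ≤ b ^ 3 * √l + ρ := by
  set w : (ℕ → 𝒳) → ℝ := fun y => ∫ y', stepVar Q ξ j (y' j) ∂κ - stepVar Q ξ j (y j)
  set Φ : Finset ℕ → (ℕ → 𝒳) → ℂ := fun t y => Complex.exp (Complex.I * stepSum ξ t y)
  set past := s.filter (· < j - l)
  set recent := s.filter (¬ · < j - l)
  have hb0 : 0 ≤ b := by
    obtain ⟨y⟩ := nonempty_of_isProbabilityMeasure κ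
    exact (abs_nonneg _).trans (hbj (y 0) (y 0))
  have hΦ (t : Finset ℕ) : BddMeasurable (Φ t) := hξ.bddMeasurable_exp_stepSum t
  have hw : BddMeasurable w :=
    (BddMeasurable.const _).sub ((hξ.bddMeasurable_stepVar j).comp (measurable_pi_apply j))
  have hΦw (t : Finset ℕ) : BddMeasurable fun y => Φ t y * (w y : ℂ) := (hΦ t).mul hw.ofReal
  have hw_le (y : ℕ → 𝒳) : |w y| ≤ b ^ 2 := abs_sub_le_of_nonneg_of_le
    (integral_nonneg fun y => stepVar_nonneg j (y j)) (integral_stepVar_le hbj)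
    (stepVar_nonneg j _) (stepVar_le hbj _)
  have hpoint (y : ℕ → 𝒳) : ‖Φ s y * w y - Φ past y * w y‖ ≤ b ^ 2 * |stepSum ξ recent y| := by
    rw [← sub_mul, norm_mul, mul_comm, Complex.norm_real]
    exact mul_le_mul (hw_le y) (norm_exp_stepSum_sub_filter_le _ y) (norm_nonneg _) (sq_nonneg b)
  have hcard : recent.card ≤ l := calc
    recent.card ≤ (Finset.Ico (j - l) j).card := Finset.card_le_card fun k hk => by
      obtain ⟨hks, hk⟩ := Finset.mem_filter.1 hk
      exact Finset.mem_Ico.2 ⟨not_lt.1 hk, hs k hks⟩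
    _ ≤ l := by rw [Nat.card_Ico]; omega
  have hrecent : ∫ y, |stepSum ξ recent y| ∂κ ≤ b * √l := by
    refine (hξ.integral_abs_stepSum_le (fun k hk => hκ k (Finset.mem_filter.1 hk).1)
      fun k hk => hb k (Finset.mem_filter.1 hk).1).trans ?_
    rw [Real.sqrt_mul (Nat.cast_nonneg _), Real.sqrt_sq hb0, mul_comm]
    gcongr
  have hpast : ‖∫ y, Φ past y * w y ∂κ‖ ≤ ρ :=
    hρ _ (hΦ past).measurable (fun _ => (Complex.norm_exp_I_mul_ofReal _).le) fun y y' h => by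
      simp only [Φ, dependsOn_stepSum (s := past) (fun _ hk => (Finset.mem_filter.1 hk).2) h]
  calc _ ≤ ‖∫ y, (Φ s y * w y - Φ past y * w y) ∂κ‖ + ‖∫ y, Φ past y * w y ∂κ‖ := by
        rw [integral_sub (hΦw s).integrable (hΦw past).integrable]
        exact norm_le_norm_sub_add _ _
    _ ≤ ∫ y, b ^ 2 * |stepSum ξ recent y| ∂κ + ρ := add_le_add
      (norm_integral_le_of_norm_le
        ((hξ.bddMeasurable_stepSum recent).integrable.abs.const_mul _) (.of_forall hpoint)) hpast
    _ ≤ b ^ 2 * (b * √l) + ρ := by rw [integral_const_mul]; gcongr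
    _ = _ := by ring

theorem norm_integral_exp_stepSum_sub_le (hξ : IsMartDiff Q ξ)
    (hκ : ∀ j ∈ s, HasTransition κ j (Q j)) (hb : ∀ j ∈ s, ∀ x z, |ξ j x z| ≤ b) (hb1 : b ≤ 1)
    {ρ : ℕ → ℝ} (hρ : ∀ j ∈ s, DecorrelatedFrom κ (j - l) (fun y => stepVar Q ξ j (y j)) (ρ j)) :
    ‖∫ y, Complex.exp (Complex.I * stepSum ξ s y) ∂κ
      - Complex.exp (-((∑ j ∈ s, ∫ y, stepVar Q ξ j (y j) ∂κ) / 2) : ℝ)‖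
      ≤ ∑ j ∈ s, (b ^ 3 + (b ^ 3 * √l + ρ j) / 2) := by
  induction s using Finset.induction_on_max with
  | empty => simp [stepSum]
  | insert j s hj ih =>
    have hjs : j ∉ s := fun h => (hj j h).false
    have hbj := hb j (Finset.mem_insert_self j s)
    replace ih := ih (fun k hk => hκ k (Finset.mem_insert_of_mem hk))
      (fun k hk => hb k (Finset.mem_insert_of_mem hk))
      fun k hk => hρ k (Finset.mem_insert_of_mem hk)
    set u := ∫ y, stepVar Q ξ j (y j) ∂κ
    have hu0 : 0 ≤ u := integral_nonneg fun y => stepVar_nonneg j (y j)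
    have hstep := (hξ.norm_integral_exp_insert_sub_le (hκ j (Finset.mem_insert_self j s)) hj hbj
      hb1 hu0 (integral_stepVar_le hbj)).trans <| add_le_add_right (div_le_div_of_nonneg_right
        (hξ.norm_integral_exp_mul_sub_stepVar_le (fun k hk => hκ k (Finset.mem_insert_of_mem hk))
        hj (fun k hk => hb k (Finset.mem_insert_of_mem hk)) hbj
        (hρ j (Finset.mem_insert_self j s))) zero_le_two) _
    have hexp_le : ‖Complex.exp (-(u / 2) : ℝ)‖ ≤ 1 := by
      rw [← Complex.ofReal_exp, Complex.norm_real, Real.norm_eq_abs, Real.abs_exp]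
      exact Real.exp_le_one_iff.2 (by linarith)
    rw [Finset.sum_insert hjs, Finset.sum_insert hjs, add_div, neg_add, Complex.ofReal_add,
      Complex.exp_add]
    set v : ℂ := Complex.exp (-((∑ k ∈ s, ∫ y, stepVar Q ξ k (y k) ∂κ) / 2) : ℝ)
    calc _ ≤ _ + ‖Complex.exp (-(u / 2) : ℝ) * ∫ y, Complex.exp (Complex.I * stepSum ξ s y) ∂κ
          - Complex.exp (-(u / 2) : ℝ) * v‖ := norm_sub_le_norm_sub_add_norm_sub _ _ _
      _ ≤ _ := add_le_add hstep <| by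
        rw [← mul_sub, norm_mul]
        exact (mul_le_of_le_one_left (norm_nonneg _) hexp_le).trans ih

end IsMartDiff

end CharFunBound

section Decorrelation

variable {Ω 𝒳 : Type*} [MeasurableSpace Ω] [MeasurableSpace 𝒳] {θ : Ω → Ω}
  {P : Ω → Kernel 𝒳 𝒳} {E : Ω → Set 𝒳} {A : Set Ω} {q : ℝ} {M : ℕ} {ω : Ω} {κ : Measure (ℕ → 𝒳)}

/-- `κ` is the law of a Markov chain in the regular environment `ω`: it moves through the fibres of
the environment with the transition kernels of the environment. -/
structure RegularChain (θ : Ω → Ω) (P : Ω → Kernel 𝒳 𝒳) (E : Ω → Set 𝒳) (A : Set Ω) (q : ℝ)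
    (M : ℕ) (ω : Ω) (κ : Measure (ℕ → 𝒳)) : Prop where
  env : RegularEnv θ P E A q M ω
  ae_mem_fibre : ∀ k, ∀ᵐ y ∂κ, y k ∈ E (θ^[k] ω)
  hasTransition : ∀ k, HasTransition κ k (P (θ^[k] ω))

variable [IsProbabilityMeasure κ] [∀ ω, IsMarkovKernel (P ω)] {h : 𝒳 → ℝ} {i : ℕ}

lemma integral_mul_comp_eval_add {𝕜 : Type*} [RCLike 𝕜]
    (hκ : ∀ k, HasTransition κ k (P (θ^[k] ω))) {φ : (ℕ → 𝒳) → 𝕜} (hφ : BddMeasurable φ)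
    (hφi : DependsOn φ (Set.Iic i)) (hh : BddMeasurable h) (k : ℕ) :
    ∫ y, φ y * (h (y (i + k)) : ℝ) ∂κ
      = ∫ y, φ y * (∫ z, h z ∂envKernel θ P k (θ^[i] ω) (y i) : ℝ) ∂κ := by
  induction k generalizing h with
  | zero =>
    simp only [envKernel, Kernel.id_apply, add_zero,
      integral_dirac' _ _ hh.measurable.stronglyMeasurable]
  | succ k ih =>
    have hh' : BddMeasurable fun x => ∫ z, h z ∂P (θ^[i + k] ω) x :=
      (hh.comp measurable_snd : BddMeasurable (Function.uncurry fun _ : 𝒳 => h)).integral_kernel _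
    have hstep := (hκ (i + k)).integral_mul hφ
      (hφi.mono (Set.Iic_subset_Iic.2 (Nat.le_add_right i k)))
      (H := fun _ z => (h z : 𝕜)) (hh.comp measurable_snd).ofReal
    simp only [integral_ofReal, add_assoc] at hstep
    rw [hstep, ih hh']
    simp only [integral_envKernel_add k 1 _ hh, envKernel_one, ← Function.iterate_add_apply,
      add_comm k i]

lemma integral_comp_eval_add (hκ : ∀ k, HasTransition κ k (P (θ^[k] ω))) (hh : BddMeasurable h)
    (i k : ℕ) :
    ∫ y, h (y (i + k)) ∂κ = ∫ y, ∫ z, h z ∂envKernel θ P k (θ^[i] ω) (y i) ∂κ := by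
  simpa only [one_mul, RCLike.ofReal_real_eq_id, id] using
    integral_mul_comp_eval_add hκ (.const (1 : ℝ))
      ((dependsOn_const _).mono (Set.empty_subset (Set.Iic i))) hh k

namespace RegularChain

lemma abs_integral_sub_le (hE : ∀ ω, MeasurableSet (E ω)) (hκ : RegularChain θ P E A q M ω κ)
    (hq0 : 0 < q) (hq1 : q ≤ 1) (hM : 0 < M) (hh : BddMeasurable h) {c : ℝ} (hc0 : 0 ≤ c) {k : ℕ}
    (hc : OscLE h (E (θ^[k] (θ^[i] ω))) c) {x : 𝒳} (hx : x ∈ E (θ^[i] ω)) :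
    |∫ y, h (y (i + k)) ∂κ - ∫ z, h z ∂envKernel θ P k (θ^[i] ω) x|
      ≤ (q ^ M)⁻¹ * q ^ visitCount θ A (θ^[i] ω) k * c := by
  have hH := (hh.integral_envKernel (θ := θ) (P := P) k (θ^[i] ω)).comp
    (measurable_pi_apply (X := fun _ => 𝒳) i)
  have hmean : ∫ y, h (y (i + k)) ∂κ - ∫ z, h z ∂envKernel θ P k (θ^[i] ω) x
      = ∫ y, (∫ z, h z ∂envKernel θ P k (θ^[i] ω) (y i)
        - ∫ z, h z ∂envKernel θ P k (θ^[i] ω) x) ∂κ := by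
    rw [integral_sub hH.integrable (integrable_const _),
      ← integral_comp_eval_add hκ.hasTransition hh, integral_const, probReal_univ, one_smul]
  rw [hmean]
  exact abs_integral_le_of_ae_abs_le <| (hκ.ae_mem_fibre i).mono fun y hy =>
    (hκ.env.iterate i).oscLE_integral_contraction hE hq0 hq1 hM hh hc0 hc _ hy _ hx

lemma abs_integral_sub_integral_le {ω' : Ω} {κ' : Measure (ℕ → 𝒳)} [IsProbabilityMeasure κ']
    (hE : ∀ ω, MeasurableSet (E ω)) (hκ : RegularChain θ P E A q M ω κ)
    (hκ' : RegularChain θ P E A q M ω' κ') (hq0 : 0 < q) (hq1 : q ≤ 1) (hM : 0 < M)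
    (hh : BddMeasurable h) {c : ℝ} (hc0 : 0 ≤ c) {i' k : ℕ} (hi : θ^[i] ω = θ^[i'] ω')
    (hc : OscLE h (E (θ^[k] (θ^[i] ω))) c) :
    |∫ y, h (y (i + k)) ∂κ - ∫ y, h (y (i' + k)) ∂κ'|
      ≤ (q ^ M)⁻¹ * q ^ visitCount θ A (θ^[i] ω) k * c := by
  have hH := (hh.integral_envKernel (θ := θ) (P := P) k (θ^[i] ω)).comp
    (measurable_pi_apply (X := fun _ => 𝒳) i')
  have hmean : ∫ y, h (y (i + k)) ∂κ - ∫ y, h (y (i' + k)) ∂κ'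
      = ∫ y', (∫ y, h (y (i + k)) ∂κ - ∫ z, h z ∂envKernel θ P k (θ^[i] ω) (y' i')) ∂κ' := by
    rw [integral_sub (integrable_const _) hH.integrable, integral_const, probReal_univ, one_smul,
      integral_comp_eval_add hκ'.hasTransition hh, hi]
  rw [hmean]
  exact abs_integral_le_of_ae_abs_le <| (hκ'.ae_mem_fibre i').mono fun y hy =>
    hκ.abs_integral_sub_le hE hq0 hq1 hM hh hc0 hc (hi ▸ hy)

lemma decorrelatedFrom (hE : ∀ ω, MeasurableSet (E ω)) (hκ : RegularChain θ P E A q M ω κ)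
    (hq0 : 0 < q) (hq1 : q ≤ 1) (hM : 0 < M) (hh : BddMeasurable h) {c : ℝ} (h0 : ∀ x, 0 ≤ h x)
    (hc : ∀ x, h x ≤ c) (hc0 : 0 ≤ c) (i k : ℕ) :
    DecorrelatedFrom κ i (fun y => h (y (i + k)))
      ((q ^ M)⁻¹ * q ^ visitCount θ A (θ^[i] ω) k * c) := by
  intro φ hφm hφ1 hφi
  set u := ∫ y, h (y (i + k)) ∂κ
  set H : 𝒳 → ℝ := fun x => ∫ z, h z ∂envKernel θ P k (θ^[i] ω) x
  have hφ : BddMeasurable φ := ⟨hφm, 1, hφ1⟩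
  have hH : BddMeasurable H := hh.integral_envKernel k _
  have hφu : BddMeasurable fun y => φ y * (u : ℂ) := hφ.mul (.const _)
  have hφh : BddMeasurable fun y => φ y * (h (y (i + k)) : ℂ) :=
    hφ.mul (hh.comp (measurable_pi_apply _)).ofReal
  have hφH : BddMeasurable fun y => φ y * (H (y i) : ℂ) :=
    hφ.mul (hH.comp (measurable_pi_apply _)).ofReal
  have hcond : ∫ y, φ y * ((u - h (y (i + k)) : ℝ) : ℂ) ∂κ
      = ∫ y, φ y * ((u - H (y i) : ℝ) : ℂ) ∂κ := by
    simp only [Complex.ofReal_sub, mul_sub]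
    rw [integral_sub hφu.integrable hφh.integrable, integral_sub hφu.integrable hφH.integrable]
    congr 1
    exact integral_mul_comp_eval_add hκ.hasTransition hφ hφi hh k
  have hosc : OscLE h (E (θ^[k] (θ^[i] ω))) c := fun x _ x' _ =>
    abs_sub_le_of_nonneg_of_le (h0 x) (hc x) (h0 x') (hc x')
  rw [hcond]
  refine (norm_integral_le_of_norm_le_const ?_).trans_eq (by rw [probReal_univ, mul_one])
  filter_upwards [hκ.ae_mem_fibre i] with y hy
  rw [norm_mul, Complex.norm_real]
  exact (mul_le_of_le_one_left (norm_nonneg _) (hφ1 y)).trans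
    (hκ.abs_integral_sub_le hE hq0 hq1 hM hh hc0 hosc hy)

end RegularChain

end Decorrelation

section MartingaleApproximation

variable {Ω 𝒳 : Type*}

/-- The sum `S_n^ω f` of the random observable `f` along the path `y`. -/
def orbitSum (θ : Ω → Ω) (f : Ω → 𝒳 → ℝ) (ω : Ω) (n : ℕ) (y : ℕ → 𝒳) : ℝ :=
  ∑ j ∈ Finset.range n, f (θ^[j] ω) (y j)

variable [MeasurableSpace 𝒳] {θ : Ω → Ω} {P : Ω → Kernel 𝒳 𝒳} {E : Ω → Set 𝒳} {f : Ω → 𝒳 → ℝ}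
  {F : Ω → ℝ} {A : Set Ω} {r : ℝ} {M : ℕ} {ω : Ω}

/-- In each environment `ω` the observable `f ω` is measurable and bounded by `F ω`. -/
structure IsDominated (f : Ω → 𝒳 → ℝ) (F : Ω → ℝ) : Prop where
  measurable : ∀ ω, Measurable (f ω)
  abs_le : ∀ ω x, |f ω x| ≤ F ω
  nonneg : ∀ ω, 0 ≤ F ω

lemma IsDominated.bddMeasurable (hf : IsDominated f F) (ω : Ω) : BddMeasurable (f ω) :=
  ⟨hf.measurable ω, F ω, hf.abs_le ω⟩

lemma IsDominated.bddMeasurable_orbitSum (hf : IsDominated f F) (ω : Ω) (n : ℕ) :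
    BddMeasurable (orbitSum θ f ω n) :=
  .sum fun j _ => (hf.bddMeasurable (θ^[j] ω)).comp (measurable_pi_apply j)

/-- The tail `∑_{k≥n} F(θ^k ω) r^{N_k(ω)}`, with `N_k` the number of visits to `A`, normalized so
that it bounds the oscillation of `g_m - g_n` over the fibre for all `m ≥ n`. -/
def tailBound (θ : Ω → Ω) (A : Set Ω) (F : Ω → ℝ) (r : ℝ) (M : ℕ) (ω : Ω) (n : ℕ) : ℝ :=
  2 * ((r ^ 2) ^ M)⁻¹ * ∑' k : ℕ, F (θ^[n + k] ω) * r ^ visitCount θ A ω (n + k)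

lemma weight_iterate_mul (θ : Ω → Ω) (A : Set Ω) (F : Ω → ℝ) (r : ℝ) (ω : Ω) (j k : ℕ) :
    F (θ^[k] (θ^[j] ω)) * r ^ visitCount θ A (θ^[j] ω) k * r ^ visitCount θ A ω j
      = F (θ^[j + k] ω) * r ^ visitCount θ A ω (j + k) := by
  rw [visitCount_add, pow_add, add_comm j k, Function.iterate_add_apply, mul_assoc,
    mul_comm (r ^ _)]

lemma tailBound_iterate_mul (θ : Ω → Ω) (A : Set Ω) (F : Ω → ℝ) (r : ℝ) (M : ℕ) (ω : Ω)
    (j n : ℕ) :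
    tailBound θ A F r M (θ^[j] ω) n * r ^ visitCount θ A ω j = tailBound θ A F r M ω (j + n) := by
  simp only [tailBound, mul_assoc, ← tsum_mul_right, add_assoc]
  simp only [← mul_assoc, weight_iterate_mul]

variable [MeasurableSpace Ω]

/-- The finite-horizon corrector `g_n(ω, x) = ∑_{k<n} (P_{ω,k} f_{θ^k ω})(x)`, the expected value
of the next `n` observations of the chain started at `x`. -/
def corrector (θ : Ω → Ω) (P : Ω → Kernel 𝒳 𝒳) (f : Ω → 𝒳 → ℝ) (n : ℕ) (ω : Ω) (x : 𝒳) : ℝ :=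
  ∑ k ∈ Finset.range n, ∫ z, f (θ^[k] ω) z ∂envKernel θ P k ω x

open Classical in
/-- The martingale difference `g_n(θω, z) - (P_ω g_n(θω, ·))(x)` of a step from `x` to `z` in the
environment `ω`, set to zero for steps that leave the fibres `E`, so that it is bounded. -/
def mgDiff (θ : Ω → Ω) (P : Ω → Kernel 𝒳 𝒳) (E : Ω → Set 𝒳) (f : Ω → 𝒳 → ℝ) (n : ℕ) (ω : Ω)
    (x z : 𝒳) : ℝ :=
  if x ∈ E ω ∧ z ∈ E (θ ω) then
    corrector θ P f n (θ ω) z - ∫ w, corrector θ P f n (θ ω) w ∂P ω x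
  else 0

/-- The conditional variance `∫ D_n(x, z)² P_ω(x, dz)` of the martingale difference `mgDiff`. -/
def mgVar (θ : Ω → Ω) (P : Ω → Kernel 𝒳 𝒳) (E : Ω → Set 𝒳) (f : Ω → 𝒳 → ℝ) (n : ℕ) (ω : Ω)
    (x : 𝒳) : ℝ :=
  ∫ z, mgDiff θ P E f n ω x z ^ 2 ∂P ω x

/-- The martingale differences of the decomposition of `S_n^ω f`: the step from time `j` to time
`j + 1` leaves the horizon `n - j - 1`. -/
def mgStep (θ : Ω → Ω) (P : Ω → Kernel 𝒳 𝒳) (E : Ω → Set 𝒳) (f : Ω → 𝒳 → ℝ) (n : ℕ) (ω : Ω)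
    (j : ℕ) : 𝒳 → 𝒳 → ℝ :=
  mgDiff θ P E f (n - j - 1) (θ^[j] ω)

/-- The environment `ω` is *tame* for the observable `f`: it is regular and `tailBound` is a
convergent series. The contraction rate is `r ^ 2` rather than `r` so that the square of
`tailBound (θ^[j] ω) n`, which may grow with `j` at the rate `(r ^ 2)⁻¹`, is still compensated. -/
structure TameEnv (θ : Ω → Ω) (P : Ω → Kernel 𝒳 𝒳) (E : Ω → Set 𝒳) (f : Ω → 𝒳 → ℝ) (F : Ω → ℝ)
    (A : Set Ω) (r : ℝ) (M : ℕ) (ω : Ω) : Prop where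
  dominated : IsDominated f F
  measurableSet_fibre : ∀ ω, MeasurableSet (E ω)
  rate_pos : 0 < r
  rate_lt_one : r < 1
  window_pos : 0 < M
  regular : RegularEnv θ P E A (r ^ 2) M ω
  summable : Summable fun k => F (θ^[k] ω) * r ^ visitCount θ A ω k

lemma mgDiff_zero (x z : 𝒳) : mgDiff θ P E f 0 ω x z = 0 := by
  simp [mgDiff, corrector]

lemma mgVar_nonneg (n : ℕ) (x : 𝒳) : 0 ≤ mgVar θ P E f n ω x :=
  integral_nonneg fun _ => sq_nonneg _

namespace TameEnv

lemma iterate (hω : TameEnv θ P E f F A r M ω) (j : ℕ) : TameEnv θ P E f F A r M (θ^[j] ω) where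
  dominated := hω.dominated
  measurableSet_fibre := hω.measurableSet_fibre
  rate_pos := hω.rate_pos
  rate_lt_one := hω.rate_lt_one
  window_pos := hω.window_pos
  regular := hω.regular.iterate j
  summable := by
    have hshift := (summable_nat_add_iff j).2 hω.summable
    simp only [add_comm _ j, ← weight_iterate_mul] at hshift
    exact (summable_mul_right_iff (pow_pos hω.rate_pos _).ne').1 hshift

lemma tailBound_nonneg (hω : TameEnv θ P E f F A r M ω) (n : ℕ) : 0 ≤ tailBound θ A F r M ω n :=
  mul_nonneg (by have := hω.rate_pos; positivity) <| tsum_nonneg fun _ =>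
    mul_nonneg (hω.dominated.nonneg _) (pow_nonneg hω.rate_pos.le _)

lemma sum_Ico_le_tailBound (hω : TameEnv θ P E f F A r M ω) (n m : ℕ) :
    ∑ k ∈ Finset.Ico n m,
      2 * ((r ^ 2) ^ M)⁻¹ * (F (θ^[k] ω) * r ^ visitCount θ A ω k)
      ≤ tailBound θ A F r M ω n := by
  have hsum := (summable_nat_add_iff n).2 hω.summable
  simp only [add_comm _ n] at hsum
  have := hω.rate_pos
  rw [← Finset.mul_sum, Finset.sum_Ico_eq_sum_range]
  exact mul_le_mul_of_nonneg_left (hsum.sum_le_tsum _ fun k _ =>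
    mul_nonneg (hω.dominated.nonneg _) (pow_nonneg hω.rate_pos.le _)) (by positivity)

end TameEnv

variable [∀ ω, IsMarkovKernel (P ω)]

namespace IsDominated

lemma bddMeasurable_corrector (hf : IsDominated f F) (n : ℕ) (ω : Ω) :
    BddMeasurable (corrector θ P f n ω) :=
  .sum fun k _ => (hf.bddMeasurable (θ^[k] ω)).integral_envKernel k ω

lemma corrector_succ (hf : IsDominated f F) (n : ℕ) (ω : Ω) (x : 𝒳) :
    corrector θ P f (n + 1) ω x = f ω x + ∫ z, corrector θ P f n (θ ω) z ∂P ω x := by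
  have hterm (k : ℕ) : BddMeasurable fun z =>
      ∫ w, f (θ^[k] (θ ω)) w ∂envKernel θ P k (θ ω) z :=
    (hf.bddMeasurable _).integral_envKernel k (θ ω)
  have hstep (k : ℕ) : ∫ z, f (θ^[k + 1] ω) z ∂envKernel θ P (k + 1) ω x
      = ∫ z, ∫ w, f (θ^[k] (θ ω)) w ∂envKernel θ P k (θ ω) z ∂P ω x := by
    rw [add_comm, integral_envKernel_add 1 k ω (hf.bddMeasurable _), envKernel_one,
      Function.iterate_one, add_comm, Function.iterate_succ_apply]
  simp only [corrector]
  rw [integral_finsetSum _ fun k _ => (hterm k).integrable, Finset.sum_range_succ', add_comm]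
  simp only [hstep]
  simp only [envKernel, Kernel.id_apply, Function.iterate_zero, id,
    integral_dirac' _ _ (hf.measurable ω).stronglyMeasurable]

lemma bddMeasurable_mgDiff (hf : IsDominated f F) (hE : ∀ ω, MeasurableSet (E ω)) (n : ℕ)
    (ω : Ω) : BddMeasurable (Function.uncurry (mgDiff θ P E f n ω)) := by
  have hg : BddMeasurable (corrector θ P f n (θ ω)) := hf.bddMeasurable_corrector n (θ ω)
  have hPg : BddMeasurable fun x => ∫ w, corrector θ P f n (θ ω) w ∂P ω x :=
    (hg.comp measurable_snd : BddMeasurable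
      (Function.uncurry fun _ : 𝒳 => corrector θ P f n (θ ω))).integral_kernel _
  obtain ⟨hm, C, hC⟩ := (hg.comp measurable_snd).sub (hPg.comp (measurable_fst (β := 𝒳)))
  refine ⟨Measurable.ite ((hE ω).prod (hE (θ ω))) hm measurable_const, C, fun q => ?_⟩
  rw [Function.uncurry, mgDiff]
  split_ifs
  · exact hC q
  · exact norm_zero.trans_le ((norm_nonneg _).trans (hC q))

lemma isMartDiff_mgStep (hf : IsDominated f F) (hE : ∀ ω, MeasurableSet (E ω))
    (hω : RegularEnv θ P E A (r ^ 2) M ω) (n : ℕ) :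
    IsMartDiff (fun j => P (θ^[j] ω)) (mgStep θ P E f n ω) where
  bddMeasurable j := hf.bddMeasurable_mgDiff hE _ _
  integral_eq_zero j x := by
    by_cases hx : x ∈ E (θ^[j] ω)
    · have hg := hf.bddMeasurable_corrector (θ := θ) (P := P) (n - j - 1) (θ (θ^[j] ω))
      have hstay := hω.ae_mem_fibre j x hx
      rw [Function.iterate_succ_apply'] at hstay
      have hae : mgStep θ P E f n ω j x =ᵐ[P (θ^[j] ω) x] _ :=
        hstay.mono fun z hz => if_pos ⟨hx, hz⟩
      rw [integral_congr_ae hae,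
        integral_sub hg.integrable (integrable_const _), integral_const, probReal_univ, one_smul,
        sub_self]
    · simp only [mgStep, mgDiff, hx, false_and, if_false, integral_zero]

/-- Since `g_{n-j}(θ^j ω, ·) = f_{θ^j ω} + P_{θ^j ω} g_{n-j-1}(θ^{j+1} ω, ·)`, the sum telescopes;
there is no boundary term at time `n` because `g_0 = 0`. -/
theorem orbitSum_eq_corrector_add_stepSum (hf : IsDominated f F) (n : ℕ) {y : ℕ → 𝒳}
    (hy : ∀ k, y k ∈ E (θ^[k] ω)) :
    orbitSum θ f ω n y
      = corrector θ P f n ω (y 0) + stepSum (mgStep θ P E f n ω) (Finset.range n) y := by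
  suffices key : ∀ i ≤ n, orbitSum θ f ω i y = corrector θ P f n ω (y 0)
      + stepSum (mgStep θ P E f n ω) (Finset.range i) y
      - corrector θ P f (n - i) (θ^[i] ω) (y i) by
    simpa [corrector] using key n le_rfl
  intro i hi
  induction i with
  | zero => simp [orbitSum, stepSum]
  | succ i ih =>
    obtain ⟨m, rfl⟩ := Nat.exists_eq_add_of_le hi
    have hstep : mgStep θ P E f (i + 1 + m) ω i (y i) (y (i + 1))
        = corrector θ P f m (θ^[i + 1] ω) (y (i + 1))
          - ∫ w, corrector θ P f m (θ^[i + 1] ω) w ∂P (θ^[i] ω) (y i) := by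
      have hnext := hy (i + 1)
      rw [Function.iterate_succ_apply'] at hnext ⊢
      rw [mgStep, mgDiff, if_pos ⟨hy i, hnext⟩, show i + 1 + m - i - 1 = m by omega]
    have hcorr := hf.corrector_succ (θ := θ) (P := P) m (θ^[i] ω) (y i)
    rw [← Function.iterate_succ_apply' θ] at hcorr
    rw [orbitSum, Finset.sum_range_succ, ← orbitSum, ih (by omega), Finset.range_add_one,
      stepSum_insert Finset.notMem_range_self, hstep, Nat.add_sub_cancel_left,
      show i + 1 + m - i = m + 1 by omega, hcorr]
    ring

end IsDominated

namespace TameEnv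

lemma bddMeasurable_mgVar (hω : TameEnv θ P E f F A r M ω) (n : ℕ) :
    BddMeasurable (mgVar θ P E f n ω) :=
  (hω.dominated.bddMeasurable_mgDiff hω.measurableSet_fibre n ω).sq.integral_kernel (P ω)

lemma oscLE_integral_envKernel (hω : TameEnv θ P E f F A r M ω) (k : ℕ) :
    OscLE (fun x => ∫ z, f (θ^[k] ω) z ∂envKernel θ P k ω x) (E ω)
      (2 * ((r ^ 2) ^ M)⁻¹ * (F (θ^[k] ω) * r ^ visitCount θ A ω k)) := by
  have hr0 := hω.rate_pos
  have hr1 := hω.rate_lt_one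
  have hF0 := hω.dominated.nonneg (θ^[k] ω)
  have hr2 : r ^ 2 ≤ r := by nlinarith
  have hosc : OscLE (f (θ^[k] ω)) (E (θ^[k] ω)) (2 * F (θ^[k] ω)) := fun x _ x' _ => by
    linarith [abs_sub (f (θ^[k] ω) x) (f (θ^[k] ω) x'), hω.dominated.abs_le (θ^[k] ω) x,
      hω.dominated.abs_le (θ^[k] ω) x']
  intro x hx x' hx'
  calc _ ≤ ((r ^ 2) ^ M)⁻¹ * (r ^ 2) ^ visitCount θ A ω k * (2 * F (θ^[k] ω)) :=
        hω.regular.oscLE_integral_contraction hω.measurableSet_fibre (by positivity)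
          (hr2.trans hr1.le) hω.window_pos (hω.dominated.bddMeasurable _) (by positivity) hosc
          x hx x' hx'
    _ ≤ ((r ^ 2) ^ M)⁻¹ * r ^ visitCount θ A ω k * (2 * F (θ^[k] ω)) := by gcongr
    _ = _ := by ring

lemma oscLE_corrector_sub (hω : TameEnv θ P E f F A r M ω) {n m : ℕ} (hnm : n ≤ m) :
    OscLE (fun x => corrector θ P f m ω x - corrector θ P f n ω x) (E ω)
      (tailBound θ A F r M ω n) := by
  intro x hx x' hx'
  simp only [corrector, ← Finset.sum_Ico_eq_sub _ hnm, ← Finset.sum_sub_distrib]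
  exact (Finset.abs_sum_le_sum_abs _ _).trans <| (Finset.sum_le_sum fun k _ =>
    hω.oscLE_integral_envKernel k x hx x' hx').trans (hω.sum_Ico_le_tailBound n m)

lemma abs_mgDiff_sub_le (hω : TameEnv θ P E f F A r M ω) {n m : ℕ} (hnm : n ≤ m) (x z : 𝒳) :
    |mgDiff θ P E f m ω x z - mgDiff θ P E f n ω x z| ≤ tailBound θ A F r M (θ ω) n := by
  by_cases hxz : x ∈ E ω ∧ z ∈ E (θ ω)
  · have hg (n : ℕ) := hω.dominated.bddMeasurable_corrector (θ := θ) (P := P) n (θ ω)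
    have hgg := (hg m).sub (hg n)
    set G : 𝒳 → ℝ := fun w => corrector θ P f m (θ ω) w - corrector θ P f n (θ ω) w
    have hmean : mgDiff θ P E f m ω x z - mgDiff θ P E f n ω x z = ∫ w, (G z - G w) ∂P ω x := by
      rw [integral_sub (integrable_const _) hgg.integrable, integral_const, probReal_univ,
        one_smul, integral_sub (hg m).integrable (hg n).integrable, mgDiff, mgDiff, if_pos hxz,
        if_pos hxz]
      ring
    rw [hmean]
    refine abs_integral_le_of_ae_abs_le ?_
    filter_upwards [hω.regular.ae_mem_fibre 0 x hxz.1] with w hw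
    exact (hω.iterate 1).oscLE_corrector_sub hnm z hxz.2 w hw
  · rw [mgDiff, mgDiff, if_neg hxz, if_neg hxz, sub_zero, abs_zero]
    exact (hω.iterate 1).tailBound_nonneg n

lemma abs_mgDiff_le (hω : TameEnv θ P E f F A r M ω) (n : ℕ) (x z : 𝒳) :
    |mgDiff θ P E f n ω x z| ≤ tailBound θ A F r M (θ ω) 0 := by
  simpa only [mgDiff_zero, sub_zero] using hω.abs_mgDiff_sub_le n.zero_le x z

lemma mgVar_le (hω : TameEnv θ P E f F A r M ω) (n : ℕ) (x : 𝒳) :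
    mgVar θ P E f n ω x ≤ tailBound θ A F r M (θ ω) 0 ^ 2 :=
  (le_abs_self _).trans <| abs_integral_le_of_abs_le fun z => by
    rw [abs_pow]; exact pow_le_pow_left₀ (abs_nonneg _) (hω.abs_mgDiff_le n x z) 2

lemma abs_mgVar_sub_le (hω : TameEnv θ P E f F A r M ω) {n m : ℕ} (hnm : n ≤ m) (x : 𝒳) :
    |mgVar θ P E f m ω x - mgVar θ P E f n ω x|
      ≤ 2 * tailBound θ A F r M (θ ω) 0 * tailBound θ A F r M (θ ω) n := by
  have hsq (n : ℕ) : BddMeasurable fun z => mgDiff θ P E f n ω x z ^ 2 :=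
    ((hω.dominated.bddMeasurable_mgDiff hω.measurableSet_fibre n ω).comp
      (measurable_prodMk_left (x := x))).sq
  rw [mgVar, mgVar, ← integral_sub (hsq m).integrable (hsq n).integrable]
  refine abs_integral_le_of_abs_le fun z => ?_
  have hsum : |mgDiff θ P E f m ω x z + mgDiff θ P E f n ω x z|
      ≤ 2 * tailBound θ A F r M (θ ω) 0 := by
    linarith [abs_add_le (mgDiff θ P E f m ω x z) (mgDiff θ P E f n ω x z),
      hω.abs_mgDiff_le m x z, hω.abs_mgDiff_le n x z]
  rw [sq_sub_sq, abs_mul]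
  exact mul_le_mul hsum (hω.abs_mgDiff_sub_le hnm x z) (abs_nonneg _)
    ((abs_nonneg _).trans hsum)

end TameEnv

end MartingaleApproximation

section VarianceDecomposition

variable {Ω 𝒳 : Type*} [MeasurableSpace 𝒳] {θ : Ω → Ω} {f : Ω → 𝒳 → ℝ} {ω : Ω}
  {κ : Measure (ℕ → 𝒳)}

/-- The centered sum `S_n^ω f - κ(S_n^ω f)` along the path `y`. -/
def centeredSum (θ : Ω → Ω) (f : Ω → 𝒳 → ℝ) (ω : Ω) (κ : Measure (ℕ → 𝒳)) (n : ℕ)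
    (y : ℕ → 𝒳) : ℝ :=
  orbitSum θ f ω n y - ∫ y', orbitSum θ f ω n y' ∂κ

variable [MeasurableSpace Ω] {P : Ω → Kernel 𝒳 𝒳} {E : Ω → Set 𝒳} {F : Ω → ℝ} {A : Set Ω} {r : ℝ}
  {M : ℕ}

/-- The variance of the `j`-th martingale difference in the decomposition of `S_n^ω f`, for a
chain with law `κ`. -/
def meanVar (θ : Ω → Ω) (P : Ω → Kernel 𝒳 𝒳) (E : Ω → Set 𝒳) (f : Ω → 𝒳 → ℝ) (ω : Ω)
    (κ : Measure (ℕ → 𝒳)) (n j : ℕ) : ℝ :=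
  ∫ y, mgVar θ P E f (n - j - 1) (θ^[j] ω) (y j) ∂κ

lemma meanVar_nonneg (n j : ℕ) : 0 ≤ meanVar θ P E f ω κ n j :=
  integral_nonneg fun _ => mgVar_nonneg _ _

variable [∀ ω, IsMarkovKernel (P ω)] [IsProbabilityMeasure κ]

namespace TameEnv

lemma mgVar_le_one_add_mul (hω : TameEnv θ P E f F A r M ω) {n m : ℕ} (hnm : n ≤ m) {η : ℝ}
    (hη : 0 < η) (x : 𝒳) :
    mgVar θ P E f n ω x
      ≤ (1 + η) * mgVar θ P E f m ω x + (1 + η⁻¹) * tailBound θ A F r M (θ ω) n ^ 2 := by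
  have hsq (n : ℕ) : BddMeasurable fun z => mgDiff θ P E f n ω x z ^ 2 :=
    ((hω.dominated.bddMeasurable_mgDiff hω.measurableSet_fibre n ω).comp
      (measurable_prodMk_left (x := x))).sq
  set τ := tailBound θ A F r M (θ ω) n
  have hint : Integrable (fun z => (1 + η) * mgDiff θ P E f m ω x z ^ 2) (P ω x) :=
    ((hsq m).const_mul _).integrable
  calc mgVar θ P E f n ω x
      ≤ ∫ z, ((1 + η) * mgDiff θ P E f m ω x z ^ 2 + (1 + η⁻¹) * τ ^ 2) ∂P ω x := by
        refine integral_mono (hsq n).integrable (hint.add (integrable_const _)) fun z => ?_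
        set a := mgDiff θ P E f n ω x z
        set b := mgDiff θ P E f m ω x z
        have hba : (b - a) ^ 2 ≤ τ ^ 2 :=
          sq_le_sq' (neg_le_of_abs_le (hω.abs_mgDiff_sub_le hnm x z))
            (le_of_abs_le (hω.abs_mgDiff_sub_le hnm x z))
        have hyoung : (1 + η) * b ^ 2 + (1 + η⁻¹) * (b - a) ^ 2 - a ^ 2
            = (η * b + (b - a)) ^ 2 / η := by
          field_simp
          ring
        calc a ^ 2 ≤ (1 + η) * b ^ 2 + (1 + η⁻¹) * (b - a) ^ 2 := by
              rw [← sub_nonneg, hyoung]; positivity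
          _ ≤ (1 + η) * b ^ 2 + (1 + η⁻¹) * τ ^ 2 := by gcongr
    _ = (1 + η) * mgVar θ P E f m ω x + (1 + η⁻¹) * τ ^ 2 := by
        rw [integral_add hint (integrable_const _), integral_const_mul, integral_const,
          probReal_univ, one_smul, mgVar]

lemma variance_corrector_le (hω : TameEnv θ P E f F A r M ω)
    (hκ : ∀ᵐ y ∂κ, y 0 ∈ E ω) (n : ℕ) :
    Var[fun y => corrector θ P f n ω (y 0); κ] ≤ tailBound θ A F r M ω 0 ^ 2 := by
  have hg : BddMeasurable fun y : ℕ → 𝒳 => corrector θ P f n ω (y 0) :=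
    (hω.dominated.bddMeasurable_corrector n ω).comp (measurable_pi_apply 0)
  rw [variance_eq_integral hg.measurable.aemeasurable]
  refine (le_abs_self _).trans (abs_integral_le_of_ae_abs_le ?_)
  filter_upwards [hκ] with y hy
  have hmean : corrector θ P f n ω (y 0) - ∫ y', corrector θ P f n ω (y' 0) ∂κ
      = ∫ y', (corrector θ P f n ω (y 0) - corrector θ P f n ω (y' 0)) ∂κ := by
    rw [integral_sub (integrable_const _) hg.integrable, integral_const, probReal_univ, one_smul]
  rw [abs_pow, hmean]
  refine pow_le_pow_left₀ (abs_nonneg _) (abs_integral_le_of_ae_abs_le ?_) 2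
  filter_upwards [hκ] with y' hy'
  simpa [corrector] using hω.oscLE_corrector_sub n.zero_le _ hy _ hy'

end TameEnv

namespace RegularChain

lemma centeredSum_ae_eq (hf : IsDominated f F) (hE : ∀ ω, MeasurableSet (E ω))
    (hκ : RegularChain θ P E A (r ^ 2) M ω κ) (n : ℕ) :
    ∀ᵐ y ∂κ, centeredSum θ f ω κ n y
      = corrector θ P f n ω (y 0) - ∫ y', corrector θ P f n ω (y' 0) ∂κ
        + stepSum (mgStep θ P E f n ω) (Finset.range n) y := by
  have hξ := hf.isMartDiff_mgStep hE hκ.env n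
  have hg : BddMeasurable fun y : ℕ → 𝒳 => corrector θ P f n ω (y 0) :=
    (hf.bddMeasurable_corrector n ω).comp (measurable_pi_apply 0)
  have hdecomp : ∀ᵐ y ∂κ, orbitSum θ f ω n y
      = corrector θ P f n ω (y 0) + stepSum (mgStep θ P E f n ω) (Finset.range n) y :=
    (ae_all_iff.2 hκ.ae_mem_fibre).mono fun y hy => hf.orbitSum_eq_corrector_add_stepSum n hy
  have hmean : ∫ y, orbitSum θ f ω n y ∂κ = ∫ y, corrector θ P f n ω (y 0) ∂κ := by
    rw [integral_congr_ae hdecomp, integral_add hg.integrable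
      (hξ.bddMeasurable_stepSum _).integrable, hξ.integral_stepSum fun j _ => hκ.hasTransition j,
      add_zero]
  filter_upwards [hdecomp] with y hy
  rw [centeredSum, hmean, hy]
  ring

lemma integral_centeredSum_sub_stepSum_sq (hf : IsDominated f F)
    (hE : ∀ ω, MeasurableSet (E ω)) (hκ : RegularChain θ P E A (r ^ 2) M ω κ) (n : ℕ)
    {J : Finset ℕ} (hJ : J ⊆ Finset.range n) :
    ∫ y, (centeredSum θ f ω κ n y - stepSum (mgStep θ P E f n ω) J y) ^ 2 ∂κ
      = Var[fun y => corrector θ P f n ω (y 0); κ]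
        + ∑ j ∈ Finset.range n \ J, meanVar θ P E f ω κ n j := by
  set m₀ := ∫ y, corrector θ P f n ω (y 0) ∂κ
  have hg : BddMeasurable fun y : ℕ → 𝒳 => corrector θ P f n ω (y 0) :=
    (hf.bddMeasurable_corrector n ω).comp (measurable_pi_apply 0)
  have hdep : DependsOn (fun y : ℕ → 𝒳 => corrector θ P f n ω (y 0) - m₀) (Set.Iic 0) :=
    fun y y' h => by simp only [h 0 (Set.mem_Iic.2 le_rfl)]
  calc _ = ∫ y, (corrector θ P f n ω (y 0) - m₀
          + stepSum (mgStep θ P E f n ω) (Finset.range n \ J) y) ^ 2 ∂κ := by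
        refine integral_congr_ae ((hκ.centeredSum_ae_eq hf hE n).mono fun y hy => ?_)
        simp only [hy, stepSum, ← Finset.sum_sdiff hJ]
        ring
    _ = _ := by
        rw [(hf.isMartDiff_mgStep hE hκ.env n).integral_add_stepSum_sq
          (fun j _ => hκ.hasTransition j) (fun j _ => j.zero_le) (hg.sub (.const m₀)) hdep,
          variance_eq_integral hg.measurable.aemeasurable]
        rfl

end RegularChain

end VarianceDecomposition

section VarianceDensity

variable {Ω 𝒳 : Type*} [MeasurableSpace Ω] [MeasurableSpace 𝒳] {θ : Ω ≃ᵐ Ω}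
  {P : Ω → Kernel 𝒳 𝒳} {E : Ω → Set 𝒳} {f : Ω → 𝒳 → ℝ} {F : Ω → ℝ} {A : Set Ω} {r : ℝ} {M : ℕ}
  {ω : Ω} {κ : Ω → Measure (ℕ → 𝒳)}

/-- The variance of the martingale difference at the environment `ω` with horizon `n`, for the
chain that was started `l` steps before. -/
def pastVar (θ : Ω ≃ᵐ Ω) (P : Ω → Kernel 𝒳 𝒳) (E : Ω → Set 𝒳) (f : Ω → 𝒳 → ℝ)
    (κ : Ω → Measure (ℕ → 𝒳)) (l n : ℕ) (ω : Ω) : ℝ :=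
  ∫ y, mgVar θ P E f n ω (y l) ∂κ (θ.symm^[l] ω)

/-- The variance density: the variance of the martingale difference at `ω` for the chain started
in the remote past with an infinite horizon. The asymptotic variance is its integral. -/
def varDensity (θ : Ω ≃ᵐ Ω) (P : Ω → Kernel 𝒳 𝒳) (E : Ω → Set 𝒳) (f : Ω → 𝒳 → ℝ)
    (κ : Ω → Measure (ℕ → 𝒳)) (ω : Ω) : ℝ :=
  limsup (fun l => pastVar θ P E f κ l l ω) atTop

/-- The environment `ω` is tame and `κ` gives regular chains from each environment in its past. -/
structure TameChain (θ : Ω ≃ᵐ Ω) (P : Ω → Kernel 𝒳 𝒳) (E : Ω → Set 𝒳) (f : Ω → 𝒳 → ℝ)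
    (F : Ω → ℝ) (A : Set Ω) (r : ℝ) (M : ℕ) (κ : Ω → Measure (ℕ → 𝒳)) (ω : Ω) : Prop where
  env : TameEnv θ P E f F A r M ω
  chain : ∀ l, RegularChain θ P E A (r ^ 2) M (θ.symm^[l] ω) (κ (θ.symm^[l] ω))

lemma iterate_symm_iterate_apply (θ : Ω ≃ᵐ Ω) (l : ℕ) (ω : Ω) : θ^[l] (θ.symm^[l] ω) = ω :=
  Function.LeftInverse.iterate θ.apply_symm_apply l ω

lemma symm_iterate_iterate_apply (θ : Ω ≃ᵐ Ω) (l : ℕ) (ω : Ω) : θ.symm^[l] (θ^[l] ω) = ω :=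
  Function.LeftInverse.iterate θ.symm_apply_apply l ω

lemma pastVar_nonneg (l n : ℕ) : 0 ≤ pastVar θ P E f κ l n ω :=
  integral_nonneg fun _ => mgVar_nonneg _ _

lemma isCoboundedUnder_pastVar :
    IsCoboundedUnder (· ≤ ·) atTop fun l => pastVar θ P E f κ l l ω :=
  IsBoundedUnder.isCoboundedUnder_le
    ⟨0, eventually_map.2 (Eventually.of_forall fun _ => pastVar_nonneg _ _)⟩

lemma meanVar_eq_pastVar (n j : ℕ) :
    meanVar θ P E f ω (κ ω) n j = pastVar θ P E f κ j (n - j - 1) (θ^[j] ω) := by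
  rw [pastVar, symm_iterate_iterate_apply, meanVar]

lemma TameEnv.rate_pow_visitCount_mul_sq_le (hω : TameEnv θ P E f F A r M ω) (j : ℕ) :
    ((r ^ 2) ^ M)⁻¹ * (r ^ 2) ^ visitCount θ A ω j * tailBound θ A F r M (θ (θ^[j] ω)) 0 ^ 2
      ≤ ((r ^ 2) ^ (M + 1))⁻¹ * tailBound θ A F r M ω (j + 1) ^ 2 := by
  have hr0 := hω.rate_pos
  have hvisit : visitCount θ A ω (j + 1) ≤ visitCount θ A ω j + 1 := by
    rw [visitCount_add]
    gcongr
    exact visitCount_le θ A (θ^[j] ω) 1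
  have hshift := tailBound_iterate_mul θ A F r M ω (j + 1) 0
  rw [add_zero, Function.iterate_succ_apply'] at hshift
  rw [← hshift]
  set τ := tailBound θ A F r M (θ (θ^[j] ω)) 0
  calc ((r ^ 2) ^ M)⁻¹ * (r ^ 2) ^ visitCount θ A ω j * τ ^ 2
      = ((r ^ 2) ^ (M + 1))⁻¹ * (r ^ 2) ^ (visitCount θ A ω j + 1) * τ ^ 2 := by
        rw [pow_succ (r ^ 2) M, pow_succ (r ^ 2) (visitCount θ A ω j)]
        field_simp
    _ ≤ ((r ^ 2) ^ (M + 1))⁻¹ * (r ^ 2) ^ visitCount θ A ω (j + 1) * τ ^ 2 := by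
        have hr1 := pow_le_one₀ hr0.le hω.rate_lt_one.le (n := 2)
        gcongr ?_ * ?_ * ?_
        exact pow_le_pow_of_le_one (by positivity) hr1 hvisit
    _ = _ := by rw [mul_pow, ← pow_mul, ← pow_mul, mul_comm 2]; ring

variable [∀ ω, IsMarkovKernel (P ω)] [∀ ω, IsProbabilityMeasure (κ ω)]

namespace TameEnv

lemma bddMeasurable_mgVar_eval (hω : TameEnv θ P E f F A r M ω) (l n : ℕ) :
    BddMeasurable fun y : ℕ → 𝒳 => mgVar θ P E f n ω (y l) :=
  (hω.bddMeasurable_mgVar n).comp (measurable_pi_apply l)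

lemma pastVar_le (hω : TameEnv θ P E f F A r M ω) (l n : ℕ) :
    pastVar θ P E f κ l n ω ≤ tailBound θ A F r M (θ ω) 0 ^ 2 :=
  (le_abs_self _).trans <| abs_integral_le_of_abs_le fun _ =>
    (abs_of_nonneg (mgVar_nonneg _ _)).trans_le (hω.mgVar_le n _)

lemma pastVar_sub_le (hω : TameEnv θ P E f F A r M ω) (l : ℕ) {n m : ℕ} (hnm : n ≤ m) :
    pastVar θ P E f κ l m ω - pastVar θ P E f κ l n ω
      ≤ 2 * tailBound θ A F r M (θ ω) 0 * tailBound θ A F r M (θ ω) n := by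
  rw [pastVar, pastVar, ← integral_sub (hω.bddMeasurable_mgVar_eval l m).integrable
    (hω.bddMeasurable_mgVar_eval l n).integrable]
  exact (le_abs_self _).trans <| abs_integral_le_of_abs_le fun y => hω.abs_mgVar_sub_le hnm (y l)

lemma pastVar_le_one_add_mul (hω : TameEnv θ P E f F A r M ω) (l : ℕ) {n m : ℕ} (hnm : n ≤ m)
    {η : ℝ} (hη : 0 < η) :
    pastVar θ P E f κ l n ω ≤ (1 + η) * pastVar θ P E f κ l m ω
      + (1 + η⁻¹) * tailBound θ A F r M (θ ω) n ^ 2 := by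
  have hint : Integrable (fun y : ℕ → 𝒳 => (1 + η) * mgVar θ P E f m ω (y l))
    (κ (θ.symm^[l] ω)) := ((hω.bddMeasurable_mgVar_eval l m).const_mul _).integrable
  calc _ ≤ ∫ y, ((1 + η) * mgVar θ P E f m ω (y l)
          + (1 + η⁻¹) * tailBound θ A F r M (θ ω) n ^ 2) ∂κ (θ.symm^[l] ω) :=
        integral_mono (hω.bddMeasurable_mgVar_eval l n).integrable
          (hint.add (integrable_const _)) fun y => hω.mgVar_le_one_add_mul hnm hη (y l)
    _ = _ := by
        rw [integral_add hint (integrable_const _), integral_const_mul, integral_const,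
          probReal_univ, one_smul, pastVar]

lemma varDensity_nonneg (hω : TameEnv θ P E f F A r M ω) : 0 ≤ varDensity θ P E f κ ω :=
  le_limsup_of_frequently_le (Frequently.of_forall fun _ => pastVar_nonneg _ _)
    ⟨_, eventually_map.2 (Eventually.of_forall fun l => hω.pastVar_le l l)⟩

lemma varDensity_le (hω : TameEnv θ P E f F A r M ω) :
    varDensity θ P E f κ ω ≤ tailBound θ A F r M (θ ω) 0 ^ 2 :=
  limsup_le_of_le isCoboundedUnder_pastVar (Eventually.of_forall fun l => hω.pastVar_le l l)

end TameEnv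

namespace TameChain

lemma abs_pastVar_sub_le (h : TameChain θ P E f F A r M κ ω) (i j n : ℕ) :
    |pastVar θ P E f κ (i + j) n (θ^[j] ω) - pastVar θ P E f κ j n (θ^[j] ω)|
      ≤ ((r ^ 2) ^ (M + 1))⁻¹ * tailBound θ A F r M ω (j + 1) ^ 2 := by
  have hωj := h.env.iterate j
  have hr1 : r ^ 2 ≤ 1 := pow_le_one₀ h.env.rate_pos.le h.env.rate_lt_one.le
  have hosc : OscLE (mgVar θ P E f n (θ^[j] ω)) (E (θ^[j] ω))
      (tailBound θ A F r M (θ (θ^[j] ω)) 0 ^ 2) := fun x _ x' _ =>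
    abs_sub_le_of_nonneg_of_le (mgVar_nonneg _ _) (hωj.mgVar_le n x) (mgVar_nonneg _ _)
      (hωj.mgVar_le n x')
  have hclose := (h.chain i).abs_integral_sub_integral_le h.env.measurableSet_fibre (h.chain 0)
    (pow_pos h.env.rate_pos 2) hr1 h.env.window_pos (hωj.bddMeasurable_mgVar n) (sq_nonneg _)
    (k := j) (i' := 0) (iterate_symm_iterate_apply θ i ω)
    (by simpa only [iterate_symm_iterate_apply] using hosc)
  rw [iterate_symm_iterate_apply, zero_add] at hclose
  rw [pastVar, pastVar, Function.iterate_add_apply, symm_iterate_iterate_apply]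
  exact hclose.trans (h.env.rate_pow_visitCount_mul_sq_le j)

lemma varDensity_iterate_le (h : TameChain θ P E f F A r M κ ω) (j n : ℕ) :
    varDensity θ P E f κ (θ^[j] ω) ≤ meanVar θ P E f ω (κ ω) n j
      + ((r ^ 2) ^ (M + 1))⁻¹ * tailBound θ A F r M ω (j + 1) ^ 2
      + 2 * tailBound θ A F r M (θ^[j + 1] ω) 0
        * tailBound θ A F r M (θ^[j + 1] ω) (n - j - 1) := by
  rw [meanVar_eq_pastVar]
  refine limsup_le_of_le isCoboundedUnder_pastVar ?_
  filter_upwards [eventually_ge_atTop (j + (n - j - 1))] with l hl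
  obtain ⟨i, rfl⟩ := Nat.exists_eq_add_of_le' ((Nat.le_add_right j _).trans hl)
  have hhorizon := (h.env.iterate j).pastVar_sub_le (κ := κ) (i + j)
    (show n - j - 1 ≤ i + j by omega)
  rw [← Function.iterate_succ_apply' θ] at hhorizon
  linarith [le_of_abs_le (h.abs_pastVar_sub_le i j (n - j - 1))]

lemma meanVar_le (h : TameChain θ P E f F A r M κ ω) (j n : ℕ) {η : ℝ} (hη : 0 < η) :
    meanVar θ P E f ω (κ ω) n j ≤ (1 + η) * (varDensity θ P E f κ (θ^[j] ω)
        + ((r ^ 2) ^ (M + 1))⁻¹ * tailBound θ A F r M ω (j + 1) ^ 2)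
      + (1 + η⁻¹) * tailBound θ A F r M (θ^[j + 1] ω) (n - j - 1) ^ 2 := by
  have hωj := h.env.iterate j
  set X := ((r ^ 2) ^ (M + 1))⁻¹ * tailBound θ A F r M ω (j + 1) ^ 2
  set Y := (1 + η⁻¹) * tailBound θ A F r M (θ^[j + 1] ω) (n - j - 1) ^ 2 with hY
  suffices key : (meanVar θ P E f ω (κ ω) n j - Y) / (1 + η) - X
      ≤ varDensity θ P E f κ (θ^[j] ω) by
    rw [sub_le_iff_le_add, div_le_iff₀ (by positivity)] at key
    linarith
  refine le_limsup_of_frequently_le (Eventually.frequently ?_)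
    ⟨_, eventually_map.2 (Eventually.of_forall fun l => hωj.pastVar_le l l)⟩
  filter_upwards [eventually_ge_atTop (j + (n - j - 1))] with l hl
  obtain ⟨i, rfl⟩ := Nat.exists_eq_add_of_le' ((Nat.le_add_right j _).trans hl)
  have hhorizon := hωj.pastVar_le_one_add_mul (κ := κ) j (show n - j - 1 ≤ i + j by omega) hη
  rw [← Function.iterate_succ_apply' θ, ← hY, ← meanVar_eq_pastVar, ← sub_le_iff_le_add,
    ← div_le_iff₀' (by positivity)] at hhorizon
  linarith [neg_le_of_abs_le (h.abs_pastVar_sub_le i j (i + j))]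

end TameChain

end VarianceDensity

section TypicalEnvironments

lemma tendsto_floor_div {g : ℕ → ℝ} {L s : ℝ}
    (hg : Tendsto (fun n : ℕ => g n / n) atTop (𝓝 L)) (hs : 0 < s) :
    Tendsto (fun n : ℕ => g ⌊s * n⌋₊ / n) atTop (𝓝 (L * s)) := by
  have hfloor : Tendsto (fun n : ℕ => ⌊s * n⌋₊) atTop atTop :=
    tendsto_nat_floor_atTop.comp (tendsto_natCast_atTop_atTop.const_mul_atTop hs)
  have hratio : Tendsto (fun n : ℕ => (⌊s * n⌋₊ : ℝ) / n) atTop (𝓝 s) :=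
    (tendsto_nat_floor_mul_div_atTop hs.le).comp tendsto_natCast_atTop_atTop
  refine ((hg.comp hfloor).mul hratio).congr' ?_
  filter_upwards [hfloor.eventually_gt_atTop 0] with n hn
  exact div_mul_div_cancel₀ (by positivity)

lemma floor_one_sub_mul_le {ε : ℝ} (hε : 0 < ε) (n : ℕ) : ⌊(1 - ε) * n⌋₊ ≤ n :=
  Nat.floor_le_of_le (by nlinarith [n.cast_nonneg (α := ℝ)])

lemma tendsto_average_zero {g : ℕ → ℝ} (hg : Tendsto g atTop (𝓝 0)) :
    Tendsto (fun n : ℕ => (∑ j ∈ Finset.range n, g j) / n) atTop (𝓝 0) :=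
  hg.cesaro.congr fun _ => (div_eq_inv_mul _ _).symm

lemma tendsto_average_zero_of_forall_le {a : ℕ → ℕ → ℝ} (h0 : ∀ n j, 0 ≤ a n j)
    (h1 : ∀ n j, a n j ≤ 1)
    (h : ∀ ε : ℝ, 0 < ε → ε < 1 → ∃ u : ℕ → ℝ, Tendsto u atTop (𝓝 0) ∧
      ∀ᶠ n : ℕ in atTop, ∀ j : ℕ, ((j + 1 : ℕ) : ℝ) ≤ (1 - ε) * n → a n j ≤ u n) :
    Tendsto (fun n : ℕ => (∑ j ∈ Finset.range n, a n j) / n) atTop (𝓝 0) := by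
  refine tendsto_order.2 ⟨fun b hb => .of_forall fun n => hb.trans_le <|
    div_nonneg (Finset.sum_nonneg fun j _ => h0 n j) n.cast_nonneg, fun b hb => ?_⟩
  obtain ⟨ε, hε, hεb⟩ := exists_between (lt_min hb one_pos)
  have hε1 : ε < 1 := hεb.trans_le (min_le_right _ _)
  obtain ⟨u, hu, hau⟩ := h ε hε hε1
  have hfloor := (tendsto_nat_floor_mul_div_atTop (sub_nonneg.2 hε1.le)).comp
    tendsto_natCast_atTop_atTop
  have hlim := (hu.abs).add (hfloor.const_sub 1)
  simp only [abs_zero, sub_sub_cancel, zero_add] at hlim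
  filter_upwards [hau, eventually_gt_atTop 0,
    hlim.eventually_lt_const (hεb.trans_le (min_le_left _ _))] with n hn hn0 hb
  refine lt_of_le_of_lt ?_ hb
  have hm := floor_one_sub_mul_le hε n
  set m := ⌊(1 - ε) * n⌋₊
  have hhead : ∑ j ∈ Finset.range m, a n j ≤ n * |u n| := by
    have hterm (j) (hj : j ∈ Finset.range m) : a n j ≤ |u n| :=
      (hn j ((Nat.le_floor_iff' j.succ_ne_zero).1 (Finset.mem_range.1 hj))).trans (le_abs_self _)
    refine (Finset.sum_le_card_nsmul _ _ _ hterm).trans ?_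
    rw [Finset.card_range, nsmul_eq_mul]
    gcongr
  have htail : ∑ j ∈ Finset.Ico m n, a n j ≤ n - m := by
    refine (Finset.sum_le_card_nsmul _ _ _ fun j _ => h1 n j).trans ?_
    rw [Nat.card_Ico, nsmul_eq_mul, mul_one, Nat.cast_sub hm]
  rw [← Finset.sum_range_add_sum_Ico _ hm, Function.comp_apply, div_le_iff₀ (by positivity),
    add_mul, sub_mul, div_mul_cancel₀ _ (by positivity : (n : ℝ) ≠ 0)]
  linarith

variable {Ω : Type*} {θ : Ω → Ω} {A : Set Ω} {F : Ω → ℝ} {r p : ℝ} {M : ℕ} {ω : Ω}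

lemma monotone_visitCount (θ : Ω → Ω) (A : Set Ω) (ω : Ω) : Monotone (visitCount θ A ω) :=
  monotone_nat_of_le_succ fun k => by rw [visitCount_add]; exact Nat.le_add_right _ _

lemma tendsto_tailBound (θ : Ω → Ω) (A : Set Ω) (F : Ω → ℝ) (r : ℝ) (M : ℕ) (ω : Ω) :
    Tendsto (tailBound θ A F r M ω) atTop (𝓝 0) := by
  have htail := (tendsto_sum_nat_add fun k => F (θ^[k] ω) * r ^ visitCount θ A ω k).const_mul
    (2 * ((r ^ 2) ^ M)⁻¹)
  rw [mul_zero] at htail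
  exact htail.congr fun n => by simp only [tailBound, add_comm]

/-- The orbit of `ω` visits `A` with frequency `p`, and `F` grows at most linearly along it. -/
structure TypicalOrbit (θ : Ω → Ω) (A : Set Ω) (F : Ω → ℝ) (p : ℝ) (ω : Ω) : Prop where
  tendsto_visitCount : Tendsto (fun n : ℕ => (visitCount θ A ω n : ℝ) / n) atTop (𝓝 p)
  exists_le : ∃ C : ℝ, ∀ k : ℕ, F (θ^[k] ω) ≤ C * (k + 1)

namespace TypicalOrbit

lemma exists_mul_le_visitCount (h : TypicalOrbit θ A F p ω) (hp : 0 < p) {ε : ℝ} (hε : 0 < ε)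
    (hε1 : ε < 1) :
    ∃ c : ℝ, 0 < c ∧ ∀ᶠ k : ℕ in atTop, ∀ m : ℕ, (m : ℝ) ≤ (1 - ε) * k →
      c * k ≤ visitCount θ A (θ^[m] ω) (k - m) := by
  have hgap := h.tendsto_visitCount.sub (tendsto_floor_div h.tendsto_visitCount (sub_pos.2 hε1))
  have hlt : p * ε / 2 < p - p * (1 - ε) := by linarith [mul_pos hp hε]
  refine ⟨p * ε / 2, by positivity, ?_⟩
  filter_upwards [hgap.eventually_const_lt hlt, eventually_gt_atTop 0] with k hk hk0 m hm
  have hmfloor : m ≤ ⌊(1 - ε) * k⌋₊ := Nat.le_floor hm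
  have hmk : m ≤ k := hmfloor.trans (floor_one_sub_mul_le hε k)
  have hsplit := visitCount_add θ A ω m (k - m)
  rw [Nat.add_sub_cancel' hmk] at hsplit
  have hmono := monotone_visitCount θ A ω hmfloor
  rw [← sub_div, lt_div_iff₀ (by positivity), hsplit] at hk
  push_cast at hk
  have hmono' : (visitCount θ A ω m : ℝ) ≤ visitCount θ A ω ⌊(1 - ε) * k⌋₊ := by
    exact_mod_cast hmono
  linarith

lemma exists_pow_visitCount_le (h : TypicalOrbit θ A F p ω) (hp : 0 < p) (hr0 : 0 < r)
    (hr1 : r < 1) {ε : ℝ} (hε : 0 < ε) (hε1 : ε < 1) :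
    ∃ ρ : ℝ, 0 ≤ ρ ∧ ρ < 1 ∧ ∀ᶠ k : ℕ in atTop, ∀ m : ℕ, (m : ℝ) ≤ (1 - ε) * k →
      r ^ visitCount θ A (θ^[m] ω) (k - m) ≤ ρ ^ k := by
  obtain ⟨c, hc, hvisit⟩ := h.exists_mul_le_visitCount hp hε hε1
  refine ⟨r ^ c, Real.rpow_nonneg hr0.le c, Real.rpow_lt_one hr0.le hr1 hc, ?_⟩
  filter_upwards [hvisit] with k hk m hm
  rw [← Real.rpow_natCast, ← Real.rpow_natCast, ← Real.rpow_mul hr0.le]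
  exact Real.rpow_le_rpow_of_exponent_ge hr0 hr1.le (hk m hm)

lemma exists_summable_weight_le (h : TypicalOrbit θ A F p ω) (hp : 0 < p) (hr0 : 0 < r)
    (hr1 : r < 1) {ε : ℝ} (hε : 0 < ε) (hε1 : ε < 1) :
    ∃ u : ℕ → ℝ, Summable u ∧ ∀ᶠ k : ℕ in atTop, ∀ m : ℕ, (m : ℝ) ≤ (1 - ε) * k →
      F (θ^[k] ω) * r ^ visitCount θ A (θ^[m] ω) (k - m) ≤ u k := by
  obtain ⟨ρ, hρ0, hρ1, hρ⟩ := h.exists_pow_visitCount_le hp hr0 hr1 hε hε1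
  obtain ⟨C, hC⟩ := h.exists_le
  refine ⟨fun k => |C| * (k * ρ ^ k + ρ ^ k), ?_, ?_⟩
  · have hlin : Summable fun k : ℕ => (k : ℝ) ^ 1 * ρ ^ k :=
      summable_pow_mul_geometric_of_norm_lt_one 1 (by rwa [Real.norm_of_nonneg hρ0])
    simp only [pow_one] at hlin
    exact (hlin.add (summable_geometric_of_lt_one hρ0 hρ1)).mul_left _
  · filter_upwards [hρ] with k hk m hm
    calc F (θ^[k] ω) * r ^ visitCount θ A (θ^[m] ω) (k - m)
        ≤ |C| * (k + 1) * ρ ^ k := by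
          gcongr
          · exact (hC k).trans (by gcongr; exact le_abs_self C)
          · exact hk m hm
      _ = |C| * (k * ρ ^ k + ρ ^ k) := by ring

lemma summable (h : TypicalOrbit θ A F p ω) (hp : 0 < p) (hF : ∀ ω, 0 ≤ F ω) (hr0 : 0 < r)
    (hr1 : r < 1) : Summable fun k => F (θ^[k] ω) * r ^ visitCount θ A ω k := by
  obtain ⟨u, hu, hle⟩ := h.exists_summable_weight_le hp hr0 hr1 one_half_pos one_half_lt_one
  refine Summable.of_norm_bounded_eventually_nat hu ?_
  filter_upwards [hle] with k hk
  rw [Real.norm_of_nonneg (mul_nonneg (hF _) (by positivity))]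
  simpa only [Nat.sub_zero, Function.iterate_zero, id] using hk 0 (by push_cast; positivity)

lemma exists_tailBound_le (h : TypicalOrbit θ A F p ω) (hp : 0 < p) (hF : ∀ ω, 0 ≤ F ω)
    (hr0 : 0 < r) (hr1 : r < 1) {ε : ℝ} (hε : 0 < ε) (hε1 : ε < 1) :
    ∃ T : ℕ → ℝ, Tendsto T atTop (𝓝 0) ∧ ∀ᶠ n : ℕ in atTop, ∀ m : ℕ,
      (m : ℝ) ≤ (1 - ε) * n → tailBound θ A F r M (θ^[m] ω) (n - m) ≤ T n := by
  obtain ⟨u, hu, hle⟩ := h.exists_summable_weight_le hp hr0 hr1 hε hε1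
  obtain ⟨N, hN⟩ := eventually_atTop.1 hle
  have hlim := (tendsto_sum_nat_add u).const_mul (2 * ((r ^ 2) ^ M)⁻¹)
  rw [mul_zero] at hlim
  refine ⟨_, hlim, ?_⟩
  filter_upwards [eventually_ge_atTop N] with n hn m hm
  have hmn : m ≤ n := (Nat.le_floor hm).trans (floor_one_sub_mul_le hε n)
  have hterm (k : ℕ) : F (θ^[n - m + k] (θ^[m] ω)) * r ^ visitCount θ A (θ^[m] ω) (n - m + k)
      ≤ u (k + n) := by
    have hk := hN (k + n) (by omega) m
      (hm.trans <| mul_le_mul_of_nonneg_left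
      (by exact_mod_cast Nat.le_add_left n k) (sub_nonneg.2 hε1.le))
    rwa [show θ^[k + n] ω = θ^[n - m + k] (θ^[m] ω) by
      rw [← Function.iterate_add_apply, add_right_comm, Nat.sub_add_cancel hmn, add_comm],
      show k + n - m = n - m + k by omega] at hk
  have hun : Summable fun k => u (k + n) := (summable_nat_add_iff n).2 hu
  have hsum := Summable.of_nonneg_of_le (fun k => mul_nonneg (hF _) (by positivity)) hterm hun
  exact mul_le_mul_of_nonneg_left (hsum.tsum_le_tsum hterm hun) (by positivity)

lemma tendsto_average_pow_visitCount (h : TypicalOrbit θ A F p ω) (hp : 0 < p) (hr0 : 0 < r)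
    (hr1 : r < 1) :
    Tendsto (fun n : ℕ => (∑ j ∈ Finset.range n, r ^ visitCount θ A (θ^[j + 1] ω) (n - j - 1)) / n)
      atTop (𝓝 0) := by
  refine tendsto_average_zero_of_forall_le (fun _ _ => by positivity)
    (fun _ _ => pow_le_one₀ hr0.le hr1.le) fun ε hε hε1 => ?_
  obtain ⟨ρ, hρ0, hρ1, hρ⟩ := h.exists_pow_visitCount_le hp hr0 hr1 hε hε1
  refine ⟨fun n => ρ ^ n, tendsto_pow_atTop_nhds_zero_of_lt_one hρ0 hρ1, ?_⟩
  filter_upwards [hρ] with n hn j hj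
  simpa only [Nat.sub_sub] using hn (j + 1) hj

end TypicalOrbit

lemma birkhoffSum_indicator_comp (θ : Ω → Ω) (A : Set Ω) (ω : Ω) (n : ℕ) :
    birkhoffSum θ (fun ω => A.indicator (fun _ => (1 : ℝ)) (θ ω)) n ω = visitCount θ A ω n := by
  simp only [birkhoffSum, visitCount, ← Function.iterate_succ_apply' θ, Nat.cast_sum]
  refine Finset.sum_congr rfl fun i _ => ?_
  by_cases h : θ^[i + 1] ω ∈ A
  · rw [Set.indicator_of_mem h, Set.indicator_of_mem h, Pi.one_apply, Nat.cast_one]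
  · rw [Set.indicator_of_notMem h, Set.indicator_of_notMem h, Nat.cast_zero]

lemma ae_typicalOrbit [MeasurableSpace Ω] {μ : Measure Ω} [IsProbabilityMeasure μ]
    (hθ : Ergodic θ μ) (hA : MeasurableSet A) (hF0 : ∀ ω, 0 ≤ F ω) (hF : Integrable F μ) :
    ∀ᵐ ω ∂μ, TypicalOrbit θ A F (μ.real A) ω := by
  have hind : Integrable (A.indicator fun _ => (1 : ℝ)) μ := (integrable_const 1).indicator hA
  have hvisit := ae_tendsto_birkhoffSum_div hθ
    (hθ.toMeasurePreserving.integrable_comp_of_integrable hind)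
  have hmean : ∫ ω, A.indicator (fun _ => (1 : ℝ)) (θ ω) ∂μ = μ.real A := by
    rw [← integral_map hθ.measurable.aemeasurable (by
      rw [hθ.map_eq]; exact hind.aestronglyMeasurable), hθ.map_eq]
    exact integral_indicator_one hA
  filter_upwards [hvisit, ae_tendsto_birkhoffSum_div hθ hF] with ω hω hFω
  refine ⟨?_, ?_⟩
  · simpa only [Function.comp_def, birkhoffSum_indicator_comp, hmean] using hω
  · obtain ⟨C, hC⟩ := hFω.bddAbove_range
    refine ⟨C, fun k => ?_⟩
    have hk := hC ⟨k + 1, rfl⟩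
    rw [div_le_iff₀ (by positivity)] at hk
    push_cast at hk
    exact (Finset.single_le_sum (f := fun j => F (θ^[j] ω)) (fun j _ => hF0 _)
      (Finset.mem_range.2 k.lt_succ_self)).trans hk

end TypicalEnvironments

section MeasurabilityInEnvironment

lemma measurable_integral_of_measurable {α β : Type*} [MeasurableSpace α] [MeasurableSpace β]
    {η : α → Measure β} [∀ a, IsProbabilityMeasure (η a)] (hη : Measurable η) {h : α → β → ℝ}
    (hh : Measurable (Function.uncurry h)) : Measurable fun a => ∫ b, h a b ∂η a := by
  let K : Kernel α β := ⟨η, hη⟩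
  have : IsMarkovKernel K := ⟨fun a => inferInstanceAs (IsProbabilityMeasure (η a))⟩
  exact (hh.stronglyMeasurable.integral_kernel_prod_right' (κ := K)).measurable

variable {Ω 𝒳 : Type*} [MeasurableSpace Ω] [MeasurableSpace 𝒳] {θ : Ω ≃ᵐ Ω}
  {P : Ω → Kernel 𝒳 𝒳} {E : Ω → Set 𝒳} {f : Ω → 𝒳 → ℝ} {F : Ω → ℝ} {A : Set Ω} {r : ℝ} {M : ℕ}
  {κ : Ω → Measure (ℕ → 𝒳)}

/-- All the data of a Markov chain in a random environment depend measurably on the environment;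
`A` stands for the environments with a uniform minorization. -/
structure MeasurableModel (P : Ω → Kernel 𝒳 𝒳) (E : Ω → Set 𝒳) (f : Ω → 𝒳 → ℝ) (F : Ω → ℝ)
    (A : Set Ω) (κ : Ω → Measure (ℕ → 𝒳)) : Prop where
  transition : Measurable fun q : Ω × 𝒳 => P q.1 q.2
  fibre : MeasurableSet {q : Ω × 𝒳 | q.2 ∈ E q.1}
  observable : Measurable (Function.uncurry f)
  bound : Measurable F
  good : MeasurableSet A
  law : Measurable κ

lemma measurable_visitCount (hA : MeasurableSet A) (k : ℕ) :
    Measurable fun ω => visitCount θ A ω k :=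
  Finset.measurable_sum _ fun i _ =>
    (measurable_const.indicator hA).comp (θ.measurable.iterate (i + 1))

lemma measurable_tailBound (hF : Measurable F) (hF0 : ∀ ω, 0 ≤ F ω) (hA : MeasurableSet A)
    (hr : 0 ≤ r) (n : ℕ) : Measurable fun ω => tailBound θ A F r M ω n := by
  have htsum (ω : Ω) : ∑' k, F (θ^[n + k] ω) * r ^ visitCount θ A ω (n + k)
      = (∑' k, ENNReal.ofReal (F (θ^[n + k] ω) * r ^ visitCount θ A ω (n + k))).toReal := by
    rw [ENNReal.tsum_toReal_eq fun _ => ENNReal.ofReal_ne_top]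
    simp only [ENNReal.toReal_ofReal (mul_nonneg (hF0 _) (pow_nonneg hr _))]
  simp only [tailBound, htsum]
  refine (Measurable.tsum fun k => ?_).ennreal_toReal.const_mul _
  exact ((hF.comp (θ.measurable.iterate _)).mul
    ((measurable_of_countable (r ^ ·)).comp (measurable_visitCount hA _))).ennreal_ofReal

namespace MeasurableModel

variable [∀ ω, IsMarkovKernel (P ω)]

lemma measurable_corrector (h : MeasurableModel P E f F A κ) (hf : IsDominated f F) (n : ℕ) :
    Measurable fun q : Ω × 𝒳 => corrector θ P f n q.1 q.2 := by
  induction n with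
  | zero => exact measurable_const
  | succ n ih =>
    simp only [hf.corrector_succ]
    refine h.observable.add (measurable_integral_of_measurable h.transition
      (h := fun q z => corrector θ P f n (θ q.1) z) ?_)
    exact ih.comp ((θ.measurable.comp (measurable_fst.comp measurable_fst)).prodMk measurable_snd)

lemma measurable_mgVar (h : MeasurableModel P E f F A κ) (hf : IsDominated f F) (n : ℕ) :
    Measurable fun q : Ω × 𝒳 => mgVar θ P E f n q.1 q.2 := by
  refine measurable_integral_of_measurable h.transition
    (h := fun q z => mgDiff θ P E f n q.1 q.2 z ^ 2) (Measurable.pow_const ?_ 2)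
  have hθ : Measurable fun q : (Ω × 𝒳) × 𝒳 => θ q.1.1 :=
    θ.measurable.comp (measurable_fst.comp measurable_fst)
  have hnext : Measurable fun q : (Ω × 𝒳) × 𝒳 => corrector θ P f n (θ q.1.1) q.2 :=
    (h.measurable_corrector hf n).comp (hθ.prodMk measurable_snd)
  have hmean : Measurable fun q : Ω × 𝒳 => ∫ w, corrector θ P f n (θ q.1) w ∂P q.1 q.2 :=
    measurable_integral_of_measurable h.transition
      (h := fun q w => corrector θ P f n (θ q.1) w) hnext
  exact Measurable.ite ((measurable_fst h.fibre).inter (hθ.prodMk measurable_snd h.fibre))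
    (hnext.sub (hmean.comp measurable_fst)) measurable_const

variable [∀ ω, IsProbabilityMeasure (κ ω)]

lemma measurable_pastVar (h : MeasurableModel P E f F A κ) (hf : IsDominated f F) (l n : ℕ) :
    Measurable fun ω => pastVar θ P E f κ l n ω :=
  measurable_integral_of_measurable (η := fun ω => κ (θ.symm^[l] ω))
    (h.law.comp (θ.symm.measurable.iterate l)) ((h.measurable_mgVar hf n).comp
      (measurable_fst.prodMk ((measurable_pi_apply l).comp measurable_snd)))

lemma measurable_varDensity (h : MeasurableModel P E f F A κ) (hf : IsDominated f F) :
    Measurable (varDensity θ P E f κ) :=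
  .limsup fun l => h.measurable_pastVar hf l l

end MeasurableModel

end MeasurabilityInEnvironment

section VarianceCapture

variable {Ω 𝒳 : Type*}

/-- The environments `ω` from which the martingale differences are bounded by `K`. -/
def tailSublevel (θ : Ω → Ω) (A : Set Ω) (F : Ω → ℝ) (r : ℝ) (M : ℕ) (K : ℝ) : Set Ω :=
  {ω | tailBound θ A F r M (θ ω) 0 ≤ K}

open Classical in
/-- The times `j < (1 - ε) n` whose environment lies in `tailSublevel`: the martingale differences
at these times are uniformly bounded, and close to their infinite-horizon limits. -/
def bulkTimes (θ : Ω → Ω) (A : Set Ω) (F : Ω → ℝ) (r : ℝ) (M : ℕ) (ω : Ω) (K ε : ℝ) (n : ℕ) :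
    Finset ℕ :=
  {j ∈ Finset.range ⌊(1 - ε) * n⌋₊ | θ^[j] ω ∈ tailSublevel θ A F r M K}

lemma bulkTimes_subset_range {θ : Ω → Ω} {A : Set Ω} {F : Ω → ℝ} {r : ℝ} {M : ℕ} {ω : Ω}
    {K ε : ℝ} (hε : 0 < ε) (n : ℕ) : bulkTimes θ A F r M ω K ε n ⊆ Finset.range n := by
  classical
  exact (Finset.filter_subset _ _).trans <| Finset.range_mono <| floor_one_sub_mul_le hε n

lemma mem_bulkTimes {θ : Ω → Ω} {A : Set Ω} {F : Ω → ℝ} {r : ℝ} {M : ℕ} {ω : Ω} {K ε : ℝ}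
    {n j : ℕ} : j ∈ bulkTimes θ A F r M ω K ε n ↔
      ((j + 1 : ℕ) : ℝ) ≤ (1 - ε) * n ∧ tailBound θ A F r M (θ^[j + 1] ω) 0 ≤ K := by
  classical
  rw [bulkTimes, Finset.mem_filter, Finset.mem_range, Function.iterate_succ_apply',
    ← Nat.succ_le_iff, Nat.le_floor_iff' j.succ_ne_zero, tailSublevel, Set.mem_ofPred]

lemma birkhoffSum_indicator_tailSublevel (θ : Ω → Ω) (A : Set Ω) (F : Ω → ℝ) (r : ℝ) (M : ℕ)
    (ω : Ω) (K ε : ℝ) (n : ℕ) (v : Ω → ℝ) :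
    birkhoffSum θ ((tailSublevel θ A F r M K).indicator v) ⌊(1 - ε) * n⌋₊ ω
      = ∑ j ∈ bulkTimes θ A F r M ω K ε n, v (θ^[j] ω) := by
  classical
  rw [birkhoffSum, bulkTimes, Finset.sum_filter]
  exact Finset.sum_congr rfl fun j _ => by rw [Set.indicator_apply]

lemma tendsto_average_tailBound_sq (θ : Ω → Ω) (A : Set Ω) (F : Ω → ℝ) (r : ℝ) (M : ℕ) (ω : Ω) :
    Tendsto (fun n : ℕ => (∑ j ∈ Finset.range n,
      ((r ^ 2) ^ (M + 1))⁻¹ * tailBound θ A F r M ω (j + 1) ^ 2) / n) atTop (𝓝 0) := by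
  refine tendsto_average_zero ?_
  simpa using (((tendsto_tailBound θ A F r M ω).comp (tendsto_add_atTop_nat 1)).pow 2).const_mul
    ((r ^ 2) ^ (M + 1))⁻¹

lemma exists_lt_mul_one_sub {b I : ℝ} (hb : b < I) : ∃ ε : ℝ, b < I * (1 - ε) ∧ 0 < ε ∧ ε < 1 := by
  have hcont : Tendsto (fun ε : ℝ => I * (1 - ε)) (𝓝[>] 0) (𝓝 (I * (1 - 0))) :=
    (Continuous.tendsto (by fun_prop) 0).mono_left nhdsWithin_le_nhds
  rw [sub_zero, mul_one] at hcont
  exact ((hcont.eventually_const_lt hb).and (Ioo_mem_nhdsGT one_pos)).exists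

variable [MeasurableSpace Ω] [MeasurableSpace 𝒳] {θ : Ω ≃ᵐ Ω}
  {P : Ω → Kernel 𝒳 𝒳} {E : Ω → Set 𝒳} {f : Ω → 𝒳 → ℝ} {F : Ω → ℝ} {A : Set Ω} {r p : ℝ}
  {M : ℕ} {ω : Ω} {κ : Ω → Measure (ℕ → 𝒳)}

/-- A Markov chain in an ergodic random environment for which almost every environment is tame. -/
structure TameModel (θ : Ω ≃ᵐ Ω) (P : Ω → Kernel 𝒳 𝒳) (E : Ω → Set 𝒳) (f : Ω → 𝒳 → ℝ)
    (F : Ω → ℝ) (A : Set Ω) (r : ℝ) (M : ℕ) (κ : Ω → Measure (ℕ → 𝒳)) (μ : Measure Ω) : Prop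
    extends MeasurableModel P E f F A κ where
  ergodic : Ergodic θ μ
  integrable : Integrable F μ
  measure_good_ne_zero : μ A ≠ 0
  tameChain : ∀ᵐ ω ∂μ, TameChain θ P E f F A r M κ ω

namespace TameModel

variable {μ : Measure Ω} [IsProbabilityMeasure μ]

lemma dominated (h : TameModel θ P E f F A r M κ μ) : IsDominated f F :=
  h.tameChain.exists.choose_spec.env.dominated

lemma measureReal_good_pos (h : TameModel θ P E f F A r M κ μ) : 0 < μ.real A :=
  ENNReal.toReal_pos h.measure_good_ne_zero (measure_ne_top _ _)

lemma measurable_tailBound (h : TameModel θ P E f F A r M κ μ) :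
    Measurable fun ω => tailBound θ A F r M ω 0 :=
  _root_.measurable_tailBound h.bound h.dominated.nonneg h.good
    h.tameChain.exists.choose_spec.env.rate_pos.le 0

lemma ae_typicalOrbit (h : TameModel θ P E f F A r M κ μ) :
    ∀ᵐ ω ∂μ, TypicalOrbit θ A F (μ.real A) ω :=
  _root_.ae_typicalOrbit h.ergodic h.good h.dominated.nonneg h.integrable

lemma aecover_tailSublevel (h : TameModel θ P E f F A r M κ μ) :
    AECover μ atTop fun K : ℕ => tailSublevel θ A F r M K where
  ae_eventually_mem := .of_forall fun _ =>
    (tendsto_natCast_atTop_atTop (R := ℝ)).eventually_ge_atTop _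
  measurableSet _ := (h.measurable_tailBound.comp θ.measurable) measurableSet_Iic

end TameModel

variable [∀ ω, IsMarkovKernel (P ω)] [∀ ω, IsProbabilityMeasure (κ ω)]

namespace TameChain

lemma sum_varDensity_le (h : TameChain θ P E f F A r M κ ω) {K ε T : ℝ} (hK : 0 ≤ K)
    (hε : 0 < ε) {n : ℕ} (hT : ∀ m : ℕ, (m : ℝ) ≤ (1 - ε) * n →
      tailBound θ A F r M (θ^[m] ω) (n - m) ≤ T) :
    ∑ j ∈ bulkTimes θ A F r M ω K ε n, varDensity θ P E f κ (θ^[j] ω)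
      ≤ ∑ j ∈ bulkTimes θ A F r M ω K ε n, meanVar θ P E f ω (κ ω) n j
        + ∑ j ∈ Finset.range n, ((r ^ 2) ^ (M + 1))⁻¹ * tailBound θ A F r M ω (j + 1) ^ 2
        + n * (2 * K * |T|) := by
  have hr0 := h.env.rate_pos
  have hterm (j) (hj : j ∈ bulkTimes θ A F r M ω K ε n) : varDensity θ P E f κ (θ^[j] ω)
      ≤ meanVar θ P E f ω (κ ω) n j
        + ((r ^ 2) ^ (M + 1))⁻¹ * tailBound θ A F r M ω (j + 1) ^ 2 + 2 * K * |T| := by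
    obtain ⟨hjn, hjK⟩ := mem_bulkTimes.1 hj
    refine (h.varDensity_iterate_le j n).trans ?_
    gcongr
    · exact (h.env.iterate (j + 1)).tailBound_nonneg _
    · rw [Nat.sub_sub]
      exact (hT (j + 1) hjn).trans (le_abs_self T)
  refine (Finset.sum_le_sum hterm).trans ?_
  rw [Finset.sum_add_distrib, Finset.sum_add_distrib, Finset.sum_const, nsmul_eq_mul]
  have hsub := bulkTimes_subset_range (θ := θ) (A := A) (F := F) (r := r) (M := M) (ω := ω)
    (K := K) hε n
  gcongr
  simpa only [Finset.card_range] using Finset.card_le_card hsub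

lemma eventually_lt_average_meanVar (h : TameChain θ P E f F A r M κ ω)
    (ho : TypicalOrbit θ A F p ω) (hp : 0 < p) {K ε I b : ℝ} (hK : 0 ≤ K) (hε : 0 < ε)
    (hε1 : ε < 1) (hI : Tendsto (fun n : ℕ => birkhoffSum θ
      ((tailSublevel θ A F r M K).indicator (varDensity θ P E f κ)) n ω / n) atTop (𝓝 I))
    (hb : b < I * (1 - ε)) :
    ∀ᶠ n : ℕ in atTop,
      b < (∑ j ∈ bulkTimes θ A F r M ω K ε n, meanVar θ P E f ω (κ ω) n j) / n := by
  obtain ⟨T, hT, hTn⟩ := ho.exists_tailBound_le (M := M) hp h.env.dominated.nonneg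
    h.env.rate_pos h.env.rate_lt_one hε hε1
  have hlim := ((tendsto_floor_div hI (sub_pos.2 hε1)).sub
    (tendsto_average_tailBound_sq θ A F r M ω)).sub (hT.abs.const_mul (2 * K))
  simp only [abs_zero, mul_zero, sub_zero] at hlim
  filter_upwards [hTn, hlim.eventually_const_lt hb, eventually_gt_atTop 0] with n hn hbn hn0
  refine hbn.trans_le ?_
  have hn0' : (n : ℝ) ≠ 0 := by positivity
  have hsum := h.sum_varDensity_le hK hε hn
  rw [← birkhoffSum_indicator_tailSublevel] at hsum
  rw [← mul_div_cancel_left₀ (2 * K * |T n|) hn0', ← sub_div, ← sub_div]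
  gcongr
  linarith

lemma sum_meanVar_le (h : TameChain θ P E f F A r M κ ω) {K η : ℝ} (hη : 0 < η) {n : ℕ}
    (hn : tailBound θ A F r M (θ^[n] ω) 0 ≤ K) :
    ∑ j ∈ Finset.range n, meanVar θ P E f ω (κ ω) n j
      ≤ (1 + η) * (birkhoffSum θ (varDensity θ P E f κ) n ω
          + ∑ j ∈ Finset.range n, ((r ^ 2) ^ (M + 1))⁻¹ * tailBound θ A F r M ω (j + 1) ^ 2)
        + (1 + η⁻¹) * K ^ 2
          * ∑ j ∈ Finset.range n, (r ^ 2) ^ visitCount θ A (θ^[j + 1] ω) (n - j - 1) := by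
  rw [birkhoffSum, ← Finset.sum_add_distrib, Finset.mul_sum, Finset.mul_sum,
    ← Finset.sum_add_distrib]
  refine Finset.sum_le_sum fun j hj => (h.meanVar_le j n hη).trans ?_
  have hr0 := h.env.rate_pos
  have htail := tailBound_iterate_mul θ A F r M (θ^[j + 1] ω) (n - j - 1) 0
  rw [← Function.iterate_add_apply, add_zero,
    show n - j - 1 + (j + 1) = n by have := Finset.mem_range.1 hj; omega] at htail
  have hnonneg := (h.env.iterate n).tailBound_nonneg 0
  rw [← htail, mul_pow, pow_right_comm r _ 2, ← mul_assoc]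
  gcongr

lemma le_of_tendsto_average_meanVar (h : TameChain θ P E f F A r M κ ω)
    (ho : TypicalOrbit θ A F p ω) (hp : 0 < p) {K V I : ℝ}
    (hrec : ∃ᶠ n : ℕ in atTop, tailBound θ A F r M (θ^[n] ω) 0 ≤ K)
    (hV : Tendsto (fun n : ℕ => (∑ j ∈ Finset.range n, meanVar θ P E f ω (κ ω) n j) / n) atTop
      (𝓝 V))
    (hI : Tendsto (fun n : ℕ => birkhoffSum θ (varDensity θ P E f κ) n ω / n) atTop (𝓝 I)) :
    V ≤ I := by
  have hmemory := tendsto_average_tailBound_sq θ A F r M ω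
  have hhorizon := ho.tendsto_average_pow_visitCount hp (pow_pos h.env.rate_pos 2)
    (pow_lt_one₀ h.env.rate_pos.le h.env.rate_lt_one two_ne_zero)
  have hle (η : ℝ) (hη : 0 < η) : V ≤ (1 + η) * I := by
    have hlim := ((hI.add hmemory).const_mul (1 + η)).add
      (hhorizon.const_mul ((1 + η⁻¹) * K ^ 2))
    simp only [mul_zero, add_zero] at hlim
    refine le_of_tendsto_of_tendsto_of_frequently hV hlim (hrec.mono fun n hn => ?_)
    rw [← add_div, ← mul_div_assoc, ← mul_div_assoc, ← add_div]
    gcongr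
    exact h.sum_meanVar_le hη hn
  have hlim : Tendsto (fun η : ℝ => (1 + η) * I) (𝓝[>] 0) (𝓝 ((1 + 0) * I)) :=
    (Continuous.tendsto (by fun_prop) 0).mono_left nhdsWithin_le_nhds
  rw [add_zero, one_mul] at hlim
  exact ge_of_tendsto hlim (eventually_mem_nhdsWithin.mono hle)

end TameChain

namespace TameModel

variable {μ : Measure Ω} [IsProbabilityMeasure μ] {V : ℝ}

lemma integrableOn_varDensity (h : TameModel θ P E f F A r M κ μ) (K : ℕ) :
    IntegrableOn (varDensity θ P E f κ) (tailSublevel θ A F r M K) μ := by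
  refine .of_bound (measure_lt_top _ _)
    (h.measurable_varDensity h.dominated).aestronglyMeasurable (K ^ 2) ?_
  filter_upwards [ae_restrict_of_ae h.tameChain,
    ae_restrict_mem (h.aecover_tailSublevel.measurableSet K)] with ω hω hK
  rw [Real.norm_of_nonneg hω.env.varDensity_nonneg]
  exact hω.env.varDensity_le.trans (pow_le_pow_left₀ ((hω.env.iterate 1).tailBound_nonneg 0) hK 2)

lemma ae_tendsto_birkhoffSum_varDensity (h : TameModel θ P E f F A r M κ μ) :
    ∀ᵐ ω ∂μ, ∀ K : ℕ, Tendsto (fun n : ℕ => birkhoffSum θ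
      ((tailSublevel θ A F r M K).indicator (varDensity θ P E f κ)) n ω / n) atTop
      (𝓝 (∫ ω in tailSublevel θ A F r M K, varDensity θ P E f κ ω ∂μ)) := by
  refine ae_all_iff.2 fun K => ?_
  have hS := h.aecover_tailSublevel.measurableSet K
  rw [← integral_indicator hS]
  exact ae_tendsto_birkhoffSum_div h.ergodic ((h.integrableOn_varDensity K).integrable_indicator hS)

lemma setIntegral_varDensity_le (h : TameModel θ P E f F A r M κ μ)
    (hV : ∀ᵐ ω ∂μ, Tendsto (fun n : ℕ =>
      (∑ j ∈ Finset.range n, meanVar θ P E f ω (κ ω) n j) / n) atTop (𝓝 V)) (K : ℕ) :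
    ∫ ω in tailSublevel θ A F r M K, varDensity θ P E f κ ω ∂μ ≤ V := by
  obtain ⟨ω, hω, horbit, hIω, hVω⟩ := (h.tameChain.and <| h.ae_typicalOrbit.and <|
    h.ae_tendsto_birkhoffSum_varDensity.and hV).exists
  by_contra! hVI
  obtain ⟨b, hVb, hbI⟩ := exists_between hVI
  obtain ⟨ε, hbε, hε0, hε1⟩ := exists_lt_mul_one_sub hbI
  refine hVb.not_ge (ge_of_tendsto hVω ?_)
  filter_upwards [hω.eventually_lt_average_meanVar horbit h.measureReal_good_pos K.cast_nonneg
    hε0 hε1 (hIω K) hbε] with n hn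
  refine hn.le.trans (div_le_div_of_nonneg_right ?_ n.cast_nonneg)
  exact Finset.sum_le_sum_of_subset_of_nonneg (bulkTimes_subset_range hε0 n)
    fun j _ _ => meanVar_nonneg n j

lemma integrable_varDensity (h : TameModel θ P E f F A r M κ μ)
    (hV : ∀ᵐ ω ∂μ, Tendsto (fun n : ℕ =>
      (∑ j ∈ Finset.range n, meanVar θ P E f ω (κ ω) n j) / n) atTop (𝓝 V)) :
    Integrable (varDensity θ P E f κ) μ :=
  h.aecover_tailSublevel.integrable_of_integral_bounded_of_nonneg_ae V h.integrableOn_varDensity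
    (h.tameChain.mono fun _ hω => hω.env.varDensity_nonneg)
    (.of_forall (h.setIntegral_varDensity_le hV))

lemma le_integral_varDensity (h : TameModel θ P E f F A r M κ μ)
    (hV : ∀ᵐ ω ∂μ, Tendsto (fun n : ℕ =>
      (∑ j ∈ Finset.range n, meanVar θ P E f ω (κ ω) n j) / n) atTop (𝓝 V)) :
    V ≤ ∫ ω, varDensity θ P E f κ ω ∂μ := by
  obtain ⟨K, hK⟩ : ∃ K : ℕ, μ {ω | tailBound θ A F r M ω 0 ≤ K} ≠ 0 := by
    by_contra! hnull
    refine NeZero.ne μ (Measure.measure_univ_eq_zero.1 ?_)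
    rw [← Set.iUnion_eq_univ_iff.2 fun ω => exists_nat_ge (tailBound θ A F r M ω 0)]
    exact measure_iUnion_null hnull
  have hrec := h.ergodic.toMeasurePreserving.conservative.ae_mem_imp_frequently_image_mem
    (measurableSet_le h.measurable_tailBound (measurable_const (a := (K : ℝ)))).nullMeasurableSet
  obtain ⟨ω, hωK, hω, horbit, hVω, hIω, hrecω⟩ := ((frequently_ae_mem_iff.2 hK).and_eventually <|
    h.tameChain.and <| h.ae_typicalOrbit.and <| hV.and <|
    (ae_tendsto_birkhoffSum_div h.ergodic (h.integrable_varDensity hV)).and hrec).exists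
  exact hω.le_of_tendsto_average_meanVar horbit h.measureReal_good_pos (hrecω hωK) hVω hIω

theorem ae_forall_exists_bulkTimes (h : TameModel θ P E f F A r M κ μ)
    (hV : ∀ᵐ ω ∂μ, Tendsto (fun n : ℕ =>
      (∑ j ∈ Finset.range n, meanVar θ P E f ω (κ ω) n j) / n) atTop (𝓝 V)) :
    ∀ᵐ ω ∂μ, ∀ b < V, ∃ K : ℝ, ∃ ε : ℝ, 0 ≤ K ∧ 0 < ε ∧ ε < 1 ∧ ∀ᶠ n : ℕ in atTop,
      b < (∑ j ∈ bulkTimes θ A F r M ω K ε n, meanVar θ P E f ω (κ ω) n j) / n := by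
  have hI := h.aecover_tailSublevel.integral_tendsto_of_countably_generated
    (h.integrable_varDensity hV)
  filter_upwards [h.tameChain, h.ae_typicalOrbit, h.ae_tendsto_birkhoffSum_varDensity]
    with ω hω horbit hIω b hb
  obtain ⟨K, hK⟩ := (hI.eventually_const_lt (hb.trans_le (h.le_integral_varDensity hV))).exists
  obtain ⟨ε, hbε, hε0, hε1⟩ := exists_lt_mul_one_sub hK
  exact ⟨K, ε, K.cast_nonneg, hε0, hε1,
    hω.eventually_lt_average_meanVar horbit h.measureReal_good_pos K.cast_nonneg hε0 hε1
      (hIω K) hbε⟩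

end TameModel

end VarianceCapture

section CharFunLimit

lemma tendsto_zero_of_forall_eventually_le {a : ℕ → ℝ} {g : ℝ → ℝ} (h0 : ∀ n, 0 ≤ a n)
    (hg : Tendsto g (𝓝[>] 0) (𝓝 0))
    (h : ∀ x ∈ Set.Ioo (0 : ℝ) 1, ∃ u : ℕ → ℝ, Tendsto u atTop (𝓝 (g x)) ∧
      ∀ᶠ n in atTop, a n ≤ u n) :
    Tendsto a atTop (𝓝 0) := by
  refine tendsto_order.2 ⟨fun b hb => .of_forall fun n => hb.trans_le (h0 n), fun b hb => ?_⟩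
  obtain ⟨x, hgx, hx⟩ := ((hg.eventually_lt_const hb).and (Ioo_mem_nhdsGT one_pos)).exists
  obtain ⟨u, hu, hau⟩ := h x hx
  filter_upwards [hau, hu.eventually_lt_const hgx] with n hn hun using hn.trans_lt hun

lemma abs_exp_neg_sub_exp_neg_le {a b : ℝ} (ha : 0 ≤ a) (hb : 0 ≤ b) :
    |Real.exp (-a) - Real.exp (-b)| ≤ |a - b| := by
  wlog hab : a ≤ b generalizing a b
  · rw [abs_sub_comm, abs_sub_comm a]
    exact this hb ha (le_of_not_ge hab)
  have hfactor : Real.exp (-a) - Real.exp (-b) = Real.exp (-a) * (1 - Real.exp (-(b - a))) := by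
    rw [mul_one_sub, ← Real.exp_add]
    ring_nf
  rw [abs_sub_comm a, abs_of_nonneg (sub_nonneg.2 hab),
    abs_of_nonneg (sub_nonneg.2 (Real.exp_le_exp.2 (neg_le_neg hab))), hfactor]
  nlinarith [Real.exp_le_one_iff.2 (neg_nonpos.2 ha), Real.exp_pos (-a),
    Real.one_sub_le_exp_neg (b - a)]

lemma norm_integral_exp_sub_integral_exp_le {α : Type*} [MeasurableSpace α] {μ : Measure α}
    [IsProbabilityMeasure μ] {φ ψ : α → ℝ} (hφ : BddMeasurable φ) (hψ : BddMeasurable ψ) :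
    ‖∫ y, Complex.exp (Complex.I * φ y) ∂μ - ∫ y, Complex.exp (Complex.I * ψ y) ∂μ‖
      ≤ √(∫ y, (φ y - ψ y) ^ 2 ∂μ) := by
  have hexp {g : α → ℝ} (hg : BddMeasurable g) :
      BddMeasurable fun y => Complex.exp (Complex.I * g y) :=
    ⟨Complex.measurable_exp.comp (hg.ofReal.measurable.const_mul _), 1,
      fun _ => (Complex.norm_exp_I_mul_ofReal _).le⟩
  rw [← integral_sub (hexp hφ).integrable (hexp hψ).integrable]
  refine (norm_integral_le_of_norm_le (hφ.sub hψ).integrable.abs (.of_forall fun y => ?_)).trans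
    (integral_abs_le_sqrt_integral_sq (hφ.sub hψ))
  have hfactor : Complex.exp (Complex.I * φ y) - Complex.exp (Complex.I * ψ y)
      = Complex.exp (Complex.I * ψ y) * (Complex.exp (Complex.I * (φ y - ψ y : ℝ)) - 1) := by
    rw [mul_sub_one, ← Complex.exp_add]
    push_cast
    ring_nf
  rw [hfactor, norm_mul, Complex.norm_exp_I_mul_ofReal, one_mul]
  exact Real.norm_exp_I_mul_ofReal_sub_one_le

lemma TypicalOrbit.exists_sum_pow_visitCount_le {Ω : Type*} {θ : Ω → Ω} {A : Set Ω} {F : Ω → ℝ}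
    {p q : ℝ} {ω : Ω} (h : TypicalOrbit θ A F p ω) (hp : 0 < p) (hq0 : 0 < q) (hq1 : q < 1)
    {x : ℝ} (hx0 : 0 < x) (hx1 : x < 1) :
    ∃ C : ℝ, ∀ᶠ n : ℕ in atTop, ∑ j ∈ Finset.range n,
      q ^ visitCount θ A (θ^[j - ⌈x * n⌉₊] ω) (j - (j - ⌈x * n⌉₊)) ≤ ⌈x * n⌉₊ + C := by
  obtain ⟨ρ, hρ0, hρ1, hρ⟩ := h.exists_pow_visitCount_le hp hq0 hq1 hx0 hx1
  obtain ⟨N, hN⟩ := eventually_atTop.1 hρ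
  have hceil : Tendsto (fun n : ℕ => ⌈x * n⌉₊) atTop atTop :=
    tendsto_nat_ceil_atTop.comp (tendsto_natCast_atTop_atTop.const_mul_atTop hx0)
  refine ⟨(1 - ρ)⁻¹, ?_⟩
  filter_upwards [hceil.eventually_ge_atTop N] with n hn
  have hln : ⌈x * n⌉₊ ≤ n := Nat.ceil_le.2 (mul_le_of_le_one_left n.cast_nonneg hx1.le)
  have hxl : x * n ≤ ⌈x * n⌉₊ := Nat.le_ceil _
  set l := ⌈x * n⌉₊
  set w : ℕ → ℝ := fun j => q ^ visitCount θ A (θ^[j - l] ω) (j - (j - l))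
  have hhead : ∑ j ∈ Finset.range l, w j ≤ l := by
    simpa using Finset.sum_le_card_nsmul (Finset.range l) w 1
      fun _ _ => pow_le_one₀ hq0.le hq1.le
  have htail : ∑ j ∈ Finset.Ico l n, w j ≤ (1 - ρ)⁻¹ := by
    have hterm (j) (hj : j ∈ Finset.Ico l n) : w j ≤ ρ ^ j := by
      obtain ⟨hlj, hjn⟩ := Finset.mem_Ico.1 hj
      refine hN j (hn.trans hlj) (j - l) ?_
      have hjn' : (j : ℝ) ≤ n := by exact_mod_cast hjn.le
      rw [Nat.cast_sub hlj]
      nlinarith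
    rw [← tsum_geometric_of_lt_one hρ0 hρ1]
    exact (Finset.sum_le_sum hterm).trans <|
      (summable_geometric_of_lt_one hρ0 hρ1).sum_le_tsum _ fun _ _ => pow_nonneg hρ0 _
  rw [← Finset.sum_range_add_sum_Ico _ hln]
  exact add_le_add hhead htail

section Scaling

variable {𝒳 : Type*} {ξ : ℕ → 𝒳 → 𝒳 → ℝ}

lemma stepSum_const_mul (c : ℝ) (s : Finset ℕ) (y : ℕ → 𝒳) :
    stepSum (fun j x z => c * ξ j x z) s y = c * stepSum ξ s y :=
  (Finset.mul_sum _ _ _).symm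

variable [MeasurableSpace 𝒳] {Q : ℕ → Kernel 𝒳 𝒳}

lemma stepVar_const_mul (c : ℝ) (j : ℕ) (x : 𝒳) :
    stepVar Q (fun j x z => c * ξ j x z) j x = c ^ 2 * stepVar Q ξ j x := by
  simp only [stepVar, mul_pow, integral_const_mul]

lemma IsMartDiff.const_mul (hξ : IsMartDiff Q ξ) (c : ℝ) :
    IsMartDiff Q fun j x z => c * ξ j x z where
  bddMeasurable j := (hξ.bddMeasurable j).const_mul c
  integral_eq_zero j x := by rw [integral_const_mul, hξ.integral_eq_zero, mul_zero]

end Scaling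

variable {Ω 𝒳 : Type*} [MeasurableSpace Ω] [MeasurableSpace 𝒳] {θ : Ω → Ω}
  {P : Ω → Kernel 𝒳 𝒳} {E : Ω → Set 𝒳} {f : Ω → 𝒳 → ℝ} {F : Ω → ℝ} {A : Set Ω} {r p : ℝ}
  {M : ℕ} {ω : Ω} {κ : Measure (ℕ → 𝒳)} [∀ ω, IsMarkovKernel (P ω)] [IsProbabilityMeasure κ]

namespace TameEnv

lemma norm_integral_exp_stepSum_sub_le (hω : TameEnv θ P E f F A r M ω)
    (hκ : RegularChain θ P E A (r ^ 2) M ω κ) {c b K : ℝ} (hcK : |c| * K ≤ b) (hb1 : b ≤ 1)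
    {J : Finset ℕ} (hJ : ∀ j ∈ J, tailBound θ A F r M (θ^[j + 1] ω) 0 ≤ K) (n l : ℕ) :
    ‖∫ y, Complex.exp (Complex.I * (c * stepSum (mgStep θ P E f n ω) J y : ℝ)) ∂κ
      - Complex.exp (-(c ^ 2 * (∑ j ∈ J, meanVar θ P E f ω κ n j) / 2) : ℝ)‖
      ≤ ∑ j ∈ J, (b ^ 3 + (b ^ 3 * √l + ((r ^ 2) ^ M)⁻¹
        * (r ^ 2) ^ visitCount θ A (θ^[j - l] ω) (j - (j - l)) * b ^ 2) / 2) := by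
  have hξ := (hω.dominated.isMartDiff_mgStep hω.measurableSet_fibre hω.regular n).const_mul c
  have hb (j) (hj : j ∈ J) (x z) : |c * mgStep θ P E f n ω j x z| ≤ b := by
    rw [abs_mul]
    refine (mul_le_mul_of_nonneg_left ?_ (abs_nonneg c)).trans hcK
    refine ((hω.iterate j).abs_mgDiff_le _ x z).trans ?_
    rw [← Function.iterate_succ_apply' θ]
    exact hJ j hj
  have hρ (j) (hj : j ∈ J) := hκ.decorrelatedFrom hω.measurableSet_fibre (sq_pos_of_pos hω.rate_pos)
    (pow_le_one₀ hω.rate_pos.le hω.rate_lt_one.le) hω.window_pos (hξ.bddMeasurable_stepVar j)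
    (stepVar_nonneg j) (stepVar_le (hb j hj)) (sq_nonneg b) (j - l) (j - (j - l))
  simp only [Nat.add_sub_cancel' (Nat.sub_le _ l)] at hρ
  have hmain := hξ.norm_integral_exp_stepSum_sub_le (fun j _ => hκ.hasTransition j) hb hb1 hρ
  simp only [stepSum_const_mul, stepVar_const_mul, integral_const_mul, ← Finset.mul_sum] at hmain
  exact hmain

lemma norm_integral_exp_stepSum_sub_le_of_subset_range (hω : TameEnv θ P E f F A r M ω)
    (hκ : RegularChain θ P E A (r ^ 2) M ω κ) {c b K : ℝ} (hcK : |c| * K ≤ b) (hb0 : 0 ≤ b)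
    (hb1 : b ≤ 1) {J : Finset ℕ} {n : ℕ} (hJn : J ⊆ Finset.range n)
    (hJ : ∀ j ∈ J, tailBound θ A F r M (θ^[j + 1] ω) 0 ≤ K) (l : ℕ) :
    ‖∫ y, Complex.exp (Complex.I * (c * stepSum (mgStep θ P E f n ω) J y : ℝ)) ∂κ
      - Complex.exp (-(c ^ 2 * (∑ j ∈ J, meanVar θ P E f ω κ n j) / 2) : ℝ)‖
      ≤ n * b ^ 3 * (1 + √l / 2) + ((r ^ 2) ^ M)⁻¹ * b ^ 2 / 2 * ∑ j ∈ Finset.range n,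
        (r ^ 2) ^ visitCount θ A (θ^[j - l] ω) (j - (j - l)) := by
  calc _ ≤ _ := hω.norm_integral_exp_stepSum_sub_le hκ hcK hb1 hJ n l
    _ ≤ ∑ j ∈ Finset.range n, (b ^ 3 + (b ^ 3 * √l + ((r ^ 2) ^ M)⁻¹
        * (r ^ 2) ^ visitCount θ A (θ^[j - l] ω) (j - (j - l)) * b ^ 2) / 2) :=
      Finset.sum_le_sum_of_subset_of_nonneg hJn fun _ _ _ => by positivity
    _ = _ := by
      simp only [Finset.sum_add_distrib, ← Finset.sum_div, ← Finset.sum_mul, ← Finset.mul_sum,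
        Finset.sum_const, Finset.card_range, nsmul_eq_mul]
      ring

lemma exists_eventually_norm_integral_exp_stepSum_sub_le (hω : TameEnv θ P E f F A r M ω)
    (hκ : RegularChain θ P E A (r ^ 2) M ω κ) (hT : TypicalOrbit θ A F p ω) (hp : 0 < p)
    {K : ℝ} (hK : 0 ≤ K) (t : ℝ) {J : ℕ → Finset ℕ} (hJn : ∀ n, J n ⊆ Finset.range n)
    (hJ : ∀ n, ∀ j ∈ J n, tailBound θ A F r M (θ^[j + 1] ω) 0 ≤ K) {x : ℝ} (hx0 : 0 < x)
    (hx1 : x < 1) :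
    ∃ C : ℝ, ∀ᶠ n : ℕ in atTop,
      ‖∫ y, Complex.exp (Complex.I * (t / √n * stepSum (mgStep θ P E f n ω) (J n) y : ℝ)) ∂κ
        - Complex.exp (-((t / √n) ^ 2 * (∑ j ∈ J n, meanVar θ P E f ω κ n j) / 2) : ℝ)‖
        ≤ (|t| * K) ^ 3 * (1 / √n + √(⌈x * n⌉₊ / n) / 2)
          + ((r ^ 2) ^ M)⁻¹ * (|t| * K) ^ 2 / 2 * (⌈x * n⌉₊ / n + C / n) := by
  obtain ⟨C, hC⟩ := hT.exists_sum_pow_visitCount_le hp (sq_pos_of_pos hω.rate_pos)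
    (pow_lt_one₀ hω.rate_pos.le hω.rate_lt_one two_ne_zero) hx0 hx1
  have hsqrt : Tendsto (fun n : ℕ => √(n : ℝ)) atTop atTop :=
    Real.tendsto_sqrt_atTop.comp tendsto_natCast_atTop_atTop
  refine ⟨C, ?_⟩
  filter_upwards [hC, hsqrt.eventually_ge_atTop (|t| * K), eventually_gt_atTop 0] with n hn hb hn0
  have hn0' : 0 < √(n : ℝ) := Real.sqrt_pos.2 (Nat.cast_pos.2 hn0)
  have hn2 : √(n : ℝ) ^ 2 = n := Real.sq_sqrt n.cast_nonneg
  have hcK : |t / √n| * K ≤ |t| * K / √n := by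
    rw [abs_div, abs_of_pos hn0', div_mul_eq_mul_div]
  refine (hω.norm_integral_exp_stepSum_sub_le_of_subset_range hκ hcK (by positivity)
    ((div_le_one hn0').2 hb) (hJn n) (hJ n) ⌈x * n⌉₊).trans ?_
  have hbound := mul_le_mul_of_nonneg_left hn
    (by positivity : 0 ≤ ((r ^ 2) ^ M)⁻¹ * (|t| * K / √n) ^ 2 / 2)
  refine (add_le_add_right hbound _).trans_eq ?_
  rw [Real.sqrt_div (Nat.cast_nonneg _)]
  generalize √(n : ℝ) = s at hn0' hn2 ⊢
  generalize ⌈x * n⌉₊ = l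
  rw [← hn2]
  field_simp

lemma tendsto_integral_exp_stepSum_sub (hω : TameEnv θ P E f F A r M ω)
    (hκ : RegularChain θ P E A (r ^ 2) M ω κ) (hT : TypicalOrbit θ A F p ω) (hp : 0 < p)
    {K : ℝ} (hK : 0 ≤ K) (t : ℝ) {J : ℕ → Finset ℕ} (hJn : ∀ n, J n ⊆ Finset.range n)
    (hJ : ∀ n, ∀ j ∈ J n, tailBound θ A F r M (θ^[j + 1] ω) 0 ≤ K) :
    Tendsto (fun n : ℕ =>
      ‖∫ y, Complex.exp (Complex.I * (t / √n * stepSum (mgStep θ P E f n ω) (J n) y : ℝ)) ∂κ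
        - Complex.exp (-((t / √n) ^ 2 * (∑ j ∈ J n, meanVar θ P E f ω κ n j) / 2) : ℝ)‖)
      atTop (𝓝 0) := by
  set g : ℝ → ℝ := fun x => (|t| * K) ^ 3 * (0 + √x / 2)
    + ((r ^ 2) ^ M)⁻¹ * (|t| * K) ^ 2 / 2 * (x + 0)
  have hg : Tendsto g (𝓝[>] 0) (𝓝 0) := by
    have hg0 : Tendsto g (𝓝 0) (𝓝 (g 0)) := Continuous.tendsto (by fun_prop) 0
    simpa [g] using hg0.mono_left nhdsWithin_le_nhds
  refine tendsto_zero_of_forall_eventually_le (fun _ => norm_nonneg _) hg fun x ⟨hx0, hx1⟩ => ?_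
  obtain ⟨C, hC⟩ :=
    hω.exists_eventually_norm_integral_exp_stepSum_sub_le hκ hT hp hK t hJn hJ hx0 hx1
  have hinv : Tendsto (fun n : ℕ => 1 / √(n : ℝ)) atTop (𝓝 0) := by
    simpa only [one_div, Function.comp_def] using tendsto_inv_atTop_zero.comp
      (Real.tendsto_sqrt_atTop.comp tendsto_natCast_atTop_atTop)
  have hceil : Tendsto (fun n : ℕ => (⌈x * n⌉₊ : ℝ) / n) atTop (𝓝 x) :=
    (tendsto_nat_ceil_mul_div_atTop hx0.le).comp tendsto_natCast_atTop_atTop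
  exact ⟨_, ((hinv.add (hceil.sqrt.div_const 2)).const_mul _).add
    ((hceil.add (tendsto_const_div_atTop_nhds_zero_nat C)).const_mul _), hC⟩

end TameEnv

end CharFunLimit

section CentralLimitTheorem

lemma tendsto_measure_le_stdNormalCDF {α : Type*} [MeasurableSpace α] {κ : Measure α}
    [IsProbabilityMeasure κ] {Z : ℕ → α → ℝ} (hZ : ∀ n, Measurable (Z n))
    (h : ∀ t : ℝ, Tendsto (fun n => ∫ y, Complex.exp (Complex.I * (t * Z n y : ℝ)) ∂κ) atTop
      (𝓝 (Complex.exp (-(t ^ 2 / 2) : ℝ)))) (t : ℝ) :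
    Tendsto (fun n => (κ {y | Z n y ≤ t}).toReal) atTop (𝓝 (stdNormalCDF t)) := by
  let law : ℕ → ProbabilityMeasure ℝ := fun n =>
    ⟨κ.map (Z n), Measure.isProbabilityMeasure_map (hZ n).aemeasurable⟩
  let gaussian : ProbabilityMeasure ℝ := ⟨gaussianReal 0 1, inferInstance⟩
  have hlaw (n : ℕ) (s : ℝ) : charFun (law n : Measure ℝ) s
      = ∫ y, Complex.exp (Complex.I * (s * Z n y : ℝ)) ∂κ := by
    rw [charFun_apply_real, ProbabilityMeasure.coe_mk,
      integral_map (hZ n).aemeasurable (by fun_prop)]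
    simp only [Complex.ofReal_mul, mul_comm Complex.I]
  have hgaussian (s : ℝ) : charFun (gaussian : Measure ℝ) s = Complex.exp (-(s ^ 2 / 2) : ℝ) := by
    rw [ProbabilityMeasure.coe_mk, charFun_gaussianReal]
    simp
  have hconv : Tendsto law atTop (𝓝 gaussian) :=
    ProbabilityMeasure.tendsto_iff_tendsto_charFun.2 fun s => by
      simpa only [hlaw, hgaussian] using h s
  have hfrontier : (gaussian : Measure ℝ) (frontier (Set.Iic t)) = 0 := by
    have := nullSingletonClass_gaussianReal (μ := 0) (v := 1) one_ne_zero
    rw [ProbabilityMeasure.coe_mk, frontier_Iic]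
    exact measure_singleton t
  have hcdf := ProbabilityMeasure.tendsto_measure_of_null_frontier_of_tendsto' hconv hfrontier
  refine ((ENNReal.tendsto_toReal (measure_ne_top _ _)).comp hcdf).congr fun n => ?_
  exact congrArg ENNReal.toReal (Measure.map_apply (hZ n) measurableSet_Iic)

variable {Ω 𝒳 : Type*} [MeasurableSpace 𝒳] {f : Ω → 𝒳 → ℝ} {F : Ω → ℝ}

lemma IsDominated.bddMeasurable_centeredSum {θ : Ω → Ω} (hf : IsDominated f F) (ω : Ω)
    (κ : Measure (ℕ → 𝒳)) (n : ℕ) : BddMeasurable (centeredSum θ f ω κ n) :=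
  (hf.bddMeasurable_orbitSum ω n).sub (.const _)

variable [MeasurableSpace Ω] {P : Ω → Kernel 𝒳 𝒳} [∀ ω, IsMarkovKernel (P ω)] {E : Ω → Set 𝒳}
  {A : Set Ω} {r : ℝ} {M : ℕ}

namespace TameEnv

variable {θ : Ω → Ω} {ω : Ω} {κ : Measure (ℕ → 𝒳)} [IsProbabilityMeasure κ] {n : ℕ} {V η p : ℝ}

lemma norm_integral_exp_centeredSum_sub_le (hω : TameEnv θ P E f F A r M ω)
    (hκ : RegularChain θ P E A (r ^ 2) M ω κ) {J : Finset ℕ} (hJ : J ⊆ Finset.range n) (t : ℝ) :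
    ‖∫ y, Complex.exp (Complex.I * (t / √n * centeredSum θ f ω κ n y : ℝ)) ∂κ
      - ∫ y, Complex.exp (Complex.I * (t / √n * stepSum (mgStep θ P E f n ω) J y : ℝ)) ∂κ‖
      ≤ |t| * √(tailBound θ A F r M ω 0 ^ 2 / n
        + ((∑ j ∈ Finset.range n, meanVar θ P E f ω κ n j) / n
        - (∑ j ∈ J, meanVar θ P E f ω κ n j) / n)) := by
  have hcentered : BddMeasurable (centeredSum θ f ω κ n) :=
    hω.dominated.bddMeasurable_centeredSum ω κ n
  have hstep : BddMeasurable (stepSum (mgStep θ P E f n ω) J) :=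
    (hω.dominated.isMartDiff_mgStep hω.measurableSet_fibre hω.regular n).bddMeasurable_stepSum J
  refine (norm_integral_exp_sub_integral_exp_le (hcentered.const_mul (t / √n))
    (hstep.const_mul (t / √n))).trans ?_
  have hvar := hω.variance_corrector_le (hκ.ae_mem_fibre 0) n
  simp only [← mul_sub, mul_pow, integral_const_mul]
  rw [hκ.integral_centeredSum_sub_stepSum_sq hω.dominated hω.measurableSet_fibre n hJ,
    div_pow, Real.sq_sqrt n.cast_nonneg, div_mul_eq_mul_div, mul_div_assoc,
    Real.sqrt_mul (sq_nonneg t), Real.sqrt_sq_eq_abs, ← Finset.sum_sdiff hJ, ← sub_div,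
    add_sub_cancel_right, ← add_div]
  gcongr

lemma norm_integral_exp_centeredSum_sub_exp_le (hω : TameEnv θ P E f F A r M ω)
    (hκ : RegularChain θ P E A (r ^ 2) M ω κ) {J : Finset ℕ} (hJ : J ⊆ Finset.range n)
    (hV : 0 ≤ V) (hη : 0 ≤ η) (hJV : V - η < (∑ j ∈ J, meanVar θ P E f ω κ n j) / n)
    (t : ℝ) :
    ‖∫ y, Complex.exp (Complex.I * (t / √n * centeredSum θ f ω κ n y : ℝ)) ∂κ
      - Complex.exp (-(t ^ 2 * V / 2) : ℝ)‖
      ≤ |t| * √(tailBound θ A F r M ω 0 ^ 2 / n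
        + ((∑ j ∈ Finset.range n, meanVar θ P E f ω κ n j) / n - (V - η)))
      + ‖∫ y, Complex.exp (Complex.I * (t / √n * stepSum (mgStep θ P E f n ω) J y : ℝ)) ∂κ
        - Complex.exp (-((t / √n) ^ 2 * (∑ j ∈ J, meanVar θ P E f ω κ n j) / 2) : ℝ)‖
      + t ^ 2 / 2 * (|(∑ j ∈ Finset.range n, meanVar θ P E f ω κ n j) / n - V| + η) := by
  set U := (∑ j ∈ Finset.range n, meanVar θ P E f ω κ n j) / n
  set W := (∑ j ∈ J, meanVar θ P E f ω κ n j) / n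
  have hW : 0 ≤ W := div_nonneg (Finset.sum_nonneg fun _ _ => meanVar_nonneg _ _) n.cast_nonneg
  have hWU : W ≤ U := div_le_div_of_nonneg_right
    (Finset.sum_le_sum_of_subset_of_nonneg hJ fun _ _ _ => meanVar_nonneg _ _) n.cast_nonneg
  have hWV : |W - V| ≤ |U - V| + η :=
    abs_le.2 ⟨by linarith [abs_nonneg (U - V)], by linarith [le_abs_self (U - V)]⟩
  have hscale : (t / √n) ^ 2 * (∑ j ∈ J, meanVar θ P E f ω κ n j) / 2 = t ^ 2 * W / 2 := by
    rw [div_pow, Real.sq_sqrt n.cast_nonneg, div_mul_eq_mul_div, mul_div_assoc]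
  have hgauss : ‖Complex.exp (-((t / √n) ^ 2 * (∑ j ∈ J, meanVar θ P E f ω κ n j) / 2) : ℝ)
      - Complex.exp (-(t ^ 2 * V / 2) : ℝ)‖ ≤ t ^ 2 / 2 * (|U - V| + η) := by
    rw [hscale, ← Complex.ofReal_exp, ← Complex.ofReal_exp, ← Complex.ofReal_sub,
      Complex.norm_real]
    refine (abs_exp_neg_sub_exp_neg_le (by positivity) (by positivity)).trans ?_
    rw [← sub_div, ← mul_sub, mul_div_right_comm, abs_mul, abs_of_nonneg (by positivity)]
    gcongr
  refine (norm_sub_le_norm_sub_add_norm_sub _ _ _).trans (add_le_add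
    ((norm_sub_le_norm_sub_add_norm_sub _ _ _).trans (add_le_add_left ?_ _)) hgauss)
  refine (hω.norm_integral_exp_centeredSum_sub_le hκ hJ t).trans ?_
  gcongr

lemma tendsto_integral_exp_centeredSum (hω : TameEnv θ P E f F A r M ω)
    (hκ : RegularChain θ P E A (r ^ 2) M ω κ) (hT : TypicalOrbit θ A F p ω) (hp : 0 < p)
    (hV : Tendsto (fun n : ℕ => (∑ j ∈ Finset.range n, meanVar θ P E f ω κ n j) / n) atTop (𝓝 V))
    (hcapture : ∀ b < V, ∃ K ε : ℝ, 0 ≤ K ∧ 0 < ε ∧ ε < 1 ∧ ∀ᶠ n : ℕ in atTop,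
      b < (∑ j ∈ bulkTimes θ A F r M ω K ε n, meanVar θ P E f ω κ n j) / n) (t : ℝ) :
    Tendsto (fun n : ℕ =>
        ∫ y, Complex.exp (Complex.I * (t / √n * centeredSum θ f ω κ n y : ℝ)) ∂κ)
      atTop (𝓝 (Complex.exp (-(t ^ 2 * V / 2) : ℝ))) := by
  have hV0 : 0 ≤ V := ge_of_tendsto' hV fun n =>
    div_nonneg (Finset.sum_nonneg fun _ _ => meanVar_nonneg _ _) n.cast_nonneg
  set g : ℝ → ℝ := fun η => |t| * √(0 + (V - (V - η))) + 0 + t ^ 2 / 2 * (|V - V| + η)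
  have hg : Tendsto g (𝓝[>] 0) (𝓝 0) := by
    have hg0 : Tendsto g (𝓝 0) (𝓝 (g 0)) := Continuous.tendsto (by fun_prop) 0
    simpa [g] using hg0.mono_left nhdsWithin_le_nhds
  refine tendsto_iff_norm_sub_tendsto_zero.2 <|
    tendsto_zero_of_forall_eventually_le (fun _ => norm_nonneg _) hg fun η ⟨hη, _⟩ => ?_
  obtain ⟨K, ε, hK, hε, -, hbulk⟩ := hcapture (V - η) (sub_lt_self V hη)
  have hmart := hω.tendsto_integral_exp_stepSum_sub hκ hT hp hK t (bulkTimes_subset_range hε)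
    fun n j hj => (mem_bulkTimes.1 hj).2
  refine ⟨_, (((((tendsto_const_div_atTop_nhds_zero_nat (tailBound θ A F r M ω 0 ^ 2)).add
    (hV.sub_const (V - η))).sqrt).const_mul |t|).add hmart).add
    (((hV.sub_const V).abs.add_const η).const_mul (t ^ 2 / 2)), ?_⟩
  filter_upwards [hbulk] with n hn
  exact hω.norm_integral_exp_centeredSum_sub_exp_le hκ (bulkTimes_subset_range hε n) hV0 hη.le hn t

lemma tendsto_average_meanVar (hω : TameEnv θ P E f F A r M ω)
    (hκ : RegularChain θ P E A (r ^ 2) M ω κ) {s : ℝ}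
    (hs : Tendsto (fun n : ℕ => √(Var[orbitSum θ f ω n; κ] / n)) atTop (𝓝 s)) :
    Tendsto (fun n : ℕ => (∑ j ∈ Finset.range n, meanVar θ P E f ω κ n j) / n) atTop
      (𝓝 (s ^ 2)) := by
  have hcorrector : Tendsto (fun n : ℕ => Var[fun y => corrector θ P f n ω (y 0); κ] / n) atTop
      (𝓝 0) :=
    squeeze_zero (fun n => div_nonneg (variance_nonneg _ _) n.cast_nonneg)
      (fun n => div_le_div_of_nonneg_right (hω.variance_corrector_le (hκ.ae_mem_fibre 0) n)
        n.cast_nonneg)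
      (tendsto_const_div_atTop_nhds_zero_nat _)
  have hdecomp (n : ℕ) : Var[orbitSum θ f ω n; κ] = Var[fun y => corrector θ P f n ω (y 0); κ]
      + ∑ j ∈ Finset.range n, meanVar θ P E f ω κ n j := by
    have horth := hκ.integral_centeredSum_sub_stepSum_sq hω.dominated hω.measurableSet_fibre n
      (Finset.empty_subset _)
    simp only [stepSum, Finset.sum_empty, sub_zero, Finset.sdiff_empty] at horth
    rw [← horth, variance_eq_integral
      (hω.dominated.bddMeasurable_orbitSum ω n).measurable.aemeasurable]
    simp only [centeredSum]
  have hlim := (hs.pow 2).sub hcorrector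
  rw [sub_zero] at hlim
  refine hlim.congr fun n => ?_
  rw [Real.sq_sqrt (div_nonneg (variance_nonneg _ _) n.cast_nonneg), ← sub_div, hdecomp,
    add_sub_cancel_left]

end TameEnv

variable {θ : Ω ≃ᵐ Ω} {κ : Ω → Measure (ℕ → 𝒳)} [∀ ω, IsProbabilityMeasure (κ ω)] {μ : Measure Ω}
  [IsProbabilityMeasure μ]

theorem TameModel.ae_tendsto_stdNormalCDF (h : TameModel θ P E f F A r M κ μ) {s : ℝ} (hs : 0 < s)
    (hvar : ∀ᵐ ω ∂μ, Tendsto (fun n : ℕ => √(Var[orbitSum θ f ω n; κ ω] / n)) atTop (𝓝 s)) :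
    ∀ᵐ ω ∂μ, ∀ t : ℝ, Tendsto (fun n : ℕ =>
        ((κ ω) {y | (√n)⁻¹ * centeredSum θ f ω (κ ω) n y ≤ t * s}).toReal)
      atTop (𝓝 (stdNormalCDF t)) := by
  have hV : ∀ᵐ ω ∂μ, Tendsto (fun n : ℕ => (∑ j ∈ Finset.range n,
      meanVar θ P E f ω (κ ω) n j) / n) atTop (𝓝 (s ^ 2)) := by
    filter_upwards [h.tameChain, hvar] with ω hω hs
    exact hω.env.tendsto_average_meanVar (hω.chain 0) hs
  filter_upwards [h.tameChain, h.ae_typicalOrbit, hV, h.ae_forall_exists_bulkTimes hV]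
    with ω hω hT hVω hcapture t
  have hZ (n : ℕ) : Measurable fun y => (√n)⁻¹ * centeredSum θ f ω (κ ω) n y / s :=
    ((hω.env.dominated.bddMeasurable_centeredSum ω (κ ω) n).measurable.const_mul _).div_const s
  have hlim := tendsto_measure_le_stdNormalCDF (κ := κ ω) hZ (fun t => ?_) t
  · simpa only [div_le_iff₀ hs] using hlim
  · have hκ : RegularChain θ P E A (r ^ 2) M ω (κ ω) := hω.chain 0
    have hchar := hω.env.tendsto_integral_exp_centeredSum hκ hT h.measureReal_good_pos hVω
      hcapture (t / s)
    have harg : (t / s) ^ 2 * s ^ 2 = t ^ 2 := by rw [← mul_pow, div_mul_cancel₀ t hs.ne']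
    rw [harg] at hchar
    refine hchar.congr fun n => integral_congr_ae (.of_forall fun y => ?_)
    simp only
    congr 3
    ring

end CentralLimitTheorem

section Truncation

variable {Ω 𝒳 : Type*} {E : Ω → Set 𝒳} {f : Ω → 𝒳 → ℝ} {F : Ω → ℝ}

/-- The observable `f` set to zero off the fibres `E` and where it exceeds `F`. Along almost every
path of a chain in a typical environment it agrees with `f`. -/
def truncatedObservable (E : Ω → Set 𝒳) (f : Ω → 𝒳 → ℝ) (F : Ω → ℝ) (ω : Ω) : 𝒳 → ℝ :=
  {x | x ∈ E ω ∧ |f ω x| ≤ F ω}.indicator (f ω)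

variable [MeasurableSpace 𝒳]

lemma ae_orbitSum_truncatedObservable_eq {θ : Ω → Ω} {κ : Measure (ℕ → 𝒳)} {ω : Ω}
    (hκ : ∀ k, ∀ᵐ y ∂κ, y k ∈ E (θ^[k] ω))
    (hf : ∀ k, ∀ x ∈ E (θ^[k] ω), |f (θ^[k] ω) x| ≤ F (θ^[k] ω)) (n : ℕ) :
    orbitSum θ (truncatedObservable E f F) ω n =ᵐ[κ] orbitSum θ f ω n := by
  filter_upwards [ae_all_iff.2 hκ] with y hy
  refine Finset.sum_congr rfl fun j _ => Set.indicator_of_mem ?_ _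
  exact ⟨hy j, hf j _ (hy j)⟩

variable [MeasurableSpace Ω]

lemma measurable_truncatedObservable (hE : MeasurableSet {q : Ω × 𝒳 | q.2 ∈ E q.1})
    (hf : Measurable (Function.uncurry f)) (hF : Measurable F) :
    Measurable (Function.uncurry (truncatedObservable E f F)) :=
  hf.indicator (hE.inter (measurableSet_le hf.abs (hF.comp measurable_fst)))

lemma isDominated_truncatedObservable (hE : MeasurableSet {q : Ω × 𝒳 | q.2 ∈ E q.1})
    (hf : Measurable (Function.uncurry f)) (hF : Measurable F) (hF0 : ∀ ω, 0 ≤ F ω) :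
    IsDominated (truncatedObservable E f F) F where
  measurable _ := (measurable_truncatedObservable hE hf hF).comp measurable_prodMk_left
  abs_le ω x := by
    by_cases hx : x ∈ {x | x ∈ E ω ∧ |f ω x| ≤ F ω}
    · rw [truncatedObservable, Set.indicator_of_mem hx]
      exact hx.2
    · rw [truncatedObservable, Set.indicator_of_notMem hx, abs_zero]
      exact hF0 ω
  nonneg := hF0

end Truncation

section RandomDoeblin

variable {Ω 𝒳 : Type*} [MeasurableSpace Ω]

lemma ae_forall_iterate_symm_iterate {θ : Ω ≃ᵐ Ω} {μ : Measure Ω} (hθ : MeasurePreserving θ μ μ)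
    {p : Ω → Prop} (hp : ∀ᵐ ω ∂μ, p ω) : ∀ᵐ ω ∂μ, ∀ l k : ℕ, p (θ^[k] (θ.symm^[l] ω)) :=
  ae_all_iff.2 fun l => ae_all_iff.2 fun k =>
    ((hθ.symm θ).iterate l).quasiMeasurePreserving.ae
      ((hθ.iterate k).quasiMeasurePreserving.ae hp)

/-- The set `A_{δ,M}` of environments with minorization mass at least `δ` and waiting time at
most `M`. -/
def doeblinSet (N : Ω → ℕ) (γ : Ω → ℝ) (δ : ℝ) (M : ℕ) : Set Ω := {ω | δ ≤ γ ω ∧ N ω ≤ M}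

lemma measurableSet_doeblinSet {N : Ω → ℕ} (hN : Measurable N) {γ : Ω → ℝ} (hγ : Measurable γ)
    (δ : ℝ) (M : ℕ) : MeasurableSet (doeblinSet N γ δ M) :=
  (measurableSet_le measurable_const hγ).inter (measurableSet_le hN measurable_const)

lemma exists_measure_doeblinSet_ne_zero {μ : Measure Ω} [NeZero μ] (N : Ω → ℕ) {γ : Ω → ℝ}
    (hγ : ∀ᵐ ω ∂μ, 0 < γ ω) :
    ∃ (δ : ℝ) (M : ℕ), 0 < δ ∧ δ < 1 ∧ 0 < M ∧ μ (doeblinSet N γ δ M) ≠ 0 := by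
  by_contra! hnull
  have hcover : ∀ᵐ ω ∂μ, ∃ k : ℕ, ω ∈ doeblinSet N γ (1 / (k + 2)) (k + 1) := by
    filter_upwards [hγ] with ω hω
    obtain ⟨k, hk⟩ := exists_nat_one_div_lt hω
    refine ⟨max k (N ω), ?_, by omega⟩
    refine le_trans (one_div_le_one_div_of_le (by positivity) ?_) hk.le
    push_cast
    linarith [le_max_left (k : ℝ) (N ω)]
  have hempty : ∀ᵐ ω ∂μ, ∀ k : ℕ, ω ∉ doeblinSet N γ (1 / (k + 2)) (k + 1) :=
    ae_all_iff.2 fun k => measure_eq_zero_iff_ae_notMem.1 <|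
      hnull _ _ (by positivity) ((div_lt_one (by positivity)).2 (by linarith)) k.succ_pos
  obtain ⟨ω, ⟨k, hk⟩, hω⟩ := (hcover.and hempty).exists
  exact hω k hk

lemma exists_pos_lt_one_sq_pow_eq {c : ℝ} (hc0 : 0 < c) (hc1 : c < 1) {M : ℕ} (hM : 0 < M) :
    ∃ r : ℝ, 0 < r ∧ r < 1 ∧ (r ^ 2) ^ M = c := by
  have hM' : 2 * M ≠ 0 := by omega
  refine ⟨c ^ ((2 * M : ℕ) : ℝ)⁻¹, Real.rpow_pos_of_pos hc0 _,
    Real.rpow_lt_one hc0.le hc1 (by positivity), ?_⟩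
  rw [← pow_mul, Real.rpow_inv_natCast_pow hc0.le hM']

variable [MeasurableSpace 𝒳]

lemma smul_le_of_forall_subset {E : Set 𝒳} (hE : MeasurableSet E) {m ν : Measure 𝒳} {c : ℝ≥0∞}
    (hm : ∀ᵐ x ∂m, x ∈ E) (h : ∀ s, MeasurableSet s → s ⊆ E → c * m s ≤ ν s) : c • m ≤ ν :=
  Measure.le_iff.2 fun s hs => by
    rw [Measure.smul_apply, smul_eq_mul, ← measure_inter_conull hm]
    exact (h _ (hs.inter hE) Set.inter_subset_right).trans (measure_mono Set.inter_subset_left)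

section Minorization

variable {θ : Ω → Ω} {P : Ω → Kernel 𝒳 𝒳} [∀ ω, IsMarkovKernel (P ω)] {E : Ω → Set 𝒳} {ω : Ω}

lemma smul_le_envKernel_add (hE : ∀ ω, MeasurableSet (E ω))
    (hω : ∀ k, ∀ x ∈ E (θ^[k] ω), ∀ᵐ z ∂P (θ^[k] ω) x, z ∈ E (θ^[k + 1] ω)) {j n : ℕ}
    {c : ℝ≥0∞} {m : Measure 𝒳} (h : ∀ x ∈ E (θ^[j] ω), c • m ≤ envKernel θ P n (θ^[j] ω) x)
    {x : 𝒳} (hx : x ∈ E ω) : c • m ≤ envKernel θ P (j + n) ω x :=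
  Measure.le_iff.2 fun s hs => by
    rw [envKernel_add, Kernel.comp_apply' _ _ _ hs]
    calc (c • m) s = ∫⁻ _, (c • m) s ∂envKernel θ P j ω x := by
          rw [lintegral_const, measure_univ, mul_one]
      _ ≤ ∫⁻ z, envKernel θ P n (θ^[j] ω) z s ∂envKernel θ P j ω x :=
          lintegral_mono_ae <|
            (ae_envKernel_mem_fibre hE hω j hx).mono fun z hz => Measure.le_iff.1 (h z hz) s hs

end Minorization

/-- A Markov chain in a stationary ergodic random environment satisfying the random Doeblin
minorization: the chain started `N ω` steps in the past reaches the present with a transition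
probability that dominates `γ ω • m ω`. The fibres are `E ω` and `κ ω` is the law of the chain
started in the environment `ω`. -/
structure DoeblinModel (θ : Ω ≃ᵐ Ω) (P : Ω → Kernel 𝒳 𝒳) (E : Ω → Set 𝒳) (N : Ω → ℕ)
    (γ : Ω → ℝ) (m : Ω → Measure 𝒳) (κ : Ω → Measure (ℕ → 𝒳)) (μ : Measure Ω) : Prop where
  ergodic : Ergodic θ μ
  transition : Measurable fun q : Ω × 𝒳 => P q.1 q.2
  fibre : MeasurableSet {q : Ω × 𝒳 | q.2 ∈ E q.1}
  law : Measurable κ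
  time : Measurable N
  mass : Measurable γ
  mass_pos : ∀ᵐ ω ∂μ, 0 < γ ω
  isProbabilityMeasure_minorant : ∀ ω, IsProbabilityMeasure (m ω)
  minorant_le : ∀ᵐ ω ∂μ, ∀ x ∈ E (θ.symm^[N ω] ω),
    ENNReal.ofReal (γ ω) • m ω ≤ envKernel θ P (N ω) (θ.symm^[N ω] ω) x
  transition_mem_fibre : ∀ᵐ ω ∂μ, ∀ x ∈ E ω, ∀ᵐ z ∂P ω x, z ∈ E (θ ω)
  path_mem_fibre : ∀ᵐ ω ∂μ, ∀ k, ∀ᵐ y ∂κ ω, y k ∈ E (θ^[k] ω)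
  hasTransition : ∀ᵐ ω ∂μ, ∀ k, HasTransition (κ ω) k (P (θ^[k] ω))

namespace DoeblinModel

variable {θ : Ω ≃ᵐ Ω} {P : Ω → Kernel 𝒳 𝒳} {E : Ω → Set 𝒳} {N : Ω → ℕ} {γ : Ω → ℝ}
  {m : Ω → Measure 𝒳} {κ : Ω → Measure (ℕ → 𝒳)} {μ : Measure Ω} {f : Ω → 𝒳 → ℝ} {F : Ω → ℝ}
  {q δ : ℝ} {M : ℕ}

lemma measurableSet_fibre (h : DoeblinModel θ P E N γ m κ μ) (ω : Ω) : MeasurableSet (E ω) :=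
  measurable_prodMk_left h.fibre

variable [∀ ω, IsMarkovKernel (P ω)]

lemma ae_regularEnv (h : DoeblinModel θ P E N γ m κ μ) (hδ : 1 - q ^ M ≤ δ) :
    ∀ᵐ ω ∂μ, ∀ l : ℕ, RegularEnv θ P E (doeblinSet N γ δ M) q M (θ.symm^[l] ω) := by
  have hθ := h.ergodic.toMeasurePreserving
  filter_upwards [ae_forall_iterate_symm_iterate hθ h.transition_mem_fibre,
    ae_forall_iterate_symm_iterate hθ h.minorant_le] with ω hfibre hminor l
  have hstay (k : ℕ) (x : 𝒳) (hx : x ∈ E (θ^[k] (θ.symm^[l] ω))) :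
      ∀ᵐ z ∂P (θ^[k] (θ.symm^[l] ω)) x, z ∈ E (θ^[k + 1] (θ.symm^[l] ω)) := by
    rw [Function.iterate_succ_apply']
    exact hfibre l k x hx
  refine ⟨hstay, fun k hk => ⟨_, h.isProbabilityMeasure_minorant (θ^[k + M] (θ.symm^[l] ω)),
    fun x hx => ?_⟩⟩
  obtain ⟨hmass, htime⟩ := hk
  have hle := hminor l (k + M)
  set ω' := θ.symm^[l] ω
  set n := N (θ^[k + M] ω')
  have hpast : θ.symm^[n] (θ^[k + M] ω') = θ^[M - n] (θ^[k] ω') := by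
    rw [show k + M = n + (M - n + k) by omega, Function.iterate_add_apply,
      symm_iterate_iterate_apply, Function.iterate_add_apply]
  rw [hpast] at hle
  have hlaw := smul_le_envKernel_add h.measurableSet_fibre (fun i z hz => ?_) hle hx
  · rw [Nat.sub_add_cancel htime] at hlaw
    refine le_trans ?_ hlaw
    gcongr
    exact hδ.trans hmass
  · simp only [← Function.iterate_add_apply, add_right_comm i 1 k] at hz ⊢
    exact hstay (i + k) z hz

lemma ae_regularChain (h : DoeblinModel θ P E N γ m κ μ) (hδ : 1 - q ^ M ≤ δ) :
    ∀ᵐ ω ∂μ, ∀ l : ℕ, RegularChain θ P E (doeblinSet N γ δ M) q M (θ.symm^[l] ω)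
      (κ (θ.symm^[l] ω)) := by
  have hθ := h.ergodic.toMeasurePreserving
  filter_upwards [h.ae_regularEnv hδ, ae_forall_iterate_symm_iterate hθ h.path_mem_fibre,
    ae_forall_iterate_symm_iterate hθ h.hasTransition] with ω henv hpath htrans l
  exact ⟨henv l, hpath l 0, htrans l 0⟩

variable [IsProbabilityMeasure μ]

lemma exists_tameModel (h : DoeblinModel θ P E N γ m κ μ) (hf : Measurable (Function.uncurry f))
    (hfF : IsDominated f F) (hFm : Measurable F) (hF : Integrable F μ) :
    ∃ (A : Set Ω) (r : ℝ) (M : ℕ), TameModel θ P E f F A r M κ μ := by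
  obtain ⟨δ, M, hδ0, hδ1, hM, hA⟩ := exists_measure_doeblinSet_ne_zero N h.mass_pos
  obtain ⟨r, hr0, hr1, hr⟩ := exists_pos_lt_one_sq_pow_eq (sub_pos.2 hδ1) (sub_lt_self 1 hδ0) hM
  have hAm := measurableSet_doeblinSet h.time h.mass δ M
  refine ⟨doeblinSet N γ δ M, r, M,
    ⟨h.transition, h.fibre, hf, hFm, hAm, h.law⟩, h.ergodic, hF, hA, ?_⟩
  filter_upwards [h.ae_regularChain (q := r ^ 2) (by rw [hr, sub_sub_cancel]),
    ae_typicalOrbit h.ergodic hAm hfF.nonneg hF] with ω hchain horbit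
  have hsummable := horbit.summable (ENNReal.toReal_pos hA (measure_ne_top μ _)) hfF.nonneg hr0 hr1
  exact ⟨⟨hfF, h.measurableSet_fibre, hr0, hr1, hM, (hchain 0).env, hsummable⟩, hchain⟩

end DoeblinModel

end RandomDoeblin

theorem quenched_CLT_random_env_general {Ω 𝒳 : Type*} [MeasurableSpace Ω] [MeasurableSpace 𝒳]
    {μ : Measure Ω} [IsProbabilityMeasure μ] {θ : Ω ≃ᵐ Ω} {P : Ω → Kernel 𝒳 𝒳}
    [∀ ω, IsMarkovKernel (P ω)] {E : Ω → Set 𝒳} {N : Ω → ℕ} {γ : Ω → ℝ} {m : Ω → Measure 𝒳}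
    {κ : Ω → Measure (ℕ → 𝒳)} [∀ ω, IsProbabilityMeasure (κ ω)]
    (h : DoeblinModel θ P E N γ m κ μ) {f : Ω → 𝒳 → ℝ} (hf : Measurable (Function.uncurry f))
    {F : Ω → ℝ} (hF : Integrable F μ) (hfF : ∀ᵐ ω ∂μ, ∀ x ∈ E ω, |f ω x| ≤ F ω) {s : ℝ}
    (hs : 0 < s)
    (hvar : ∀ᵐ ω ∂μ, Tendsto (fun n : ℕ => √(Var[orbitSum θ f ω n; κ ω] / n)) atTop (𝓝 s)) :
    ∀ᵐ ω ∂μ, ∀ t : ℝ, Tendsto (fun n : ℕ =>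
        (κ ω {y | (√n)⁻¹ * centeredSum θ f ω (κ ω) n y ≤ t * s}).toReal)
      atTop (𝓝 (stdNormalCDF t)) := by
  obtain ⟨F₁, hF₁, hFF₁⟩ := hF.aestronglyMeasurable.aemeasurable
  set f' := truncatedObservable E f fun ω => |F₁ ω|
  obtain ⟨A, r, M, hmodel⟩ := h.exists_tameModel (f := f')
    (measurable_truncatedObservable h.fibre hf hF₁.abs)
    (isDominated_truncatedObservable h.fibre hf hF₁.abs fun _ => abs_nonneg _) hF₁.abs
    (hF.congr hFF₁).abs
  have hbound : ∀ᵐ ω ∂μ, ∀ x ∈ E ω, |f ω x| ≤ |F₁ ω| := by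
    filter_upwards [hfF, hFF₁] with ω hω hF x hx
    exact (hω x hx).trans (hF ▸ le_abs_self _)
  have hsum : ∀ᵐ ω ∂μ, ∀ n, orbitSum θ f' ω n =ᵐ[κ ω] orbitSum θ f ω n := by
    filter_upwards [ae_forall_iterate_symm_iterate h.ergodic.toMeasurePreserving hbound,
      h.path_mem_fibre] with ω hω hpath n
    exact ae_orbitSum_truncatedObservable_eq (F := fun ω => |F₁ ω|) hpath (hω 0) n
  have hclt := hmodel.ae_tendsto_stdNormalCDF hs <| by
    filter_upwards [hsum, hvar] with ω hω hlim
    simpa only [variance_congr (hω _)] using hlim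
  filter_upwards [hsum, hclt] with ω hω hlim t
  refine (hlim t).congr fun n => congrArg ENNReal.toReal (measure_congr ?_)
  filter_upwards [hω n] with y hy
  change (_ * centeredSum θ f' ω (κ ω) n y ≤ _) = (_ * centeredSum θ f ω (κ ω) n y ≤ _)
  simp only [centeredSum, hy, integral_congr_ae (hω n)]

lemma measurable_shift : Measurable (shift (𝒴 := 𝒴)) :=
  measurable_pi_lambda _ fun _ => measurable_pi_apply _

lemma measurable_shiftInv : Measurable (shiftInv (𝒴 := 𝒴)) :=
  measurable_pi_lambda _ fun _ => measurable_pi_apply _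

/-- The left shift as an automorphism of the two-sided sequence space. -/
def shiftEquiv (𝒴 : Type*) [MeasurableSpace 𝒴] : (ℤ → 𝒴) ≃ᵐ (ℤ → 𝒴) where
  toFun := shift
  invFun := shiftInv
  left_inv ω := by funext i; simp [shift, shiftInv]
  right_inv ω := by funext i; simp [shift, shiftInv]
  measurable_toFun := measurable_shift
  measurable_invFun := measurable_shiftInv

/-- **Theorem (quenched CLT for Markov chains in random environment).**
Under Assumption (A) with `a > 5` and Assumption (B) with `p > 2`, if `Σ > 0` then for
`Pr`-a.e. `ω` and all `t ∈ ℝ`,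
`κ_ω{ n^{−1/2} S̄_n^ω f ≤ t Σ } → Φ(t) = (2π)^{−1/2} ∫_{−∞}^t e^{−x²/2} dx`. -/
theorem quenched_CLT_random_env
    {𝒴 𝒳 : Type*} [MeasurableSpace 𝒴] [MeasurableSpace 𝒳]
    (Pr : Measure (ℤ → 𝒴)) [IsProbabilityMeasure Pr]
    (hshift : MeasurePreserving (shift (𝒴 := 𝒴)) Pr Pr)
    (hmixθ : StrongMixing Pr (shift (𝒴 := 𝒴)))
    (Xs : (ℤ → 𝒴) → Set 𝒳) (hXs : MeasurableSet {q : (ℤ → 𝒴) × 𝒳 | q.2 ∈ Xs q.1})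
    (P : (ℤ → 𝒴) → Kernel 𝒳 𝒳) (hPMarkov : ∀ ω, IsMarkovKernel (P ω))
    (hPmeas : ∀ Γ : Set 𝒳, MeasurableSet Γ → Measurable fun q : (ℤ → 𝒴) × 𝒳 => P q.1 q.2 Γ)
    (hPfib : ∀ᵐ ω ∂Pr, ∀ x ∈ Xs ω, P ω x (Xs (shift ω)) = 1)
    (nrv : (ℤ → 𝒴) → ℕ) (hnrv : Measurable nrv)
    (grv : (ℤ → 𝒴) → ℝ) (hgrv : Measurable grv) (hgrv01 : ∀ ω, grv ω ∈ Set.Ioo (0 : ℝ) 1)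
    (mrv : (ℤ → 𝒴) → Measure 𝒳) (hmrv : ∀ ω, IsProbabilityMeasure (mrv ω))
    (hmrv_meas : ∀ Γ : Set 𝒳, MeasurableSet Γ → Measurable fun ω => mrv ω Γ)
    (hmrv_supp : ∀ᵐ ω ∂Pr, mrv ω (Xs ω) = 1)
    (hDoeb : ∀ᵐ ω ∂Pr, ∀ x ∈ Xs (shiftInv^[nrv ω] ω), ∀ Γ : Set 𝒳, MeasurableSet Γ →
      Γ ⊆ Xs ω →
      ENNReal.ofReal (grv ω) * mrv ω Γ
        ≤ envKernel shift P (nrv ω) (shiftInv^[nrv ω] ω) x Γ)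
    -- Assumption (A)
    (δ : ℝ) (hδ : 0 < δ) (M : ℕ) (hM : 1 ≤ M)
    (hA : 0 < Pr {ω | δ ≤ grv ω ∧ nrv ω ≤ M})
    (b : ℕ → ℝ) (Ar Br : ℕ → Set (ℤ → 𝒴))
    (hAr : ∀ r : ℕ, MeasurableSet[cylSigma 𝒴 (Set.Icc (-(r : ℤ)) r)] (Ar r))
    (hBr_meas : ∀ r, MeasurableSet (Br r))
    (hBr : ∀ r, Pr (Br r) ≤ ENNReal.ofReal (b r))
    (hsub : ∀ r, Ar r ⊆ {ω | δ ≤ grv ω ∧ nrv ω ≤ M} ∪ Br r)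
    (p₀ : ℝ) (hp₀pos : 0 < p₀)
    (hp₀ : Tendsto (fun r => (Pr (Ar r)).toReal) atTop (nhds p₀))
    (hmixcond : (∃ c, ∀ r : ℕ, 1 ≤ r → alphaMix Pr r ≤ c * r * b r) ∨
      (1 + atTop.limsup (psiUMix Pr)) * ENNReal.ofReal (1 - p₀ * (1 - δ)) < 1)
    -- the Markov chain `(X_{ω,k})` in the random environment and its law `κ_ω`
    (κw : (ℤ → 𝒴) → Measure (ℕ → 𝒳)) (hκprob : ∀ ω, IsProbabilityMeasure (κw ω))
    (hκmeas : ∀ s : Set (ℕ → 𝒳), MeasurableSet s → Measurable fun ω => κw ω s)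
    (hκsupp : ∀ᵐ ω ∂Pr, ∀ k : ℕ, ∀ᵐ y ∂(κw ω), y k ∈ Xs (shift^[k] ω))
    (hκMarkov : ∀ᵐ ω ∂Pr, ∀ (k : ℕ) (Γ : Set 𝒳), MeasurableSet Γ →
      ((κw ω)[(fun y => Γ.indicator (fun _ => (1 : ℝ)) (y (k + 1))) | pathSigma 𝒳 k])
        =ᵐ[κw ω] fun y => (P (shift^[k] ω) (y k) Γ).toReal)
    -- the observable `f` and Assumption (B)
    (f : (ℤ → 𝒴) → 𝒳 → ℝ) (hf : Measurable (Function.uncurry f))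
    (p : ℝ) (hp : 2 < p)
    (F : (ℤ → 𝒴) → ℝ) (hFb : ∀ ω, ∀ x ∈ Xs ω, |f ω x| ≤ F ω)
    (hFLp : MemLp F (ENNReal.ofReal p) Pr)
    (hdecay : (∃ a : ℝ, 5 < a ∧ ∃ c, ∀ r : ℕ, 1 ≤ r → b r ≤ c * (r : ℝ) ^ (-a)) ∨
      (∃ a η : ℝ, 0 < a ∧ 0 < η ∧
        ∃ c, ∀ r : ℕ, 1 ≤ r → b r ≤ c * Real.exp (-a * (r : ℝ) ^ η)))
    (Sig : ℝ) (hSigpos : 0 < Sig)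
    (hSig : ∀ᵐ ω ∂Pr,
      Tendsto (fun n : ℕ => Real.sqrt (variance (pathSum f ω n) (κw ω) / n))
        atTop (nhds Sig)) :
    ∀ᵐ ω ∂Pr, ∀ t : ℝ,
      Tendsto (fun n : ℕ =>
          (κw ω {y | (n : ℝ) ^ (-(1 / 2 : ℝ)) *
              (pathSum f ω n y - ∫ y', pathSum f ω n y' ∂(κw ω)) ≤ t * Sig}).toReal)
        atTop (nhds (stdNormalCDF t)) := by
  have hmodel : DoeblinModel (shiftEquiv 𝒴) P Xs nrv grv mrv κw Pr :=
    { ergodic := hmixθ.ergodic hshift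
      transition := Measure.measurable_of_measurable_coe _ hPmeas
      fibre := hXs
      law := Measure.measurable_of_measurable_coe _ hκmeas
      time := hnrv
      mass := hgrv
      mass_pos := .of_forall fun ω => (hgrv01 ω).1
      isProbabilityMeasure_minorant := hmrv
      minorant_le := by
        filter_upwards [hmrv_supp, hDoeb] with ω hsupp hω x hx
        exact smul_le_of_forall_subset (measurable_prodMk_left hXs)
          ((mem_ae_iff_prob_eq_one (measurable_prodMk_left hXs)).2 hsupp) (hω x hx)
      transition_mem_fibre := by
        filter_upwards [hPfib] with ω hω x hx
        exact (mem_ae_iff_prob_eq_one (measurable_prodMk_left hXs)).2 (hω x hx)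
      path_mem_fibre := hκsupp
      hasTransition := hκMarkov }
  have hF : Integrable F Pr := hFLp.integrable (ENNReal.one_le_ofReal.2 (by linarith))
  simp only [Real.rpow_neg (Nat.cast_nonneg _), ← Real.sqrt_eq_rpow]
  exact quenched_CLT_random_env_general hmodel hf hF (.of_forall hFb) hSigpos hSig

end
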